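/- arXiv:2007.12742 — 3 statements merged into one kernel-verified Lean document; each statement's English description precedes it below -/
import Mathlib

section
/- Let m, d ∈ ℕ with d ≥ m, and let X = (X₁,…,Xₙ) be a standard Gaussian random vector in ℝⁿ. There exists a constant C(m,d) > 0 depending only on m and d such that for every non-constant polynomial f(x) = Σ_{j₁=0}^{m} … Σ_{jₙ=0}^{m} a_{j₁,…,jₙ} x₁^{j₁}⋯xₙ^{jₙ} (each variable appearing to a power at most m) of total degree d[f] ≤ d, one has |𝔼 exp{i t f(X)}| ≤ C(m,d) |a[f] · t|^{−1/m} [ |ln|a[f]·t||^{d−m} + 1 ] for all t ≠ 0, where a[f] := max_{j₁+…+jₙ = d[f]} |a_{j₁,…,jₙ}|. -/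
/-!
Let `A = |a[f] t|`. If `A ≤ 1` the right-hand side is at least a constant, so let `A ≥ 1`, replace
`f` by `t f`, and write `decay v = min 1 (v ^ (-1/m))`.

*One variable.* Let `p` be a real polynomial of degree `N ≤ m` and `c` the modulus of one of its
nonconstant coefficients. Bounding coefficients by the Mahler measure, `|p x|` is at least `c / 2^N`
times the product over the complex roots `z` of the relative distances `|x - z| / max 1 |z|`, hence
at least `c / 2^N` times the `N`-th power of the smallest of them. The law charges each set where
such a distance is at most `δ` with mass `O(δ)`, uniformly in `z`: this is where a density decaying
like `1 / |x|` is needed. So the mean of `decay |p|` is `O(decay c)` if `N < m`, and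
`O((1 + log A) (decay c + A ^ (-1/m)))` if `N = m`. As the density has bounded variation,
integrating by parts against `p' / (p'² + η²)`, whose total variation is `O(N / η)`, shows that
`∫ exp (i p)` is `O(decay c)` in both cases.

*Several variables.* Follow a monomial of top degree realising `a[f]`. Variables absent from it are
frozen, which leaves its coefficient unchanged because its degree is maximal. The first variable
present, with exponent `r`, is integrated out by the one-variable bound, applied to the coefficient
of the `r`-th power of that variable, a polynomial of degree at most `deg f - r` with the same top
coefficient. Oscillation is used in the first such step only; afterwards means of `decay` are
estimated, and a logarithm is lost only when the degree is at least `m`. As the first step lowers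
the degree to at most `d - 1`, at most `d - m` logarithms are lost.
-/

open MeasureTheory ProbabilityTheory

/-- The standard Gaussian measure on `ℝⁿ` (i.i.d. `N(0,1)` coordinates). -/
noncomputable def stdGaussian (n : ℕ) : Measure (Fin n → ℝ) :=
  Measure.pi fun _ => gaussianReal 0 1

/-- `a[f]`: the maximum of the absolute values of the coefficients of the monomials of
top total degree of `f`. -/
noncomputable def topCoeff {n : ℕ} (f : MvPolynomial (Fin n) ℝ) : ℝ :=
  sSup {c : ℝ | ∃ j : Fin n →₀ ℕ, (j.sum fun _ e => e) = f.totalDegree ∧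
    c = |MvPolynomial.coeff j f|}

open Polynomial

/-! ### Relative distance to the roots of a polynomial -/

/-- The distance from the real point `x` to the complex point `z`, relative to the size of `z`;
the size is cut off at `1`, as in the Mahler measure. -/
noncomputable def relDist (z : ℂ) (x : ℝ) : ℝ := ‖(x : ℂ) - z‖ / max 1 ‖z‖

lemma relDist_nonneg (z : ℂ) (x : ℝ) : 0 ≤ relDist z x := by unfold relDist; positivity

lemma measurable_relDist (z : ℂ) : Measurable (relDist z) := by
  unfold relDist
  fun_prop

lemma relDist_mul_max_one_norm (z : ℂ) (x : ℝ) : relDist z x * max 1 ‖z‖ = ‖(x : ℂ) - z‖ :=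
  div_mul_cancel₀ _ (by positivity)

lemma norm_eval_eq_norm_leadingCoeff_mul_prod_roots (P : ℂ[X]) (x : ℂ) :
    ‖P.eval x‖ = ‖P.leadingCoeff‖ * (P.roots.map fun z => ‖x - z‖).prod := by
  rw [(IsAlgClosed.splits P).eval_eq_prod_roots x, norm_mul]
  congr 1
  simpa [Multiset.map_map, Function.comp_def] using
    map_multiset_prod (normHom (α := ℂ)) (P.roots.map fun z => x - z)

lemma norm_coeff_le_two_pow_mul_mahlerMeasure (P : ℂ[X]) (r : ℕ) :
    ‖P.coeff r‖ ≤ 2 ^ P.natDegree * P.mahlerMeasure := by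
  refine (P.norm_coeff_le_choose_mul_mahlerMeasure r).trans ?_
  gcongr
  · exact P.mahlerMeasure_nonneg
  · exact_mod_cast Nat.choose_le_two_pow _ _

lemma norm_coeff_mul_prod_relDist_le (P : ℂ[X]) (r : ℕ) (x : ℝ) :
    ‖P.coeff r‖ * (P.roots.map fun z => relDist z x).prod ≤ 2 ^ P.natDegree * ‖P.eval (x : ℂ)‖ := by
  have hprod : 0 ≤ (P.roots.map fun z => relDist z x).prod :=
    Multiset.prod_nonneg fun a ha => by
      obtain ⟨z, -, rfl⟩ := Multiset.mem_map.mp ha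
      exact relDist_nonneg z x
  calc ‖P.coeff r‖ * (P.roots.map fun z => relDist z x).prod
      ≤ 2 ^ P.natDegree * P.mahlerMeasure * (P.roots.map fun z => relDist z x).prod := by
        gcongr
        exact norm_coeff_le_two_pow_mul_mahlerMeasure P r
    _ = 2 ^ P.natDegree * (‖P.leadingCoeff‖ *
          (P.roots.map fun z => relDist z x * max 1 ‖z‖).prod) := by
        rw [Polynomial.mahlerMeasure_eq_leadingCoeff_mul_prod_roots, Multiset.prod_map_mul]
        ring
    _ = 2 ^ P.natDegree * ‖P.eval (x : ℂ)‖ := by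
        simp only [relDist_mul_max_one_norm, norm_eval_eq_norm_leadingCoeff_mul_prod_roots]

lemma exists_mem_roots_norm_coeff_mul_relDist_pow_le {P : ℂ[X]} (hP : P.natDegree ≠ 0) (r : ℕ)
    (x : ℝ) : ∃ z ∈ P.roots,
      ‖P.coeff r‖ / 2 ^ P.natDegree * relDist z x ^ P.natDegree ≤ ‖P.eval (x : ℂ)‖ := by
  have hcard : P.roots.card = P.natDegree := (IsAlgClosed.splits P).natDegree_eq_card_roots.symm
  have hne : P.roots.toFinset.Nonempty := by
    rwa [Multiset.toFinset_nonempty, ← Multiset.card_pos, hcard, Nat.pos_iff_ne_zero]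
  obtain ⟨z, hz, hmin⟩ := P.roots.toFinset.exists_min_image (fun z => relDist z x) hne
  refine ⟨z, Multiset.mem_toFinset.mp hz, ?_⟩
  have hpow : relDist z x ^ P.natDegree ≤ (P.roots.map fun w => relDist w x).prod := by
    have h := Multiset.prod_map_le_prod_map₀ (s := P.roots) (fun _ => relDist z x)
      (fun w => relDist w x) (fun _ _ => relDist_nonneg z x)
      (fun w hw => hmin w (Multiset.mem_toFinset.mpr hw))
    rwa [Multiset.map_const', Multiset.prod_replicate, hcard] at h
  rw [div_mul_eq_mul_div, div_le_iff₀' (by positivity)]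
  exact (mul_le_mul_of_nonneg_left hpow (norm_nonneg _)).trans
    (norm_coeff_mul_prod_relDist_le P r x)

/-! ### Decreasing functions of a random polynomial -/

/-- A law on `ℝ` has small ball constant `K` if balls of relative radius `δ`, about all points of
the complex plane, have mass at most `K * δ`. -/
structure HasSmallBallBound (μ : Measure ℝ) (K : ℝ) : Prop where
  one_le : 1 ≤ K
  measure_le : ∀ (z : ℂ) (δ : ℝ), μ {x | relDist z x ≤ δ} ≤ ENNReal.ofReal (K * δ)

lemma lintegral_ofReal_comp_le_of_measure_le {α : Type*} [MeasurableSpace α] {μ : Measure α}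
    [IsProbabilityMeasure μ] {u : α → ℝ} (hu : Measurable u) {K : ℝ} (hK : 1 ≤ K)
    (hball : ∀ δ, μ {x | u x ≤ δ} ≤ ENNReal.ofReal (K * δ)) {F : ℝ → ℝ}
    (hF : AntitoneOn F (Set.Ioi 0)) (hF0 : ∀ v, 0 ≤ F v) (hFm : Measurable F) :
    ∫⁻ x, ENNReal.ofReal (F (u x)) ∂μ ≤
      ENNReal.ofReal K * ∫⁻ v in Set.Ioc 0 1, ENNReal.ofReal (F v) := by
  rw [lintegral_eq_lintegral_meas_lt μ (ae_of_all _ fun x => hF0 (u x))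
      (hFm.comp hu).aemeasurable,
    lintegral_eq_lintegral_meas_lt _ (ae_of_all _ hF0) hFm.aemeasurable,
    ← lintegral_const_mul' _ _ ENNReal.ofReal_ne_top]
  refine lintegral_mono fun t => ?_
  dsimp only
  rw [Measure.restrict_apply (measurableSet_lt measurable_const hFm), Set.inter_comm]
  set S := Set.Ioc (0 : ℝ) 1 ∩ {v | t < F v}
  have hS : volume S ≠ ⊤ := measure_ne_top_of_subset Set.inter_subset_left (by simp)
  -- Superlevel sets of `F` are initial intervals.
  have hsub : {x | t < F (u x)} ⊆ {x | min (u x) 1 ≤ (volume S).toReal} := by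
    intro x hx
    have hIoc : Set.Ioc 0 (min (u x) 1) ⊆ S := fun v hv =>
      ⟨⟨hv.1, hv.2.trans (min_le_right _ _)⟩,
        lt_of_lt_of_le hx (hF hv.1 (hv.1.trans_le (hv.2.trans (min_le_left _ _)))
          (hv.2.trans (min_le_left _ _)))⟩
    have hvol := measure_mono (μ := volume) hIoc
    rw [Real.volume_Ioc, sub_zero] at hvol
    exact (ENNReal.ofReal_le_iff_le_toReal hS).mp hvol
  refine (measure_mono hsub).trans ?_
  rw [← ENNReal.ofReal_toReal hS, ← ENNReal.ofReal_mul (by linarith)]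
  obtain hS1 | hS1 := le_or_gt 1 (volume S).toReal
  · exact prob_le_one.trans (ENNReal.one_le_ofReal.mpr (one_le_mul_of_one_le_of_one_le hK hS1))
  · simpa [min_le_iff, hS1.not_ge] using hball (volume S).toReal

lemma lintegral_ofReal_comp_norm_eval_le {μ : Measure ℝ} [IsProbabilityMeasure μ] {K : ℝ}
    (hμ : HasSmallBallBound μ K) {F : ℝ → ℝ} (hF : AntitoneOn F (Set.Ici 0)) (hF0 : ∀ v, 0 ≤ F v)
    (hFm : Measurable F) {P : ℂ[X]} (hP : P.natDegree ≠ 0) (r : ℕ) :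
    ∫⁻ x, ENNReal.ofReal (F ‖P.eval (x : ℂ)‖) ∂μ ≤
      P.natDegree * (ENNReal.ofReal K * ∫⁻ v in Set.Ioc 0 1,
        ENNReal.ofReal (F (‖P.coeff r‖ / 2 ^ P.natDegree * v ^ P.natDegree))) := by
  set G : ℝ → ℝ := fun v => F (‖P.coeff r‖ / 2 ^ P.natDegree * v ^ P.natDegree)
  have hGm : Measurable G := by fun_prop
  have hG : AntitoneOn G (Set.Ioi 0) := fun v hv w hw hvw => by
    have hv : 0 < v := hv
    have hw : 0 < w := hw
    exact hF (Set.mem_Ici.mpr (by positivity)) (Set.mem_Ici.mpr (by positivity)) (by gcongr)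
  calc ∫⁻ x, ENNReal.ofReal (F ‖P.eval (x : ℂ)‖) ∂μ
      ≤ ∫⁻ x, ∑ z ∈ P.roots.toFinset, ENNReal.ofReal (G (relDist z x)) ∂μ := by
        refine lintegral_mono fun x => ?_
        obtain ⟨z, hz, hle⟩ := exists_mem_roots_norm_coeff_mul_relDist_pow_le hP r x
        refine le_trans (ENNReal.ofReal_le_ofReal (hF ?_ (norm_nonneg _) hle))
          (Finset.single_le_sum (f := fun z => ENNReal.ofReal (G (relDist z x)))
            (fun _ _ => zero_le) (Multiset.mem_toFinset.mpr hz))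
        have := relDist_nonneg z x
        exact Set.mem_Ici.mpr (by positivity)
    _ = ∑ z ∈ P.roots.toFinset, ∫⁻ x, ENNReal.ofReal (G (relDist z x)) ∂μ :=
        lintegral_finsetSum _ fun z _ => (hGm.comp (measurable_relDist z)).ennreal_ofReal
    _ ≤ ∑ _ ∈ P.roots.toFinset, ENNReal.ofReal K * ∫⁻ v in Set.Ioc 0 1, ENNReal.ofReal (G v) :=
        Finset.sum_le_sum fun z _ => lintegral_ofReal_comp_le_of_measure_le (measurable_relDist z)
          hμ.one_le (hμ.measure_le z) hG (fun v => hF0 _) hGm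
    _ ≤ P.natDegree * (ENNReal.ofReal K * ∫⁻ v in Set.Ioc 0 1, ENNReal.ofReal (G v)) := by
        rw [Finset.sum_const, nsmul_eq_mul]
        gcongr
        exact (Multiset.toFinset_card_le _).trans P.card_roots'

lemma integral_comp_abs_eval_le {μ : Measure ℝ} [IsProbabilityMeasure μ] {K : ℝ}
    (hμ : HasSmallBallBound μ K) {F : ℝ → ℝ} (hF : AntitoneOn F (Set.Ici 0)) (hF0 : ∀ v, 0 ≤ F v)
    (hFm : Measurable F) {p : ℝ[X]} (hp : p.natDegree ≠ 0) (r : ℕ) :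
    ∫ x, F |p.eval x| ∂μ ≤
      K * p.natDegree * ∫ v in 0..1, F (|p.coeff r| / 2 ^ p.natDegree * v ^ p.natDegree) := by
  have hdeg : (p.map (algebraMap ℝ ℂ)).natDegree = p.natDegree := Polynomial.natDegree_map _
  have h := lintegral_ofReal_comp_norm_eval_le hμ hF hF0 hFm (hdeg.symm ▸ hp) r
  simp only [hdeg, Polynomial.coeff_map, ← Complex.coe_algebraMap, Polynomial.eval_map_apply,
    norm_algebraMap', Real.norm_eq_abs] at h
  set G : ℝ → ℝ := fun v => F (|p.coeff r| / 2 ^ p.natDegree * v ^ p.natDegree)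
  have hG : IntegrableOn G (Set.Ioc 0 1) := by
    refine Measure.integrableOn_of_bounded (M := F 0) (by simp) (by fun_prop) ?_
    refine (ae_restrict_iff' measurableSet_Ioc).mpr (ae_of_all _ fun v hv => ?_)
    have := hv.1.le
    rw [Real.norm_of_nonneg (hF0 _)]
    have hv' : 0 ≤ |p.coeff r| / 2 ^ p.natDegree * v ^ p.natDegree := by positivity
    exact hF Set.self_mem_Ici hv' hv'
  rw [← ofReal_integral_eq_lintegral_ofReal hG (ae_of_all _ fun v => hF0 _),
    ← ENNReal.ofReal_natCast, ← ENNReal.ofReal_mul (by linarith [hμ.one_le]),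
    ← ENNReal.ofReal_mul (by positivity)] at h
  rw [intervalIntegral.integral_of_le zero_le_one,
    integral_eq_lintegral_of_nonneg_ae (ae_of_all _ fun x => hF0 _)
      (hFm.comp (by fun_prop)).aestronglyMeasurable]
  refine ENNReal.toReal_le_of_le_ofReal ?_ (h.trans_eq (by congr 1; ring))
  have := hμ.one_le
  have : 0 ≤ ∫ v in Set.Ioc 0 1, G v := integral_nonneg fun v => hF0 _
  positivity

/-! ### Mean decay of a random polynomial -/

/-- The decay profile `min 1 (v ^ (-β))`, written so that its value is `1` for all `v ≤ 1`,
including `v = 0`. -/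
noncomputable def decay (β v : ℝ) : ℝ := max 1 v ^ (-β)

section Decay

variable {β : ℝ}

lemma decay_nonneg (β v : ℝ) : 0 ≤ decay β v := by unfold decay; positivity

lemma decay_le_one (hβ : 0 ≤ β) (v : ℝ) : decay β v ≤ 1 :=
  Real.rpow_le_one_of_one_le_of_nonpos (le_max_left _ _) (neg_nonpos.mpr hβ)

lemma antitone_decay (hβ : 0 ≤ β) : Antitone (decay β) := fun _ _ h =>
  Real.rpow_le_rpow_of_nonpos (by positivity) (max_le_max le_rfl h) (neg_nonpos.mpr hβ)

lemma continuous_decay (β : ℝ) : Continuous (decay β) :=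
  Continuous.rpow_const (by fun_prop) fun _ => Or.inl (by positivity)

lemma decay_of_le_one {v : ℝ} (hv : v ≤ 1) : decay β v = 1 := by
  rw [decay, max_eq_left hv, Real.one_rpow]

lemma decay_of_one_le {v : ℝ} (hv : 1 ≤ v) : decay β v = v ^ (-β) := by
  rw [decay, max_eq_right hv]

lemma decay_mul_le (hβ : 0 ≤ β) {s : ℝ} (hs : 0 < s) (hs1 : s ≤ 1) (v : ℝ) :
    decay β (v * s) ≤ s ^ (-β) * decay β v := by
  have hmax : s * max 1 v ≤ max 1 (v * s) := by
    rw [mul_max_of_nonneg _ _ hs.le, mul_one, mul_comm s v]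
    exact max_le_max hs1 le_rfl
  rw [decay, decay, ← Real.mul_rpow hs.le (by positivity)]
  exact Real.rpow_le_rpow_of_nonpos (by positivity) hmax (neg_nonpos.mpr hβ)

lemma decay_div_two_pow_mul_pow_le {N : ℕ} (hβ : 0 ≤ β) (hβN : β * N ≤ 1) (c : ℝ) {v : ℝ}
    (hv : 0 < v) (hv1 : v ≤ 1) :
    decay β (c / 2 ^ N * v ^ N) ≤ 2 * decay β c * v ^ (-(β * N)) := by
  have hpow : ((v / 2) ^ N) ^ (-β) = 2 ^ (β * N) * v ^ (-(β * N)) := by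
    rw [← Real.rpow_natCast, ← Real.rpow_mul (by positivity), mul_neg, mul_comm (N : ℝ),
      Real.div_rpow hv.le zero_le_two, Real.rpow_neg zero_le_two, div_inv_eq_mul, mul_comm]
  have htwo : (2 : ℝ) ^ (β * N) ≤ 2 := by
    simpa using Real.rpow_le_rpow_of_exponent_le one_le_two hβN
  calc decay β (c / 2 ^ N * v ^ N) = decay β (c * (v / 2) ^ N) := by rw [div_pow]; ring_nf
    _ ≤ ((v / 2) ^ N) ^ (-β) * decay β c :=
        decay_mul_le hβ (by positivity) (pow_le_one₀ (by positivity) (by linarith)) c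
    _ = 2 ^ (β * N) * decay β c * v ^ (-(β * N)) := by rw [hpow]; ring
    _ ≤ 2 * decay β c * v ^ (-(β * N)) := by
        have := decay_nonneg β c
        gcongr

lemma decay_div_two_pow_mul_pow_le_inv_max {N : ℕ} (hβ : 0 ≤ β) (hβN : β * N ≤ 1) (c : ℝ)
    {B v : ℝ} (hB : 0 < B) (hv : 0 < v) (hv1 : v ≤ 1) :
    decay β (c / 2 ^ N * v ^ N) ≤ 2 * (decay β c + B) * (max B v)⁻¹ := by
  have hc := decay_nonneg β c
  rw [← div_eq_mul_inv, le_div_iff₀ (by positivity), mul_max_of_nonneg _ _ (decay_nonneg _ _)]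
  refine max_le ?_ ?_
  · linarith [mul_le_of_le_one_left hB.le (decay_le_one hβ (c / 2 ^ N * v ^ N))]
  · have hrpow : v ^ (-(β * N)) ≤ v⁻¹ := by
      rw [← Real.rpow_neg_one]
      exact Real.rpow_le_rpow_of_exponent_ge hv hv1 (by linarith)
    rw [← le_div_iff₀ hv, div_eq_mul_inv]
    exact (decay_div_two_pow_mul_pow_le hβ hβN c hv hv1).trans
      (mul_le_mul (by linarith) hrpow (by positivity) (by positivity))

lemma integrable_decay_comp {α : Type*} [MeasurableSpace α] {μ : Measure α} [IsFiniteMeasure μ]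
    (hβ : 0 ≤ β) {g : α → ℝ} (hg : AEMeasurable g μ) : Integrable (fun x => decay β (g x)) μ :=
  Integrable.of_bound ((continuous_decay β).comp_aestronglyMeasurable hg.aestronglyMeasurable) 1
    (ae_of_all _ fun x => by
      rw [Real.norm_of_nonneg (decay_nonneg β _)]
      exact decay_le_one hβ _)

lemma integral_decay_comp_le_one {α : Type*} [MeasurableSpace α] (μ : Measure α)
    [IsProbabilityMeasure μ] (hβ : 0 ≤ β) (g : α → ℝ) : ∫ x, decay β (g x) ∂μ ≤ 1 := by
  simpa using integral_mono_of_nonneg (ae_of_all μ fun x => decay_nonneg β (g x))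
    (integrable_const 1) (ae_of_all μ fun x => decay_le_one hβ (g x))

end Decay

lemma integral_inv_max {B : ℝ} (hB : 0 < B) (hB1 : B ≤ 1) :
    ∫ v in 0..1, (max B v)⁻¹ = 1 + Real.log B⁻¹ := by
  have hcont : Continuous fun v : ℝ => (max B v)⁻¹ :=
    Continuous.inv₀ (by fun_prop) fun v => (lt_max_of_lt_left hB).ne'
  have hleft : ∫ v in 0..B, (max B v)⁻¹ = 1 := by
    rw [intervalIntegral.integral_congr (g := fun _ => B⁻¹), intervalIntegral.integral_const,
      sub_zero, smul_eq_mul, mul_inv_cancel₀ hB.ne']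
    intro v hv
    rw [Set.uIcc_of_le hB.le] at hv
    simp only [max_eq_left hv.2]
  have hright : ∫ v in B..1, (max B v)⁻¹ = Real.log B⁻¹ := by
    rw [intervalIntegral.integral_congr (g := fun v => v⁻¹), integral_inv_of_pos hB one_pos,
      one_div]
    intro v hv
    rw [Set.uIcc_of_le hB1] at hv
    simp only [max_eq_right hv.1]
  rw [← intervalIntegral.integral_add_adjacent_intervals (hcont.intervalIntegrable 0 B)
    (hcont.intervalIntegrable B 1), hleft, hright]

section SmallBall

variable {μ : Measure ℝ} [IsProbabilityMeasure μ] {K : ℝ} {β : ℝ} {p : ℝ[X]}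

lemma integral_decay_abs_eval_le_of_natDegree_eq_zero (hβ : 0 ≤ β) (hp : p.natDegree = 0)
    {r : ℕ} (hr : r ≠ 0) :
    ∫ x, decay β |p.eval x| ∂μ ≤ decay β |p.coeff r| := by
  rw [Polynomial.coeff_eq_zero_of_natDegree_lt (by omega), abs_zero, decay_of_le_one zero_le_one]
  exact integral_decay_comp_le_one μ hβ _

namespace HasSmallBallBound

lemma integral_decay_abs_eval_le_of_mul_natDegree_lt_one (hμ : HasSmallBallBound μ K)
    (hβ : 0 ≤ β) (hp : p.natDegree ≠ 0) (hβN : β * p.natDegree < 1) (r : ℕ) :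
    ∫ x, decay β |p.eval x| ∂μ ≤
      2 * K * p.natDegree * (1 - β * p.natDegree)⁻¹ * decay β |p.coeff r| := by
  have hK : 0 ≤ K := zero_le_one.trans hμ.one_le
  have hcont := continuous_decay β
  have hunit : ∫ v in 0..1, (v : ℝ) ^ (-(β * p.natDegree)) = (1 - β * p.natDegree)⁻¹ := by
    rw [integral_rpow (Or.inl (by linarith)), Real.one_rpow, Real.zero_rpow (by linarith),
      sub_zero, one_div, neg_add_eq_sub]
  calc ∫ x, decay β |p.eval x| ∂μ
      ≤ K * p.natDegree *
          ∫ v in 0..1, decay β (|p.coeff r| / 2 ^ p.natDegree * v ^ p.natDegree) :=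
        integral_comp_abs_eval_le hμ ((antitone_decay hβ).antitoneOn _) (decay_nonneg β)
          hcont.measurable hp r
    _ ≤ K * p.natDegree *
          ∫ v in 0..1, 2 * decay β |p.coeff r| * v ^ (-(β * p.natDegree)) := by
        gcongr
        refine intervalIntegral.integral_mono_on_of_le_Ioo zero_le_one
          (Continuous.intervalIntegrable (by fun_prop) _ _)
          ((intervalIntegral.intervalIntegrable_rpow' (by linarith)).const_mul _)
          fun v hv => decay_div_two_pow_mul_pow_le hβ hβN.le _ hv.1 hv.2.le
    _ = 2 * K * p.natDegree * (1 - β * p.natDegree)⁻¹ * decay β |p.coeff r| := by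
        rw [intervalIntegral.integral_const_mul, hunit]
        ring

lemma integral_decay_abs_eval_le_of_mul_natDegree_le_one (hμ : HasSmallBallBound μ K)
    (hβ : 0 ≤ β) (hp : p.natDegree ≠ 0) (hβN : β * p.natDegree ≤ 1) (r : ℕ) {B : ℝ} (hB : 0 < B)
    (hB1 : B ≤ 1) :
    ∫ x, decay β |p.eval x| ∂μ ≤
      2 * K * p.natDegree * (1 + Real.log B⁻¹) * (decay β |p.coeff r| + B) := by
  have hK : 0 ≤ K := zero_le_one.trans hμ.one_le
  have hcont := continuous_decay β
  have hmax : Continuous fun v : ℝ => (max B v)⁻¹ :=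
    Continuous.inv₀ (by fun_prop) fun v => (lt_max_of_lt_left hB).ne'
  calc ∫ x, decay β |p.eval x| ∂μ
      ≤ K * p.natDegree *
          ∫ v in 0..1, decay β (|p.coeff r| / 2 ^ p.natDegree * v ^ p.natDegree) :=
        integral_comp_abs_eval_le hμ ((antitone_decay hβ).antitoneOn _) (decay_nonneg β)
          hcont.measurable hp r
    _ ≤ K * p.natDegree * ∫ v in 0..1, 2 * (decay β |p.coeff r| + B) * (max B v)⁻¹ := by
        gcongr
        exact intervalIntegral.integral_mono_on_of_le_Ioo zero_le_one
          (Continuous.intervalIntegrable (by fun_prop) _ _)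
          ((hmax.const_mul _).intervalIntegrable _ _) fun v hv =>
            decay_div_two_pow_mul_pow_le_inv_max hβ hβN _ hB hv.1 hv.2.le
    _ = 2 * K * p.natDegree * (1 + Real.log B⁻¹) * (decay β |p.coeff r| + B) := by
        rw [intervalIntegral.integral_const_mul, integral_inv_max hB hB1]
        ring

lemma integral_decay_abs_eval_le_of_natDegree_lt (hμ : HasSmallBallBound μ K) {m r : ℕ}
    (hp : p.natDegree < m) (hr : r ≠ 0) :
    ∫ x, decay (m : ℝ)⁻¹ |p.eval x| ∂μ ≤ 2 * K * m ^ 2 * decay (m : ℝ)⁻¹ |p.coeff r| := by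
  have hK := hμ.one_le
  have hm : (1 : ℝ) ≤ m := by exact_mod_cast Nat.one_le_of_lt hp
  have hβ : (0 : ℝ) ≤ (m : ℝ)⁻¹ := by positivity
  have hdecay := decay_nonneg (m : ℝ)⁻¹ |p.coeff r|
  by_cases hp0 : p.natDegree = 0
  · refine (integral_decay_abs_eval_le_of_natDegree_eq_zero hβ hp0 hr).trans ?_
    exact le_mul_of_one_le_left hdecay (by nlinarith)
  have hN : (p.natDegree : ℝ) ≤ m := by exact_mod_cast hp.le
  have hβN : (m : ℝ)⁻¹ * p.natDegree ≤ 1 - (m : ℝ)⁻¹ := by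
    rw [inv_mul_le_iff₀ (by positivity), mul_sub, mul_inv_cancel₀ (by positivity), mul_one,
      le_sub_iff_add_le]
    exact_mod_cast hp
  have hβ1 : (m : ℝ)⁻¹ * p.natDegree < 1 := hβN.trans_lt (sub_lt_self _ (by positivity))
  calc ∫ x, decay (m : ℝ)⁻¹ |p.eval x| ∂μ
      ≤ 2 * K * p.natDegree * (1 - (m : ℝ)⁻¹ * p.natDegree)⁻¹ * decay (m : ℝ)⁻¹ |p.coeff r| :=
        hμ.integral_decay_abs_eval_le_of_mul_natDegree_lt_one hβ hp0 hβ1 r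
    _ ≤ 2 * K * m * m * decay (m : ℝ)⁻¹ |p.coeff r| := by
        have : (1 - (m : ℝ)⁻¹ * p.natDegree)⁻¹ ≤ m :=
          inv_le_of_inv_le₀ (by positivity) (by linarith)
        gcongr
    _ = 2 * K * m ^ 2 * decay (m : ℝ)⁻¹ |p.coeff r| := by ring

lemma integral_decay_abs_eval_le_of_natDegree_le (hμ : HasSmallBallBound μ K) {m r : ℕ}
    (hm : m ≠ 0) (hp : p.natDegree ≤ m) (hr : r ≠ 0) {A : ℝ} (hA : 1 ≤ A) :
    ∫ x, decay (m : ℝ)⁻¹ |p.eval x| ∂μ ≤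
      2 * K * m * (1 + Real.log A) * (decay (m : ℝ)⁻¹ |p.coeff r| + A ^ (-(m : ℝ)⁻¹)) := by
  have hK := hμ.one_le
  have hm1 : (1 : ℝ) ≤ m := by exact_mod_cast Nat.one_le_iff_ne_zero.mpr hm
  have hβ : (0 : ℝ) ≤ (m : ℝ)⁻¹ := by positivity
  have hdecay := decay_nonneg (m : ℝ)⁻¹ |p.coeff r|
  have hlog := Real.log_nonneg hA
  have hB : 0 < A ^ (-(m : ℝ)⁻¹) := by positivity
  have hB1 : A ^ (-(m : ℝ)⁻¹) ≤ 1 := Real.rpow_le_one_of_one_le_of_nonpos hA (neg_nonpos.mpr hβ)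
  by_cases hp0 : p.natDegree = 0
  · refine (integral_decay_abs_eval_le_of_natDegree_eq_zero hβ hp0 hr).trans
      ((le_add_of_nonneg_right hB.le).trans (le_mul_of_one_le_left (by positivity) ?_))
    have hKm : 1 ≤ K * m := one_le_mul_of_one_le_of_one_le hK hm1
    nlinarith
  have hN : (p.natDegree : ℝ) ≤ m := by exact_mod_cast hp
  have hlogB : Real.log (A ^ (-(m : ℝ)⁻¹))⁻¹ ≤ Real.log A := by
    rw [Real.rpow_neg (by positivity), inv_inv, Real.log_rpow (by positivity)]
    exact mul_le_of_le_one_left hlog (inv_le_one_of_one_le₀ hm1)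
  calc ∫ x, decay (m : ℝ)⁻¹ |p.eval x| ∂μ
      ≤ 2 * K * p.natDegree * (1 + Real.log (A ^ (-(m : ℝ)⁻¹))⁻¹) *
          (decay (m : ℝ)⁻¹ |p.coeff r| + A ^ (-(m : ℝ)⁻¹)) :=
        hμ.integral_decay_abs_eval_le_of_mul_natDegree_le_one hβ hp0
          ((inv_mul_le_one₀ (by positivity)).mpr hN) r hB hB1
    _ ≤ 2 * K * m * (1 + Real.log A) * (decay (m : ℝ)⁻¹ |p.coeff r| + A ^ (-(m : ℝ)⁻¹)) := by
        gcongr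
        linarith [Real.log_nonneg ((one_le_inv₀ hB).mpr hB1)]

lemma integral_decay_abs_eval_le (hμ : HasSmallBallBound μ K) {m e r : ℕ} (hm : m ≠ 0)
    (hp : p.natDegree ≤ m) (he : p.natDegree < m + e) (hr : r ≠ 0) {A : ℝ} (hA : 1 ≤ A) :
    ∫ x, decay (m : ℝ)⁻¹ |p.eval x| ∂μ ≤
      2 * K * m ^ 2 * (1 + Real.log A) ^ e *
        (decay (m : ℝ)⁻¹ |p.coeff r| + A ^ (-(m : ℝ)⁻¹)) := by
  have hK := hμ.one_le
  have hdecay := decay_nonneg (m : ℝ)⁻¹ |p.coeff r|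
  have hlog := Real.log_nonneg hA
  have hB : 0 ≤ A ^ (-(m : ℝ)⁻¹) := by positivity
  rcases Nat.eq_zero_or_pos e with rfl | he0
  · rw [pow_zero, mul_one]
    exact (hμ.integral_decay_abs_eval_le_of_natDegree_lt he hr).trans
      (mul_le_mul_of_nonneg_left (le_add_of_nonneg_right hB) (by positivity))
  · refine (hμ.integral_decay_abs_eval_le_of_natDegree_le hm hp hr hA).trans ?_
    gcongr
    · exact_mod_cast Nat.le_self_pow two_ne_zero m
    · exact le_self_pow₀ (le_add_of_nonneg_right hlog) he0.ne'

end HasSmallBallBound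

end SmallBall

/-! ### Laws with a tame density -/

/-- `φ` is a density of the law `μ`, of bounded variation (encoded as differentiability with
integrable derivative) and decaying at least like `1 / |x|`. Bounded variation makes one-dimensional
oscillatory integrals decay; the bound on `φ` yields small ball estimates about arbitrarily distant
points. -/
structure HasTameDensity (μ : Measure ℝ) (φ : ℝ → ℝ) : Prop where
  eq_withDensity : μ = volume.withDensity fun x => ENNReal.ofReal (φ x)
  nonneg : ∀ x, 0 ≤ φ x
  differentiable : Differentiable ℝ φ
  integrable_deriv : Integrable (deriv φ)
  exists_mul_one_add_abs_le : ∃ K, ∀ x, φ x * (1 + |x|) ≤ K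

section OneVariable

variable {μ : Measure ℝ} {φ : ℝ → ℝ}

namespace HasTameDensity

lemma integral_eq_integral_smul {E : Type*} [NormedAddCommGroup E] [NormedSpace ℝ E]
    (hμ : HasTameDensity μ φ) (f : ℝ → E) : ∫ x, f x ∂μ = ∫ x, φ x • f x := by
  rw [hμ.eq_withDensity, integral_withDensity_eq_integral_toReal_smul
    hμ.differentiable.continuous.measurable.ennreal_ofReal (ae_of_all _ fun _ => by simp)]
  simp only [ENNReal.toReal_ofReal (hμ.nonneg _)]

lemma integrable [IsFiniteMeasure μ] (hμ : HasTameDensity μ φ) : Integrable φ := by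
  refine (lintegral_ofReal_ne_top_iff_integrable
    hμ.differentiable.continuous.aestronglyMeasurable (ae_of_all _ hμ.nonneg)).mp ?_
  have h := congrArg (· Set.univ) hμ.eq_withDensity
  simp only [withDensity_apply _ MeasurableSet.univ, Measure.restrict_univ] at h
  exact h ▸ measure_ne_top μ _

lemma exists_le (hμ : HasTameDensity μ φ) : ∃ K, ∀ x, φ x ≤ K := by
  obtain ⟨K, hK⟩ := hμ.exists_mul_one_add_abs_le
  exact ⟨K, fun x => (le_mul_of_one_le_right (hμ.nonneg x)
    (le_add_of_nonneg_right (abs_nonneg x))).trans (hK x)⟩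

lemma density_le_of_relDist_le (hμ : HasTameDensity μ φ) {K : ℝ}
    (hK : ∀ x, φ x * (1 + |x|) ≤ K) {z : ℂ} {x : ℝ} (hx : relDist z x ≤ 1 / 2) :
    φ x ≤ 2 * K / max 1 ‖z‖ := by
  rw [relDist, div_le_iff₀ (by positivity)] at hx
  have htri : ‖z‖ ≤ |x| + ‖(x : ℂ) - z‖ := by
    simpa [norm_sub_rev] using norm_le_norm_add_norm_sub' z (x : ℂ)
  have hmax : max 1 ‖z‖ ≤ 2 * (1 + |x|) := by
    have := abs_nonneg x
    refine max_le (by linarith) ?_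
    obtain h | h := le_total 1 ‖z‖
    · rw [max_eq_right h] at hx
      linarith
    · linarith
  rw [le_div_iff₀ (by positivity)]
  linarith [mul_le_mul_of_nonneg_left hmax (hμ.nonneg x), hK x]

lemma exists_hasSmallBallBound [IsProbabilityMeasure μ] (hμ : HasTameDensity μ φ) :
    ∃ K, HasSmallBallBound μ K := by
  obtain ⟨K, hK⟩ := hμ.exists_mul_one_add_abs_le
  refine ⟨4 * max 1 K, by linarith [le_max_left 1 K], fun z δ => ?_⟩
  obtain hδ | hδ := le_or_gt (1 / 2) δ
  · refine prob_le_one.trans (ENNReal.one_le_ofReal.mpr ?_)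
    nlinarith [le_max_left 1 K]
  have hball : {x | relDist z x ≤ δ} ⊆
      Set.Icc (z.re - δ * max 1 ‖z‖) (z.re + δ * max 1 ‖z‖) := fun x hx => by
    rw [Set.mem_ofPred_eq, relDist, div_le_iff₀ (by positivity)] at hx
    have hre := (Complex.abs_re_le_norm ((x : ℂ) - z)).trans hx
    simp only [Complex.sub_re, Complex.ofReal_re] at hre
    constructor <;> linarith [abs_le.mp hre]
  calc μ {x | relDist z x ≤ δ}
      = ∫⁻ x in {x | relDist z x ≤ δ}, ENNReal.ofReal (φ x) := by
        rw [hμ.eq_withDensity,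
          withDensity_apply _ (measurableSet_le (measurable_relDist z) measurable_const)]
    _ ≤ ∫⁻ x in {x | relDist z x ≤ δ}, ENNReal.ofReal (2 * max 1 K / max 1 ‖z‖) := by
        refine setLIntegral_mono' (measurableSet_le (measurable_relDist z) measurable_const)
          fun x hx => ENNReal.ofReal_le_ofReal ?_
        exact hμ.density_le_of_relDist_le (fun x => (hK x).trans (le_max_right 1 K))
          (hx.trans hδ.le)
    _ ≤ ENNReal.ofReal (2 * max 1 K / max 1 ‖z‖) *
          volume (Set.Icc (z.re - δ * max 1 ‖z‖) (z.re + δ * max 1 ‖z‖)) := by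
        rw [setLIntegral_const]
        gcongr
    _ = ENNReal.ofReal (4 * max 1 K * δ) := by
        rw [Real.volume_Icc, ← ENNReal.ofReal_mul (by positivity)]
        congr 1
        field_simp
        ring

end HasTameDensity

/-! ### Oscillatory integrals -/

lemma norm_cexp_I_mul_ofReal (v : ℝ) : ‖Complex.exp (Complex.I * v)‖ = 1 := by
  rw [mul_comm, Complex.norm_exp_ofReal_mul_I]

lemma norm_integral_mul_cexp_le_integral_abs_deriv {u u' p p' : ℝ → ℝ}
    (hu : ∀ x, HasDerivAt u (u' x) x) (hp : ∀ x, HasDerivAt p (p' x) x) (hui : Integrable u)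
    (hu'i : Integrable u') (hup' : Integrable fun x => u x * p' x) :
    ‖∫ x, ((u x * p' x : ℝ) : ℂ) * Complex.exp (Complex.I * p x)‖ ≤ ∫ x, |u' x| := by
  have hpc : Continuous p := continuous_iff_continuousAt.mpr fun x => (hp x).continuousAt
  have hexp : Continuous fun x => Complex.exp (Complex.I * p x) := by fun_prop
  have hint {f : ℝ → ℝ} (hf : Integrable f) :
      Integrable fun x => (f x : ℂ) * Complex.exp (Complex.I * p x) :=
    hf.ofReal.mul_bdd hexp.aestronglyMeasurable
      (ae_of_all _ fun x => (norm_cexp_I_mul_ofReal _).le)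
  have hvd : ∀ x, HasDerivAt (fun x => Complex.exp (Complex.I * p x))
      (Complex.exp (Complex.I * p x) * (Complex.I * p' x)) x := fun x =>
    (((hp x).ofReal_comp).const_mul Complex.I).cexp
  have hcongr : (fun x => (u x : ℂ) * (Complex.exp (Complex.I * p x) * (Complex.I * p' x))) =
      fun x => Complex.I * (((u x * p' x : ℝ) : ℂ) * Complex.exp (Complex.I * p x)) := by
    ext x
    push_cast
    ring
  have hibp := integral_mul_deriv_eq_deriv_mul_of_integrable (fun x _ => (hu x).ofReal_comp)
    (fun x _ => hvd x) (by simpa only [Pi.mul_def, hcongr] using (hint hup').const_mul Complex.I)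
    (hint hu'i) (hint hui)
  rw [hcongr, integral_const_mul] at hibp
  calc ‖∫ x, ((u x * p' x : ℝ) : ℂ) * Complex.exp (Complex.I * p x)‖
      = ‖∫ x, (u' x : ℂ) * Complex.exp (Complex.I * p x)‖ := by
        simpa using congrArg norm hibp
    _ ≤ ∫ x, ‖(u' x : ℂ) * Complex.exp (Complex.I * p x)‖ := norm_integral_le_integral_norm _
    _ = ∫ x, |u' x| := by simp

lemma abs_im_one_div_sub_eq_pi_mul_cauchyPDFReal (z : ℂ) (x : ℝ) :
    |(1 / ((x : ℂ) - z)).im| = Real.pi * cauchyPDFReal z.re ‖z.im‖₊ x := by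
  rw [cauchyPDFReal_def, one_div, Complex.inv_im, Complex.normSq_apply]
  simp only [Complex.sub_im, Complex.ofReal_im, Complex.sub_re, Complex.ofReal_re, coe_nnnorm,
    Real.norm_eq_abs, zero_sub, neg_neg, sq_abs, ← sq, neg_sq]
  rw [abs_div, abs_of_nonneg (by positivity : 0 ≤ (x - z.re) ^ 2 + z.im ^ 2), ← mul_assoc,
    ← mul_assoc, mul_inv_cancel₀ Real.pi_ne_zero, one_mul, div_eq_mul_inv]

lemma integrable_sum_map_cauchyPDFReal (s : Multiset ℂ) :
    Integrable fun x => (s.map fun z => cauchyPDFReal z.re ‖z.im‖₊ x).sum := by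
  induction s using Multiset.induction_on with
  | empty => simp
  | cons z s ih =>
    simp only [Multiset.map_cons, Multiset.sum_cons]
    exact (integrable_cauchyPDFReal _).add ih

lemma integral_sum_map_cauchyPDFReal_le_card (s : Multiset ℂ) :
    ∫ x, (s.map fun z => cauchyPDFReal z.re ‖z.im‖₊ x).sum ≤ s.card := by
  induction s using Multiset.induction_on with
  | empty => simp
  | cons z s ih =>
    have hz : ∫ x, cauchyPDFReal z.re ‖z.im‖₊ x ≤ 1 := by
      obtain h | h := eq_or_ne ‖z.im‖₊ 0
      · simp [h]
      · exact (integral_cauchyPDFReal_eq_one _ h).le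
    simp only [Multiset.map_cons, Multiset.sum_cons, Multiset.card_cons, Nat.cast_add,
      Nat.cast_one]
    rw [integral_add (integrable_cauchyPDFReal _) (integrable_sum_map_cauchyPDFReal s), add_comm]
    exact add_le_add ih hz

-- `η q' / (q ^ 2 + η ^ 2)` is the imaginary part of the logarithmic derivative of `q - i η`, hence
-- a signed sum of Poisson kernels over the roots of that polynomial.
lemma abs_eval_derivative_div_le_sum_cauchyPDFReal (q : ℝ[X]) {η : ℝ} (hη : 0 < η) (x : ℝ) :
    |q.derivative.eval x| / (q.eval x ^ 2 + η ^ 2) ≤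
      Real.pi / η * ((q.map (algebraMap ℝ ℂ) - C (η * Complex.I)).roots.map
        fun z => cauchyPDFReal z.re ‖z.im‖₊ x).sum := by
  set Q : ℂ[X] := q.map (algebraMap ℝ ℂ) - C (η * Complex.I)
  have hQ : Q.eval (x : ℂ) = ((q.eval x : ℝ) : ℂ) - η * Complex.I := by
    rw [Polynomial.eval_sub, Polynomial.eval_C, ← Complex.coe_algebraMap,
      Polynomial.eval_map_apply]
  have hQ' : Q.derivative.eval (x : ℂ) = ((q.derivative.eval x : ℝ) : ℂ) := by
    rw [Polynomial.derivative_sub, Polynomial.derivative_C, sub_zero,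
      Polynomial.derivative_map, ← Complex.coe_algebraMap, Polynomial.eval_map_apply]
  have hQ0 : Q.eval (x : ℂ) ≠ 0 := fun h => hη.ne' (by simpa [hQ] using congrArg Complex.im h)
  have him : |q.derivative.eval x| / (q.eval x ^ 2 + η ^ 2) =
      η⁻¹ * |((Q.roots.map fun z => 1 / ((x : ℂ) - z)).sum).im| := by
    rw [← (IsAlgClosed.splits Q).eval_derivative_div_eval_of_ne_zero hQ0, hQ, hQ', Complex.div_im,
      Complex.normSq_apply]
    simp only [Complex.ofReal_im, Complex.ofReal_re, Complex.sub_re, Complex.sub_im,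
      Complex.re_ofReal_mul, Complex.im_ofReal_mul, Complex.I_re, Complex.I_im, mul_zero, sub_zero,
      mul_one, zero_sub, zero_mul, zero_div, mul_neg, ← sq, neg_sq]
    rw [neg_div, neg_neg, abs_div, abs_mul, abs_of_pos hη,
      abs_of_nonneg (by positivity : 0 ≤ q.eval x ^ 2 + η ^ 2)]
    field_simp
  rw [him, div_eq_inv_mul, mul_assoc]
  gcongr
  rw [← Complex.coe_imAddGroupHom, map_multiset_sum, Multiset.map_map]
  refine (Multiset.abs_sum_le_sum_abs).trans_eq ?_
  rw [Multiset.map_map, ← Multiset.sum_map_mul_left]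
  simp only [Function.comp_def, Complex.coe_imAddGroupHom,
    abs_im_one_div_sub_eq_pi_mul_cauchyPDFReal]

lemma integrable_abs_eval_derivative_div (q : ℝ[X]) {η : ℝ} (hη : 0 < η) :
    Integrable fun x => |q.derivative.eval x| / (q.eval x ^ 2 + η ^ 2) := by
  refine ((integrable_sum_map_cauchyPDFReal
    (q.map (algebraMap ℝ ℂ) - C (η * Complex.I)).roots).const_mul (Real.pi / η)).mono'
    (Measurable.aestronglyMeasurable (by fun_prop)) (ae_of_all _ fun x => ?_)
  rw [Real.norm_of_nonneg (by positivity)]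
  exact abs_eval_derivative_div_le_sum_cauchyPDFReal q hη x

lemma integral_abs_eval_derivative_div_le (q : ℝ[X]) {η : ℝ} (hη : 0 < η) :
    ∫ x, |q.derivative.eval x| / (q.eval x ^ 2 + η ^ 2) ≤ Real.pi / η * q.natDegree := by
  refine (integral_mono (integrable_abs_eval_derivative_div q hη)
    ((integrable_sum_map_cauchyPDFReal _).const_mul _)
    (abs_eval_derivative_div_le_sum_cauchyPDFReal q hη)).trans ?_
  rw [integral_const_mul]
  refine mul_le_mul_of_nonneg_left
    ((integral_sum_map_cauchyPDFReal_le_card _).trans (Nat.cast_le.mpr ?_)) (by positivity)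
  refine (Polynomial.card_roots' _).trans ?_
  rw [Polynomial.natDegree_sub_C]
  exact Polynomial.natDegree_map_le

/-- The inverse of `y` regularised at scale `η`, by which the amplitude is multiplied when
integrating by parts near the critical points of the phase. -/
noncomputable def regInv (η y : ℝ) : ℝ := y / (y ^ 2 + η ^ 2)

lemma hasDerivAt_regInv {η : ℝ} (hη : 0 < η) (y : ℝ) :
    HasDerivAt (regInv η) ((η ^ 2 - y ^ 2) / (y ^ 2 + η ^ 2) ^ 2) y := by
  refine ((hasDerivAt_id y).div ((hasDerivAt_pow 2 y).add_const (η ^ 2))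
    (by positivity)).congr_deriv ?_
  simp only [id_eq]
  ring

lemma abs_regInv_le {η : ℝ} (hη : 0 < η) (y : ℝ) : |regInv η y| ≤ 1 / (2 * η) := by
  rw [regInv, abs_div, abs_of_pos (by positivity : 0 < y ^ 2 + η ^ 2),
    div_le_div_iff₀ (by positivity) (by positivity)]
  linarith [sq_nonneg (|y| - η), sq_abs y]

lemma abs_deriv_regInv_le {η : ℝ} (hη : 0 < η) (y : ℝ) :
    |(η ^ 2 - y ^ 2) / (y ^ 2 + η ^ 2) ^ 2| ≤ 1 / (y ^ 2 + η ^ 2) := by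
  rw [abs_div, abs_of_pos (by positivity : 0 < (y ^ 2 + η ^ 2) ^ 2), sq (y ^ 2 + η ^ 2),
    ← div_div]
  gcongr
  rw [div_le_one (by positivity), abs_le]
  constructor <;> linarith [sq_nonneg η, sq_nonneg y]

lemma regInv_mul_self_add {η : ℝ} (hη : η ≠ 0) (y : ℝ) :
    regInv η y * y + (1 + (y / η) ^ 2)⁻¹ = 1 := by
  have : y ^ 2 + η ^ 2 ≠ 0 := by positivity
  rw [regInv]
  field_simp
  ring

lemma abs_regInv_mul_self_le_one {η : ℝ} (hη : η ≠ 0) (y : ℝ) : |regInv η y * y| ≤ 1 := by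
  rw [eq_sub_of_add_eq (regInv_mul_self_add hη y), abs_of_nonneg]
  · linarith [show 0 ≤ (1 + (y / η) ^ 2)⁻¹ by positivity]
  · exact sub_nonneg.mpr (inv_le_one_of_one_le₀ (le_add_of_nonneg_right (sq_nonneg _)))

lemma continuous_regInv {η : ℝ} (hη : 0 < η) : Continuous (regInv η) :=
  continuous_iff_continuousAt.mpr fun y => (hasDerivAt_regInv hη y).continuousAt

lemma abs_deriv_regInv_comp_mul_le {η K a b : ℝ} (hη : 0 < η) (ha : 0 ≤ a) (haK : a ≤ K)
    (y y' : ℝ) :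
    |(η ^ 2 - y ^ 2) / (y ^ 2 + η ^ 2) ^ 2 * y' * a + regInv η y * b| ≤
      K * (|y'| / (y ^ 2 + η ^ 2)) + 1 / (2 * η) * |b| := by
  refine (abs_add_le _ _).trans ?_
  rw [abs_mul, abs_mul, abs_mul, abs_of_nonneg ha]
  refine add_le_add ?_ (mul_le_mul_of_nonneg_right (abs_regInv_le hη y) (abs_nonneg b))
  calc |(η ^ 2 - y ^ 2) / (y ^ 2 + η ^ 2) ^ 2| * |y'| * a
      ≤ 1 / (y ^ 2 + η ^ 2) * |y'| * K := by
        gcongr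
        exact abs_deriv_regInv_le hη y
    _ = K * (|y'| / (y ^ 2 + η ^ 2)) := by ring

lemma HasTameDensity.norm_integral_regInv_mul_cexp_le [IsFiniteMeasure μ]
    (hμ : HasTameDensity μ φ) {K : ℝ} (hK : ∀ x, φ x ≤ K) (p : ℝ[X]) {η : ℝ} (hη : 0 < η) :
    ‖∫ x, ((regInv η (p.derivative.eval x) * φ x * p.derivative.eval x : ℝ) : ℂ) *
      Complex.exp (Complex.I * (p.eval x : ℝ))‖ ≤
      (K * Real.pi * p.derivative.natDegree + (∫ x, |deriv φ x|) / 2) / η := by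
  set q := p.derivative
  set u' : ℝ → ℝ := fun x => (η ^ 2 - q.eval x ^ 2) / (q.eval x ^ 2 + η ^ 2) ^ 2 *
    q.derivative.eval x * φ x + regInv η (q.eval x) * deriv φ x
  have hu (x : ℝ) : HasDerivAt (fun x => regInv η (q.eval x) * φ x) (u' x) x :=
    ((hasDerivAt_regInv hη _).comp x (q.hasDerivAt x)).mul (hμ.differentiable x).hasDerivAt
  have hu'le (x : ℝ) : |u' x| ≤
      K * (|q.derivative.eval x| / (q.eval x ^ 2 + η ^ 2)) + 1 / (2 * η) * |deriv φ x| :=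
    abs_deriv_regInv_comp_mul_le hη (hμ.nonneg x) (hK x) _ _
  have hvar := (integrable_abs_eval_derivative_div q hη).const_mul K
  have hφ' := hμ.integrable_deriv.abs.const_mul (1 / (2 * η))
  have hφ := hμ.differentiable.continuous
  have hreg := (continuous_regInv hη).comp q.continuous
  have hu'i : Integrable u' := (hvar.add hφ').mono'
    (.add (((by fun_prop : Measurable _).mul hφ.measurable).aestronglyMeasurable)
      (hreg.aestronglyMeasurable.mul hμ.integrable_deriv.1)) (ae_of_all _ hu'le)
  have hui : Integrable fun x => regInv η (q.eval x) * φ x :=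
    hμ.integrable.bdd_mul hreg.aestronglyMeasurable (ae_of_all _ fun x => abs_regInv_le hη _)
  have huq : Integrable fun x => regInv η (q.eval x) * φ x * q.eval x := by
    simp only [mul_right_comm _ (φ _)]
    exact hμ.integrable.bdd_mul (hreg.mul q.continuous).aestronglyMeasurable
      (ae_of_all _ fun x => abs_regInv_mul_self_le_one hη.ne' _)
  calc _ ≤ ∫ x, |u' x| :=
        norm_integral_mul_cexp_le_integral_abs_deriv hu p.hasDerivAt hui hu'i huq
    _ ≤ ∫ x, (K * (|q.derivative.eval x| / (q.eval x ^ 2 + η ^ 2)) +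
          1 / (2 * η) * |deriv φ x|) := integral_mono hu'i.abs (hvar.add hφ') hu'le
    _ ≤ K * (Real.pi / η * q.natDegree) + 1 / (2 * η) * ∫ x, |deriv φ x| := by
        rw [integral_add hvar hφ', integral_const_mul, integral_const_mul]
        gcongr
        · exact (hμ.nonneg 0).trans (hK 0)
        · exact integral_abs_eval_derivative_div_le q hη
    _ = _ := by
        field_simp

lemma HasTameDensity.norm_integral_cexp_le [IsProbabilityMeasure μ] (hμ : HasTameDensity μ φ)
    {K : ℝ} (hK : ∀ x, φ x ≤ K) (p : ℝ[X]) {η : ℝ} (hη : 0 < η) :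
    ‖∫ x, Complex.exp (Complex.I * (p.eval x : ℝ)) ∂μ‖ ≤
      (K * Real.pi * p.derivative.natDegree + (∫ x, |deriv φ x|) / 2) / η +
        ∫ x, (1 + (p.derivative.eval x / η) ^ 2)⁻¹ ∂μ := by
  set q := p.derivative
  set w : ℝ → ℝ := fun x => (1 + (q.eval x / η) ^ 2)⁻¹
  set e : ℝ → ℂ := fun x => Complex.exp (Complex.I * (p.eval x : ℝ))
  have he : Continuous e := by fun_prop
  have hne (x : ℝ) : ‖e x‖ = 1 := norm_cexp_I_mul_ofReal _
  have hw0 (x : ℝ) : 0 ≤ w x := by positivity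
  have hw : Continuous w :=
    (continuous_const.add ((q.continuous.div_const η).pow 2)).inv₀ fun _ =>
      (add_pos_of_pos_of_nonneg one_pos (sq_nonneg _)).ne'
  have hei : Integrable e μ := .of_bound he.aestronglyMeasurable 1 (ae_of_all _ fun x => (hne x).le)
  have hwi : Integrable w μ := .of_bound hw.aestronglyMeasurable 1 (ae_of_all _ fun x => by
    rw [Real.norm_of_nonneg (hw0 x)]
    exact inv_le_one_of_one_le₀ (le_add_of_nonneg_right (sq_nonneg _)))
  have hwe : Integrable (fun x => (w x : ℂ) * e x) μ :=
    hwi.ofReal.mul_bdd he.aestronglyMeasurable (ae_of_all _ fun x => (hne x).le)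
  have hsplit : ∫ x, (e x - w x * e x) ∂μ =
      ∫ x, ((regInv η (q.eval x) * φ x * q.eval x : ℝ) : ℂ) * e x := by
    rw [hμ.integral_eq_integral_smul]
    congr 1 with x
    have hx : regInv η (q.eval x) * q.eval x + w x = 1 := regInv_mul_self_add hη.ne' _
    rw [Complex.real_smul, ← one_sub_mul, ← Complex.ofReal_one, ← Complex.ofReal_sub,
      ← eq_sub_of_add_eq hx, ← mul_assoc, ← Complex.ofReal_mul, ← mul_assoc, mul_comm (φ x)]
  calc ‖∫ x, e x ∂μ‖
      = ‖∫ x, (e x - w x * e x) ∂μ + ∫ x, w x * e x ∂μ‖ := by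
        rw [integral_sub hei hwe, sub_add_cancel]
    _ ≤ ‖∫ x, (e x - w x * e x) ∂μ‖ + ∫ x, ‖w x * e x‖ ∂μ :=
        (norm_add_le _ _).trans (add_le_add_right (norm_integral_le_integral_norm _) _)
    _ ≤ _ := by
        rw [hsplit]
        refine add_le_add (hμ.norm_integral_regInv_mul_cexp_le hK p hη) (le_of_eq ?_)
        simp only [norm_mul, hne, mul_one, Complex.norm_real, Real.norm_of_nonneg (hw0 _), w]

lemma inv_one_add_pow_sq_le {w : ℝ} (hw : 0 ≤ w) {N : ℕ} (hN : N ≠ 0) :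
    (1 + (w ^ N) ^ 2)⁻¹ ≤ 2 * (1 + w ^ 2)⁻¹ := by
  rw [← div_eq_mul_inv, ← one_div, div_le_div_iff₀ (by positivity) (by positivity)]
  obtain h | h := le_total w 1
  · nlinarith [sq_nonneg (w ^ N), pow_le_one₀ (n := 2) hw h]
  · nlinarith [pow_le_pow_left₀ hw (le_self_pow₀ h hN) 2]

lemma integral_inv_one_add_mul_sq_le {z : ℝ} (hz : 0 < z) :
    ∫ v in 0..1, (1 + (z * v) ^ 2)⁻¹ ≤ Real.pi / (2 * z) := by
  rw [intervalIntegral.integral_comp_mul_left (fun v => (1 + v ^ 2)⁻¹) hz.ne',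
    integral_inv_one_add_sq]
  simp only [mul_zero, mul_one, Real.arctan_zero, sub_zero, smul_eq_mul]
  rw [mul_comm 2 z, ← div_div, div_right_comm, div_eq_inv_mul _ z]
  gcongr
  exact (Real.arctan_lt_pi_div_two z).le

lemma HasSmallBallBound.integral_inv_one_add_eval_sq_le [IsProbabilityMeasure μ] {K : ℝ}
    (hμ : HasSmallBallBound μ K) {p : ℝ[X]} (hp : p.natDegree ≠ 0) {r : ℕ} (hr : p.coeff r ≠ 0) :
    ∫ x, (1 + (p.eval x) ^ 2)⁻¹ ∂μ ≤
      2 * Real.pi * K * p.natDegree * |p.coeff r| ^ (-(p.natDegree : ℝ)⁻¹) := by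
  set N := p.natDegree
  set z : ℝ := |p.coeff r| ^ (N : ℝ)⁻¹ / 2 with hz
  have hc := abs_pos.mpr hr
  have hz0 : 0 < z := by positivity
  have hzN (v : ℝ) : |p.coeff r| / 2 ^ N * v ^ N = (z * v) ^ N := by
    rw [mul_pow, hz, div_pow, Real.rpow_inv_natCast_pow hc.le hp]
  have hF : AntitoneOn (fun v : ℝ => (1 + v ^ 2)⁻¹) (Set.Ici 0) := fun a (ha : 0 ≤ a) b _ hab => by
    dsimp only
    gcongr
  calc ∫ x, (1 + (p.eval x) ^ 2)⁻¹ ∂μ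
      = ∫ x, (1 + |p.eval x| ^ 2)⁻¹ ∂μ := by simp only [sq_abs]
    _ ≤ K * N * ∫ v in 0..1, (1 + (|p.coeff r| / 2 ^ N * v ^ N) ^ 2)⁻¹ :=
        integral_comp_abs_eval_le hμ hF (fun v => by positivity) (by fun_prop) hp r
    _ ≤ K * N * ∫ v in 0..1, 2 * (1 + (z * v) ^ 2)⁻¹ := by
        have := hμ.one_le
        gcongr
        refine intervalIntegral.integral_mono_on zero_le_one ?_ ?_ fun v hv => ?_
        · exact Continuous.intervalIntegrable (by fun_prop (disch := intro; positivity)) _ _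
        · exact Continuous.intervalIntegrable (by fun_prop (disch := intro; positivity)) _ _
        · rw [hzN]
          exact inv_one_add_pow_sq_le (mul_nonneg hz0.le hv.1) hp
    _ ≤ K * N * (2 * (Real.pi / (2 * z))) := by
        have := hμ.one_le
        rw [intervalIntegral.integral_const_mul]
        gcongr
        exact integral_inv_one_add_mul_sq_le hz0
    _ = _ := by
        rw [Real.rpow_neg hc.le, hz]
        field_simp

lemma rpow_neg_inv_le_of_rpow_le {N m : ℕ} {a c : ℝ} (hN : N ≠ 0) (hNm : N < m) (hc : 1 ≤ c)
    (ha : c ^ (1 - (m : ℝ)⁻¹) ≤ a) : a ^ (-(N : ℝ)⁻¹) ≤ c ^ (-(m : ℝ)⁻¹) := by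
  have hN0 : (0 : ℝ) < N := by positivity
  have hNm' : (N : ℝ) + 1 ≤ m := by exact_mod_cast hNm
  have hexp : (1 - (m : ℝ)⁻¹) * -(N : ℝ)⁻¹ ≤ -(m : ℝ)⁻¹ := by
    have : (0 : ℝ) < m := by linarith
    rw [mul_neg, neg_le_neg_iff, ← div_eq_mul_inv, le_div_iff₀ hN0]
    field_simp
    linarith
  calc a ^ (-(N : ℝ)⁻¹) ≤ (c ^ (1 - (m : ℝ)⁻¹)) ^ (-(N : ℝ)⁻¹) :=
        Real.rpow_le_rpow_of_nonpos (by positivity) ha (neg_nonpos.mpr (by positivity))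
    _ = c ^ ((1 - (m : ℝ)⁻¹) * -(N : ℝ)⁻¹) := (Real.rpow_mul (by positivity) _ _).symm
    _ ≤ c ^ (-(m : ℝ)⁻¹) := Real.rpow_le_rpow_of_exponent_le hc hexp

-- At scale `η = c ^ (1 / m)` the boundary of the critical region and its mass, the two error terms
-- of `HasTameDensity.norm_integral_cexp_le`, are of the same order `c ^ (-1 / m)`.
lemma HasSmallBallBound.integral_inv_one_add_eval_div_sq_le [IsProbabilityMeasure μ] {K : ℝ}
    (hμ : HasSmallBallBound μ K) {q : ℝ[X]} {m s : ℕ} {c : ℝ} (hq : q.natDegree ≠ 0)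
    (hqm : q.natDegree < m) (hc : 1 ≤ c) (hcs : c ≤ |q.coeff s|) :
    ∫ x, (1 + (q.eval x / c ^ (m : ℝ)⁻¹) ^ 2)⁻¹ ∂μ ≤
      2 * Real.pi * K * m * c ^ (-(m : ℝ)⁻¹) := by
  set η := c ^ (m : ℝ)⁻¹ with hη
  have hη0 : 0 < η := by positivity
  have hcoeff : c ^ (1 - (m : ℝ)⁻¹) ≤ |(C η⁻¹ * q).coeff s| := by
    rw [Polynomial.coeff_C_mul, abs_mul, abs_of_pos (inv_pos.mpr hη0),
      Real.rpow_sub (by positivity), Real.rpow_one, ← hη, div_eq_inv_mul]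
    gcongr
  have hdeg : (C η⁻¹ * q).natDegree = q.natDegree :=
    Polynomial.natDegree_C_mul (inv_ne_zero hη0.ne')
  have hcoeff0 : (C η⁻¹ * q).coeff s ≠ 0 := by
    have : 0 < c ^ (1 - (m : ℝ)⁻¹) := by positivity
    exact abs_pos.mp (this.trans_le hcoeff)
  have hK := hμ.one_le
  calc ∫ x, (1 + (q.eval x / η) ^ 2)⁻¹ ∂μ
      = ∫ x, (1 + ((C η⁻¹ * q).eval x) ^ 2)⁻¹ ∂μ := by
        simp only [Polynomial.eval_C_mul, div_eq_inv_mul]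
    _ ≤ 2 * Real.pi * K * q.natDegree * |(C η⁻¹ * q).coeff s| ^ (-(q.natDegree : ℝ)⁻¹) := by
        simpa only [hdeg] using hμ.integral_inv_one_add_eval_sq_le (hdeg.symm ▸ hq) hcoeff0
    _ ≤ 2 * Real.pi * K * m * c ^ (-(m : ℝ)⁻¹) := by
        gcongr
        exact rpow_neg_inv_le_of_rpow_le hq hqm hc hcoeff

lemma HasTameDensity.norm_integral_cexp_mul_abs_coeff_one_le [IsFiniteMeasure μ]
    (hμ : HasTameDensity μ φ) {p : ℝ[X]} (hp : p.natDegree ≤ 1) :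
    ‖∫ x, Complex.exp (Complex.I * (p.eval x : ℝ)) ∂μ‖ * |p.coeff 1| ≤ ∫ x, |deriv φ x| := by
  have hp' (x : ℝ) : HasDerivAt (fun x => p.eval x) (p.coeff 1) x := by
    have hC : p.derivative = C (p.coeff 1) := by
      rw [Polynomial.eq_C_of_natDegree_le_zero ((Polynomial.natDegree_derivative_le p).trans
        (Nat.sub_le_sub_right hp 1)), Polynomial.coeff_derivative]
      simp
    simpa only [hC, Polynomial.eval_C] using p.hasDerivAt x
  refine le_of_eq_of_le ?_ (norm_integral_mul_cexp_le_integral_abs_deriv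
    (fun x => (hμ.differentiable x).hasDerivAt) hp' hμ.integrable hμ.integrable_deriv
    (hμ.integrable.mul_const _))
  rw [hμ.integral_eq_integral_smul, mul_comm, ← Real.norm_eq_abs, ← Complex.norm_real, ← norm_mul,
    ← integral_const_mul]
  simp only [Complex.real_smul, Complex.ofReal_mul, mul_left_comm, mul_assoc]

lemma HasTameDensity.norm_integral_cexp_le_of_two_le_natDegree [IsProbabilityMeasure μ]
    (hμ : HasTameDensity μ φ) {K B : ℝ} (hK : ∀ x, φ x ≤ K) (hB : HasSmallBallBound μ B)
    {p : ℝ[X]} {m r : ℕ} (hp : 2 ≤ p.natDegree) (hpm : p.natDegree ≤ m) (hr : r ≠ 0)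
    (hc : 1 ≤ |p.coeff r|) :
    ‖∫ x, Complex.exp (Complex.I * (p.eval x : ℝ)) ∂μ‖ ≤
      (K * Real.pi * m + ∫ x, |deriv φ x|) * |p.coeff r| ^ (-(m : ℝ)⁻¹) +
        2 * Real.pi * B * m * |p.coeff r| ^ (-(m : ℝ)⁻¹) := by
  set c := |p.coeff r|
  have hdeg : p.derivative.natDegree = p.natDegree - 1 := Polynomial.natDegree_derivative p
  have hcoeff : c ≤ |p.derivative.coeff (r - 1)| := by
    rw [Polynomial.coeff_derivative, Nat.sub_add_cancel (Nat.one_le_iff_ne_zero.mpr hr), abs_mul]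
    refine le_mul_of_one_le_right (abs_nonneg _) ?_
    rw [← Nat.cast_add_one, Nat.abs_cast]
    exact_mod_cast Nat.succ_pos _
  have hK0 : 0 ≤ K := (hμ.nonneg 0).trans (hK 0)
  have hV : 0 ≤ ∫ x, |deriv φ x| := integral_nonneg fun _ => abs_nonneg _
  refine (hμ.norm_integral_cexp_le hK p (by positivity : 0 < c ^ (m : ℝ)⁻¹)).trans
    (add_le_add ?_ ?_)
  · rw [div_eq_mul_inv, ← Real.rpow_neg (by positivity)]
    gcongr
    · omega
    · linarith
  · exact hB.integral_inv_one_add_eval_div_sq_le (by omega) (by omega) hc hcoeff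

lemma HasTameDensity.norm_integral_cexp_le_of_natDegree_le_one [IsProbabilityMeasure μ]
    (hμ : HasTameDensity μ φ) {p : ℝ[X]} (m : ℕ) (hp : p.natDegree ≤ 1) (hc : 1 ≤ |p.coeff 1|) :
    ‖∫ x, Complex.exp (Complex.I * (p.eval x : ℝ)) ∂μ‖ ≤
      (∫ x, |deriv φ x|) * |p.coeff 1| ^ (-(m : ℝ)⁻¹) := by
  have hinv : |p.coeff 1|⁻¹ ≤ |p.coeff 1| ^ (-(m : ℝ)⁻¹) := by
    rw [← Real.rpow_neg_one]
    exact Real.rpow_le_rpow_of_exponent_le hc (neg_le_neg (Nat.cast_inv_le_one m))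
  exact ((le_mul_inv_iff₀ (zero_lt_one.trans_le hc)).mpr
    (hμ.norm_integral_cexp_mul_abs_coeff_one_le hp)).trans
      (mul_le_mul_of_nonneg_left hinv (integral_nonneg fun _ => abs_nonneg _))

lemma HasTameDensity.exists_norm_integral_cexp_le_decay [IsProbabilityMeasure μ]
    (hμ : HasTameDensity μ φ) {m : ℕ} (hm : m ≠ 0) :
    ∃ M : ℝ, 1 ≤ M ∧ ∀ (p : ℝ[X]) (r : ℕ), p.natDegree ≤ m → r ≠ 0 →
      ‖∫ x, Complex.exp (Complex.I * (p.eval x : ℝ)) ∂μ‖ ≤ M * decay (m : ℝ)⁻¹ |p.coeff r| := by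
  obtain ⟨K, hK⟩ := hμ.exists_le
  obtain ⟨B, hB⟩ := hμ.exists_hasSmallBallBound
  have hK0 : 0 ≤ K := (hμ.nonneg 0).trans (hK 0)
  have hV : 0 ≤ ∫ x, |deriv φ x| := integral_nonneg fun _ => abs_nonneg _
  have hB0 := hB.one_le
  have hle_one (p : ℝ[X]) : ‖∫ x, Complex.exp (Complex.I * (p.eval x : ℝ)) ∂μ‖ ≤ 1 := by
    simpa [norm_cexp_I_mul_ofReal] using
      norm_integral_le_integral_norm (μ := μ) fun x => Complex.exp (Complex.I * (p.eval x : ℝ))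
  set M := 1 + (K * Real.pi * m + ∫ x, |deriv φ x|) + 2 * Real.pi * B * m
  have hM1 : 1 ≤ M := by
    have : 0 ≤ K * Real.pi * m + 2 * Real.pi * B * m := by positivity
    linarith
  refine ⟨M, hM1, fun p r hp hr => ?_⟩
  set c := |p.coeff r|
  obtain hc | hc := le_total c 1
  · rw [decay_of_le_one hc, mul_one]
    exact (hle_one p).trans hM1
  have hrp : r ≤ p.natDegree :=
    Polynomial.le_natDegree_of_ne_zero (abs_pos.mp (zero_lt_one.trans_le hc))
  have hdecay : 0 ≤ c ^ (-(m : ℝ)⁻¹) := by positivity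
  rw [decay_of_one_le hc]
  obtain hp1 | hp2 := le_or_gt p.natDegree 1
  · obtain rfl : r = 1 := by omega
    refine (hμ.norm_integral_cexp_le_of_natDegree_le_one m hp1 hc).trans ?_
    gcongr
    have : 0 ≤ K * Real.pi * m + 2 * Real.pi * B * m := by positivity
    linarith
  · refine (hμ.norm_integral_cexp_le_of_two_le_natDegree hK hB hp2 hp hr hc).trans ?_
    rw [← add_mul]
    gcongr
    linarith

end OneVariable

/-! ### Several variables -/

section SubstFirst

variable {R : Type*} [CommSemiring R] {n : ℕ}

/-- The polynomial in the remaining variables obtained from `f` by setting its first variable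
to `y`. -/
noncomputable def substFirst (y : R) (f : MvPolynomial (Fin (n + 1)) R) :
    MvPolynomial (Fin n) R :=
  (MvPolynomial.finSuccEquiv R n f).eval (MvPolynomial.C y)

lemma eval_substFirst (y : R) (f : MvPolynomial (Fin (n + 1)) R) (s : Fin n → R) :
    MvPolynomial.eval s (substFirst y f) = MvPolynomial.eval (Fin.cons y s) f := by
  rw [MvPolynomial.eval_eq_eval_mv_eval', substFirst, Polynomial.eval_map,
    ← Polynomial.eval₂_at_apply, MvPolynomial.eval_C]

lemma coeff_substFirst (y : R) (f : MvPolynomial (Fin (n + 1)) R) (k : Fin n →₀ ℕ) :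
    MvPolynomial.coeff k (substFirst y f) =
      ∑ i ∈ Finset.range ((MvPolynomial.finSuccEquiv R n f).natDegree + 1),
        MvPolynomial.coeff (Finsupp.cons i k) f * y ^ i := by
  rw [substFirst, Polynomial.eval_eq_sum_range, MvPolynomial.coeff_sum]
  refine Finset.sum_congr rfl fun i _ => ?_
  rw [← MvPolynomial.C_pow, mul_comm, MvPolynomial.coeff_C_mul,
    MvPolynomial.finSuccEquiv_coeff_coeff, mul_comm]

lemma exists_cons_mem_support_of_mem_support_substFirst {y : R}
    {f : MvPolynomial (Fin (n + 1)) R} {k : Fin n →₀ ℕ} (hk : k ∈ (substFirst y f).support) :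
    ∃ i, Finsupp.cons i k ∈ f.support := by
  rw [MvPolynomial.mem_support_iff, coeff_substFirst] at hk
  obtain ⟨i, -, hi⟩ := Finset.exists_ne_zero_of_sum_ne_zero hk
  exact ⟨i, MvPolynomial.mem_support_iff.mpr (left_ne_zero_of_mul hi)⟩

lemma degreeOf_substFirst_le (y : R) (f : MvPolynomial (Fin (n + 1)) R) (i : Fin n) :
    (substFirst y f).degreeOf i ≤ f.degreeOf i.succ := by
  refine MvPolynomial.degreeOf_le_iff.mpr fun k hk => ?_
  obtain ⟨l, hl⟩ := exists_cons_mem_support_of_mem_support_substFirst hk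
  simpa using MvPolynomial.monomial_le_degreeOf i.succ hl

lemma degree_cons (r : ℕ) (k : Fin n →₀ ℕ) :
    (Finsupp.cons r k).degree = r + k.degree := by
  simp [Finsupp.degree_eq_sum, Fin.sum_univ_succ]

lemma totalDegree_substFirst_le (y : R) (f : MvPolynomial (Fin (n + 1)) R) :
    (substFirst y f).totalDegree ≤ f.totalDegree := by
  refine Finset.sup_le fun k hk => ?_
  obtain ⟨l, hl⟩ := exists_cons_mem_support_of_mem_support_substFirst hk
  have hcons : (Finsupp.cons l k).degree ≤ f.totalDegree := MvPolynomial.le_totalDegree hl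
  rw [degree_cons] at hcons
  exact (Nat.le_add_left _ _).trans hcons

lemma coeff_substFirst_of_totalDegree_le (y : R) {f : MvPolynomial (Fin (n + 1)) R}
    {k : Fin n →₀ ℕ} (hk : f.totalDegree ≤ k.degree) :
    MvPolynomial.coeff k (substFirst y f) = MvPolynomial.coeff (Finsupp.cons 0 k) f := by
  rw [coeff_substFirst, Finset.sum_eq_single 0 _ (by simp), pow_zero, mul_one]
  intro i _ hi
  have hcons : f.totalDegree < (Finsupp.cons i k).degree := by rw [degree_cons]; omega
  rw [MvPolynomial.coeff_eq_zero_of_totalDegree_lt hcons, zero_mul]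

end SubstFirst

/-- `a` is the coefficient of a monomial of degree exactly `D` in `f`, while `f` has total degree
at most `D` and degree at most `m` in each variable. Tracking one top-degree coefficient, rather
than the largest one, is what the induction on the number of variables preserves. -/
structure HasTopCoeff {R σ : Type*} [CommSemiring R] (m D : ℕ) (a : R) (f : MvPolynomial σ R) :
    Prop where
  degreeOf_le : ∀ i, f.degreeOf i ≤ m
  totalDegree_le : f.totalDegree ≤ D
  exists_coeff_eq : ∃ j : σ →₀ ℕ, j.degree = D ∧ MvPolynomial.coeff j f = a

namespace HasTopCoeff

section Algebra

variable {R : Type*} [CommSemiring R] {n m D : ℕ} {a : R}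

lemma C_mul {σ : Type*} {f : MvPolynomial σ R} (hf : HasTopCoeff m D a f) (t : R) :
    HasTopCoeff m D (t * a) (MvPolynomial.C t * f) := by
  obtain ⟨j, hj, hja⟩ := hf.exists_coeff_eq
  refine ⟨fun i => (MvPolynomial.degreeOf_C_mul_le f i t).trans (hf.degreeOf_le i), ?_,
    j, hj, by rw [MvPolynomial.coeff_C_mul, hja]⟩
  rw [← MvPolynomial.smul_eq_C_mul]
  exact (MvPolynomial.totalDegree_smul_le t f).trans hf.totalDegree_le

lemma eq_C {σ : Type*} {f : MvPolynomial σ R} (hf : HasTopCoeff m 0 a f) :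
    f = MvPolynomial.C a := by
  obtain ⟨j, hj, rfl⟩ := hf.exists_coeff_eq
  rw [(Finsupp.degree_eq_zero_iff j).mp hj]
  exact MvPolynomial.totalDegree_eq_zero_iff_eq_C.mp (Nat.le_zero.mp hf.totalDegree_le)

lemma eq_zero_of_isEmpty {σ : Type*} [IsEmpty σ] {f : MvPolynomial σ R}
    (hf : HasTopCoeff m D a f) : D = 0 := by
  obtain ⟨j, rfl, -⟩ := hf.exists_coeff_eq
  rw [Subsingleton.elim j 0, map_zero]

lemma natDegree_finSuccEquiv_le {f : MvPolynomial (Fin (n + 1)) R} (hf : HasTopCoeff m D a f) :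
    (MvPolynomial.finSuccEquiv R n f).natDegree ≤ min m D := by
  rw [MvPolynomial.natDegree_finSuccEquiv]
  exact le_min (hf.degreeOf_le 0)
    ((MvPolynomial.degreeOf_le_totalDegree f 0).trans hf.totalDegree_le)

lemma substFirst_or_coeff_finSuccEquiv {f : MvPolynomial (Fin (n + 1)) R}
    (hf : HasTopCoeff m D a f) :
    (∀ y, HasTopCoeff m D a (substFirst y f)) ∨
      ∃ r, r ≠ 0 ∧ r ≤ D ∧ HasTopCoeff m (D - r) a ((MvPolynomial.finSuccEquiv R n f).coeff r) := by
  obtain ⟨j, hj, hja⟩ := hf.exists_coeff_eq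
  have hcons : Finsupp.cons (j 0) j.tail = j := Finsupp.cons_tail j
  have hdegree : j 0 + j.tail.degree = D := by rw [← degree_cons, hcons, hj]
  by_cases hj0 : j 0 = 0
  · have htail : j.tail.degree = D := by omega
    refine Or.inl fun y => ⟨fun i => (degreeOf_substFirst_le y f i).trans (hf.degreeOf_le _),
      (totalDegree_substFirst_le y f).trans hf.totalDegree_le, j.tail, htail, ?_⟩
    rw [coeff_substFirst_of_totalDegree_le y (hf.totalDegree_le.trans htail.ge), ← hj0, hcons, hja]
  · refine Or.inr ⟨j 0, hj0, by omega,
      fun i => (MvPolynomial.degreeOf_coeff_finSuccEquiv f i _).trans (hf.degreeOf_le _),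
      Finset.sup_le fun k hk => ?_, j.tail, by omega, ?_⟩
    · have hk' : (Finsupp.cons (j 0) k).degree ≤ f.totalDegree :=
        MvPolynomial.le_totalDegree (MvPolynomial.mem_support_coeff_finSuccEquiv.mp hk)
      rw [degree_cons] at hk'
      exact Nat.le_sub_of_add_le' (hk'.trans hf.totalDegree_le)
    · rw [MvPolynomial.finSuccEquiv_coeff_coeff, hcons, hja]

end Algebra

end HasTopCoeff

lemma exists_hasTopCoeff_abs_eq_topCoeff {n m : ℕ} {f : MvPolynomial (Fin n) ℝ} (hf : f ≠ 0)
    (hm : ∀ i, f.degreeOf i ≤ m) :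
    ∃ a, a ≠ 0 ∧ |a| = topCoeff f ∧ HasTopCoeff m f.totalDegree a f := by
  set S : Set ℝ := {c : ℝ | ∃ j : Fin n →₀ ℕ, (j.sum fun _ e => e) = f.totalDegree ∧
    c = |MvPolynomial.coeff j f|}
  have hfin : S.Finite := by
    refine (((f.support.finite_toSet).image fun j => |MvPolynomial.coeff j f|).union
      (Set.finite_singleton 0)).subset ?_
    rintro c ⟨j, -, rfl⟩
    by_cases h : MvPolynomial.coeff j f = 0
    · exact Or.inr (abs_eq_zero.mpr h)
    · exact Or.inl ⟨j, MvPolynomial.mem_support_iff.mpr h, rfl⟩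
  obtain ⟨k, hk, hkd⟩ := Finset.exists_mem_eq_sup f.support
    (MvPolynomial.support_nonempty.mpr hf) fun s => s.sum fun _ e => e
  have hkS : |MvPolynomial.coeff k f| ∈ S := ⟨k, hkd.symm, rfl⟩
  obtain ⟨j, hj, hjtop⟩ := Set.Nonempty.csSup_mem ⟨_, hkS⟩ hfin
  have hpos : 0 < topCoeff f :=
    (abs_pos.mpr (MvPolynomial.mem_support_iff.mp hk)).trans_le (le_csSup hfin.bddAbove hkS)
  exact ⟨MvPolynomial.coeff j f, abs_pos.mp (hpos.trans_eq hjtop), hjtop.symm, hm, le_rfl,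
    j, hj, rfl⟩

/-! ### Integrating out one variable at a time -/

section IteratedIntegral

variable {E : Type*} [NormedAddCommGroup E] {μ : Measure ℝ} [IsProbabilityMeasure μ] {n : ℕ}
  {Φ : ℝ → E}

lemma integrable_comp_eval_cons (hΦ : Continuous Φ) {B : ℝ} (hB : ∀ v, ‖Φ v‖ ≤ B)
    (f : MvPolynomial (Fin (n + 1)) ℝ) :
    Integrable (fun z : ℝ × (Fin n → ℝ) => Φ (MvPolynomial.eval (Fin.cons z.1 z.2) f))
      (μ.prod (Measure.pi fun _ => μ)) := by
  have hcons : Continuous fun z : ℝ × (Fin n → ℝ) => (Fin.cons z.1 z.2 : Fin (n + 1) → ℝ) :=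
    Continuous.finCons (A := fun _ => ℝ) continuous_fst continuous_snd
  exact Integrable.of_bound
    (hΦ.comp ((MvPolynomial.continuous_eval f).comp hcons)).aestronglyMeasurable B
    (ae_of_all _ fun _ => hB _)

variable [NormedSpace ℝ E]

lemma integral_pi_succ (F : (Fin (n + 1) → ℝ) → E) :
    ∫ x, F x ∂(Measure.pi fun _ => μ) =
      ∫ z : ℝ × (Fin n → ℝ), F (Fin.cons z.1 z.2) ∂(μ.prod (Measure.pi fun _ => μ)) := by
  rw [← ((measurePreserving_piFinSuccAbove (fun _ : Fin (n + 1) => μ) 0).symm).integral_comp']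
  simp_rw [MeasurableEquiv.piFinSuccAbove_symm_apply, Fin.insertNthEquiv, Equiv.coe_fn_mk,
    Fin.insertNth_zero]
  rfl

lemma norm_integral_comp_eval_le_of_substFirst (hΦ : Continuous Φ) {B : ℝ} (hB : ∀ v, ‖Φ v‖ ≤ B)
    {f : MvPolynomial (Fin (n + 1)) ℝ} {M : ℝ}
    (h : ∀ y, ‖∫ s, Φ (MvPolynomial.eval s (substFirst y f)) ∂(Measure.pi fun _ => μ)‖ ≤ M) :
    ‖∫ x, Φ (MvPolynomial.eval x f) ∂(Measure.pi fun _ => μ)‖ ≤ M := by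
  rw [integral_pi_succ, integral_prod _ (integrable_comp_eval_cons hΦ hB f)]
  simp_rw [eval_substFirst] at h
  simpa using norm_integral_le_of_norm_le_const (μ := μ) (ae_of_all _ h)

lemma norm_integral_comp_eval_le_of_finSuccEquiv (hΦ : Continuous Φ) {B : ℝ}
    (hB : ∀ v, ‖Φ v‖ ≤ B) {f : MvPolynomial (Fin (n + 1)) ℝ} {G : (Fin n → ℝ) → ℝ}
    (hG : Integrable G (Measure.pi fun _ => μ))
    (h : ∀ s, ‖∫ y, Φ (((MvPolynomial.finSuccEquiv ℝ n f).map (MvPolynomial.eval s)).eval y) ∂μ‖ ≤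
      G s) :
    ‖∫ x, Φ (MvPolynomial.eval x f) ∂(Measure.pi fun _ => μ)‖ ≤
      ∫ s, G s ∂(Measure.pi fun _ => μ) := by
  rw [integral_pi_succ, integral_prod_symm _ (integrable_comp_eval_cons hΦ hB f)]
  simp_rw [← MvPolynomial.eval_eq_eval_mv_eval'] at h
  exact norm_integral_le_of_norm_le hG (ae_of_all _ h)

end IteratedIntegral

namespace HasTopCoeff

section Integral

variable {μ : Measure ℝ} [IsProbabilityMeasure μ] {m D : ℕ} {a : ℝ}

-- Variables absent from the distinguished monomial are frozen, which preserves its coefficient;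
-- the first variable present in it is integrated out by the one-variable bound.
lemma norm_integral_comp_eval_le {E : Type*} [NormedAddCommGroup E] [NormedSpace ℝ E]
    (hD : D ≠ 0) {Φ : ℝ → E} (hΦ : Continuous Φ) (hΦ1 : ∀ v, ‖Φ v‖ ≤ 1) {α β b M : ℝ}
    (hα : 0 ≤ α) (hβ : 0 ≤ β)
    (hone : ∀ (p : ℝ[X]) (r : ℕ), p.natDegree ≤ min m D → r ≠ 0 →
      ‖∫ x, Φ (p.eval x) ∂μ‖ ≤ α * (decay β |p.coeff r| + b))
    (hlower : ∀ (n r : ℕ) (g : MvPolynomial (Fin n) ℝ), r ≠ 0 → r ≤ D →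
      HasTopCoeff m (D - r) a g →
        ∫ x, decay β |MvPolynomial.eval x g| ∂(Measure.pi fun _ => μ) ≤ M)
    {n : ℕ} {f : MvPolynomial (Fin n) ℝ} (hf : HasTopCoeff m D a f) :
    ‖∫ x, Φ (MvPolynomial.eval x f) ∂(Measure.pi fun _ => μ)‖ ≤ α * (M + b) := by
  induction n with
  | zero => exact absurd hf.eq_zero_of_isEmpty hD
  | succ n ih =>
    rcases hf.substFirst_or_coeff_finSuccEquiv with hsubst | ⟨r, hr, hrD, hcoeff⟩
    · exact norm_integral_comp_eval_le_of_substFirst hΦ hΦ1 fun y => ih (hsubst y)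
    · set g := (MvPolynomial.finSuccEquiv ℝ n f).coeff r
      have hdecay : Integrable (fun s => decay β |MvPolynomial.eval s g|)
          (Measure.pi fun _ => μ) :=
        integrable_decay_comp hβ (MvPolynomial.continuous_eval g).abs.aemeasurable
      calc ‖∫ x, Φ (MvPolynomial.eval x f) ∂(Measure.pi fun _ => μ)‖
          ≤ ∫ s, α * (decay β |MvPolynomial.eval s g| + b) ∂(Measure.pi fun _ => μ) := by
            refine norm_integral_comp_eval_le_of_finSuccEquiv hΦ hΦ1
              ((hdecay.add (integrable_const b)).const_mul α) fun s => ?_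
            simpa only [Polynomial.coeff_map] using
              hone _ r (Polynomial.natDegree_map_le.trans hf.natDegree_finSuccEquiv_le) hr
        _ = α * (∫ s, decay β |MvPolynomial.eval s g| ∂(Measure.pi fun _ => μ) + b) := by
            rw [integral_const_mul, integral_add hdecay (integrable_const b), integral_const,
              probReal_univ, one_smul]
        _ ≤ α * (M + b) := by
            gcongr
            exact hlower n r g hr hrD hcoeff

variable {K : ℝ} {n : ℕ} {f : MvPolynomial (Fin n) ℝ}

-- In degree less than `m` one may take `e = 0`, that is, lose no logarithm.
lemma integral_decay_abs_eval_le_of_lower_degree (hμ : HasSmallBallBound μ K) (hm : m ≠ 0)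
    (hD : D ≠ 0) (ha : 1 ≤ |a|) {e : ℕ} (he : min m D < m + e) {M : ℝ}
    (haM : |a| ^ (-(m : ℝ)⁻¹) ≤ M)
    (hlower : ∀ (n r : ℕ) (g : MvPolynomial (Fin n) ℝ), r ≠ 0 → r ≤ D →
      HasTopCoeff m (D - r) a g →
        ∫ x, decay (m : ℝ)⁻¹ |MvPolynomial.eval x g| ∂(Measure.pi fun _ => μ) ≤ M)
    (hf : HasTopCoeff m D a f) :
    ∫ x, decay (m : ℝ)⁻¹ |MvPolynomial.eval x f| ∂(Measure.pi fun _ => μ) ≤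
      4 * K * m ^ 2 * (1 + Real.log |a|) ^ e * M := by
  have hK := hμ.one_le
  have hlog := Real.log_nonneg ha
  have hβ : (0 : ℝ) ≤ (m : ℝ)⁻¹ := by positivity
  calc ∫ x, decay (m : ℝ)⁻¹ |MvPolynomial.eval x f| ∂(Measure.pi fun _ => μ)
      ≤ 2 * K * m ^ 2 * (1 + Real.log |a|) ^ e * (M + |a| ^ (-(m : ℝ)⁻¹)) := by
        refine (le_abs_self _).trans (norm_integral_comp_eval_le hD
          (Φ := fun v => decay (m : ℝ)⁻¹ |v|) ((continuous_decay _).comp continuous_abs)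
          (fun v => ?_) (by positivity) hβ (fun p r hp hr => ?_) hlower hf)
        · rw [Real.norm_of_nonneg (decay_nonneg _ _)]
          exact decay_le_one hβ _
        · rw [Real.norm_of_nonneg (integral_nonneg fun _ => decay_nonneg _ _)]
          exact hμ.integral_decay_abs_eval_le hm (hp.trans (min_le_left _ _)) (hp.trans_lt he) hr ha
    _ ≤ 2 * K * m ^ 2 * (1 + Real.log |a|) ^ e * (M + M) := by gcongr
    _ = 4 * K * m ^ 2 * (1 + Real.log |a|) ^ e * M := by ring

lemma integral_decay_abs_eval_le (hμ : HasSmallBallBound μ K) (hm : m ≠ 0) (ha : 1 ≤ |a|)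
    (hf : HasTopCoeff m D a f) :
    ∫ x, decay (m : ℝ)⁻¹ |MvPolynomial.eval x f| ∂(Measure.pi fun _ => μ) ≤
      (4 * K * m ^ 2) ^ D * (1 + Real.log |a|) ^ (D + 1 - m) * |a| ^ (-(m : ℝ)⁻¹) := by
  have hL : 1 ≤ 1 + Real.log |a| := le_add_of_nonneg_right (Real.log_nonneg ha)
  have hQ : 1 ≤ 4 * K * (m : ℝ) ^ 2 := one_le_mul_of_one_le_of_one_le
    (by linarith [hμ.one_le]) (one_le_pow₀ (by exact_mod_cast Nat.one_le_iff_ne_zero.mpr hm))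
  induction D using Nat.strong_induction_on generalizing n with
  | _ D ih =>
    rcases D with - | D
    · simp [hf.eq_C, decay_of_one_le ha, Nat.sub_eq_zero_of_le (Nat.one_le_iff_ne_zero.mpr hm)]
    obtain ⟨e, he, hme⟩ : ∃ e, D + 1 + 1 - m = D + 1 - m + e ∧ min m (D + 1) < m + e :=
      ⟨(D + 1 + 1 - m) - (D + 1 - m), by omega, by omega⟩
    calc ∫ x, decay (m : ℝ)⁻¹ |MvPolynomial.eval x f| ∂(Measure.pi fun _ => μ)
        ≤ 4 * K * m ^ 2 * (1 + Real.log |a|) ^ e *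
            ((4 * K * m ^ 2) ^ D * (1 + Real.log |a|) ^ (D + 1 - m) * |a| ^ (-(m : ℝ)⁻¹)) := by
          refine integral_decay_abs_eval_le_of_lower_degree hμ hm D.succ_ne_zero ha hme
            (le_mul_of_one_le_left (by positivity)
              (one_le_mul_of_one_le_of_one_le (one_le_pow₀ hQ) (one_le_pow₀ hL)))
            (fun k r g hr hrD hg => (ih (D + 1 - r) (by omega) hg).trans ?_) hf
          gcongr <;> first | assumption | omega
      _ = _ := by
          rw [he]
          ring

end Integral

end HasTopCoeff

lemma HasTameDensity.exists_norm_integral_cexp_eval_le {μ : Measure ℝ} [IsProbabilityMeasure μ]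
    {φ : ℝ → ℝ} (hμ : HasTameDensity μ φ) {m : ℕ} (hm : m ≠ 0) (d : ℕ) :
    ∃ M : ℝ, 1 ≤ M ∧ ∀ (n D : ℕ) (f : MvPolynomial (Fin n) ℝ) (a : ℝ), D ≠ 0 → D ≤ d → 1 ≤ |a| →
      HasTopCoeff m D a f →
        ‖∫ x, Complex.exp (Complex.I * (MvPolynomial.eval x f : ℝ)) ∂(Measure.pi fun _ => μ)‖ ≤
          M * (1 + Real.log |a|) ^ (d - m) * |a| ^ (-(m : ℝ)⁻¹) := by
  obtain ⟨K, hK⟩ := hμ.exists_hasSmallBallBound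
  obtain ⟨M, hM, hone⟩ := hμ.exists_norm_integral_cexp_le_decay hm
  have hQ : 1 ≤ 4 * K * (m : ℝ) ^ 2 := one_le_mul_of_one_le_of_one_le
    (by linarith [hK.one_le]) (one_le_pow₀ (by exact_mod_cast Nat.one_le_iff_ne_zero.mpr hm))
  refine ⟨M * (4 * K * m ^ 2) ^ d, one_le_mul_of_one_le_of_one_le hM (one_le_pow₀ hQ),
    fun n D f a hD hDd ha hf => ?_⟩
  have hL : 1 ≤ 1 + Real.log |a| := le_add_of_nonneg_right (Real.log_nonneg ha)
  calc ‖∫ x, Complex.exp (Complex.I * (MvPolynomial.eval x f : ℝ)) ∂(Measure.pi fun _ => μ)‖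
      ≤ M * ((4 * K * m ^ 2) ^ d * (1 + Real.log |a|) ^ (d - m) * |a| ^ (-(m : ℝ)⁻¹) + 0) := by
        refine HasTopCoeff.norm_integral_comp_eval_le hD
          (Φ := fun v => Complex.exp (Complex.I * (v : ℂ))) (by fun_prop)
          (fun v => (norm_cexp_I_mul_ofReal v).le) (by positivity)
          (by positivity : (0 : ℝ) ≤ (m : ℝ)⁻¹) (fun p r hp hr => ?_) (fun k r g hr hrD hg => ?_) hf
        · rw [add_zero]
          exact hone p r (hp.trans (min_le_left _ _)) hr
        · refine (hg.integral_decay_abs_eval_le hK hm ha).trans ?_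
          gcongr <;> first | assumption | omega
    _ = M * (4 * K * m ^ 2) ^ d * (1 + Real.log |a|) ^ (d - m) * |a| ^ (-(m : ℝ)⁻¹) := by ring

/-! ### Gaussian laws -/

section Gaussian

variable {v : NNReal}

lemma gaussianPDFReal_eq_mul_exp_neg_mul_sq (a : ℝ) (v : NNReal) (x : ℝ) :
    gaussianPDFReal a v x =
      (√(2 * Real.pi * v))⁻¹ * Real.exp (-(2 * v : ℝ)⁻¹ * (x - a) ^ 2) := by
  rw [gaussianPDFReal_def]
  ring_nf

lemma hasDerivAt_gaussianPDFReal (a : ℝ) (hv : v ≠ 0) (x : ℝ) :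
    HasDerivAt (gaussianPDFReal a v) (-(x - a) / v * gaussianPDFReal a v x) x := by
  have hv' : (v : ℝ) ≠ 0 := NNReal.coe_ne_zero.mpr hv
  have hexponent :
      HasDerivAt (fun x : ℝ => -(2 * v : ℝ)⁻¹ * (x - a) ^ 2) (-(x - a) / v) x := by
    refine ((((hasDerivAt_id x).sub_const a).pow 2).const_mul _).congr_deriv ?_
    simp only [id_eq, Nat.cast_ofNat, Nat.add_one_sub_one, pow_one]
    field_simp
  rw [funext (gaussianPDFReal_eq_mul_exp_neg_mul_sq a v)]
  exact (hexponent.exp.const_mul _).congr_deriv (by ring)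

lemma integrable_deriv_gaussianPDFReal (a : ℝ) (hv : v ≠ 0) :
    Integrable (deriv (gaussianPDFReal a v)) := by
  have hb : 0 < (2 * v : ℝ)⁻¹ := by positivity
  refine (((integrable_mul_exp_neg_mul_sq hb).comp_sub_right a).const_mul
    (-(v : ℝ)⁻¹ * (√(2 * Real.pi * v))⁻¹)).congr (ae_of_all _ fun x => ?_)
  rw [(hasDerivAt_gaussianPDFReal a hv x).deriv, gaussianPDFReal_eq_mul_exp_neg_mul_sq]
  ring

lemma exists_gaussianPDFReal_mul_one_add_abs_le (a : ℝ) (hv : v ≠ 0) :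
    ∃ K, ∀ x, gaussianPDFReal a v x * (1 + |x|) ≤ K := by
  set b := (2 * v : ℝ)⁻¹
  have hb : 0 < b := by positivity
  refine ⟨(√(2 * Real.pi * v))⁻¹ * (2 + |a| + b⁻¹), fun x => ?_⟩
  have hx : |x| ≤ |a| + (1 + (x - a) ^ 2) := by
    have := abs_add_le (x - a) a
    rw [sub_add_cancel] at this
    nlinarith [sq_abs (x - a), sq_nonneg (|x - a| - 1)]
  have hexp : 1 + |x| ≤ (2 + |a| + b⁻¹) * Real.exp (b * (x - a) ^ 2) := by
    calc 1 + |x| ≤ (2 + |a| + b⁻¹) * (b * (x - a) ^ 2 + 1) := by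
          have : 0 ≤ (2 + |a|) * (b * (x - a) ^ 2) + b⁻¹ := by positivity
          linear_combination hx + this - (x - a) ^ 2 * mul_inv_cancel₀ hb.ne'
      _ ≤ (2 + |a| + b⁻¹) * Real.exp (b * (x - a) ^ 2) := by
          gcongr
          exact Real.add_one_le_exp _
  rw [gaussianPDFReal_eq_mul_exp_neg_mul_sq, mul_assoc, neg_mul, Real.exp_neg]
  gcongr
  rwa [inv_mul_le_iff₀ (Real.exp_pos _), mul_comm]

lemma hasTameDensity_gaussianReal (a : ℝ) (hv : v ≠ 0) :
    HasTameDensity (gaussianReal a v) (gaussianPDFReal a v) where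
  eq_withDensity := gaussianReal_of_var_ne_zero a hv
  nonneg := gaussianPDFReal_nonneg a v
  differentiable x := (hasDerivAt_gaussianPDFReal a hv x).differentiableAt
  integrable_deriv := integrable_deriv_gaussianPDFReal a hv
  exists_mul_one_add_abs_le := exists_gaussianPDFReal_mul_one_add_abs_le a hv

end Gaussian

/-! ### The characteristic function -/

theorem characteristic_function_bound_general {μ : Measure ℝ} [IsProbabilityMeasure μ] {φ : ℝ → ℝ}
    (hμ : HasTameDensity μ φ) (m d : ℕ) (hm : 1 ≤ m) :
    ∃ C : ℝ, 0 < C ∧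
      ∀ (n : ℕ) (f : MvPolynomial (Fin n) ℝ),
        f.totalDegree ≠ 0 →
        (∀ i : Fin n, f.degreeOf i ≤ m) →
        f.totalDegree ≤ d →
        ∀ t : ℝ, t ≠ 0 →
          ‖∫ x, Complex.exp (Complex.I * (t * MvPolynomial.eval x f))
              ∂(Measure.pi fun _ : Fin n => μ)‖ ≤
            C * |topCoeff f * t| ^ (-(1 : ℝ) / m) *
              ((|Real.log (|topCoeff f * t|)|) ^ (d - m) + 1) := by
  obtain ⟨M, hM, hbound⟩ := hμ.exists_norm_integral_cexp_eval_le (Nat.one_le_iff_ne_zero.mp hm) d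
  have hC : 1 ≤ M * 2 ^ (d - m - 1) := one_le_mul_of_one_le_of_one_le hM (one_le_pow₀ one_le_two)
  refine ⟨M * 2 ^ (d - m - 1), by positivity, fun n f hf hfm hfd t ht => ?_⟩
  have hf0 : f ≠ 0 := fun h => hf (by rw [h, MvPolynomial.totalDegree_zero])
  obtain ⟨a, ha0, hatop, ha⟩ := exists_hasTopCoeff_abs_eq_topCoeff hf0 hfm
  have hta : |topCoeff f * t| = |t * a| := by rw [← hatop, abs_mul, abs_abs, mul_comm, abs_mul]
  have heval : ∀ x, (t * MvPolynomial.eval x f : ℂ) =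
      (MvPolynomial.eval x (MvPolynomial.C t * f) : ℝ) := by simp
  simp_rw [hta, heval, neg_div, one_div]
  rcases le_total |t * a| 1 with hle | hge
  · have hone : 1 ≤ |t * a| ^ (-(m : ℝ)⁻¹) := Real.one_le_rpow_of_pos_of_le_one_of_nonpos
      (abs_pos.mpr (mul_ne_zero ht ha0)) hle (neg_nonpos.mpr (by positivity))
    refine (norm_integral_le_of_norm_le_const
      (ae_of_all _ fun x => (norm_cexp_I_mul_ofReal _).le)).trans ?_
    rw [probReal_univ, mul_one]
    exact one_le_mul_of_one_le_of_one_le (one_le_mul_of_one_le_of_one_le hC hone)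
      (le_add_of_nonneg_left (by positivity))
  · refine (hbound n f.totalDegree _ _ hf hfd hge (ha.C_mul t)).trans ?_
    have hlog := Real.log_nonneg hge
    have hpow := add_pow_le hlog zero_le_one (d - m)
    rw [one_pow] at hpow
    calc M * (1 + Real.log |t * a|) ^ (d - m) * |t * a| ^ (-(m : ℝ)⁻¹)
        ≤ M * (2 ^ (d - m - 1) * (Real.log |t * a| ^ (d - m) + 1)) * |t * a| ^ (-(m : ℝ)⁻¹) := by
          rw [add_comm 1]
          gcongr
      _ = _ := by
          rw [abs_of_nonneg hlog]
          ring

/-- Corollary (bound on the characteristic function): for fixed `m ≤ d` there is `C(m,d) > 0`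
such that for every non-constant polynomial `f` on `ℝⁿ` of total degree at most `d` in which
every variable enters to a power at most `m`, and every `t ≠ 0`,
`|𝔼 exp(i t f(X))| ≤ C(m,d) |a[f] t|^{-1/m} (|ln |a[f] t||^{d-m} + 1)`,
where `X` is a standard Gaussian vector in `ℝⁿ`. -/
theorem characteristic_function_bound (m d : ℕ) (hm : 1 ≤ m) (hmd : m ≤ d) :
    ∃ C : ℝ, 0 < C ∧
      ∀ (n : ℕ) (f : MvPolynomial (Fin n) ℝ),
        f.totalDegree ≠ 0 →
        (∀ i : Fin n, f.degreeOf i ≤ m) →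
        f.totalDegree ≤ d →
        ∀ t : ℝ, t ≠ 0 →
          ‖∫ x, Complex.exp (Complex.I * (t * MvPolynomial.eval x f)) ∂(stdGaussian n)‖ ≤
            C * |topCoeff f * t| ^ (-(1 : ℝ) / m) *
              ((|Real.log (|topCoeff f * t|)|) ^ (d - m) + 1) := by
  exact characteristic_function_bound_general (hasTameDensity_gaussianReal 0 one_ne_zero) m d hm
end

section
/- Let m, d ∈ ℕ with d ≥ m and let a > 0. Let f and g be two non-constant polynomials on ℝⁿ in which every variable appears to a power at most m, with total degrees d[f] ≤ d and d[g] ≤ d and top-coefficient sizes a[f] ≥ a and a[g] ≥ a, and let X be a standard Gaussian random vector in ℝⁿ. Then there exists a constant C(m,d,a) > 0 depending only on m, d, a such that d_TV(f(X), g(X)) ≤ C(m,d,a) [d_KR(f(X), g(X))]^{1/(m+1)} [ |ln d_KR(f(X), g(X))|^{(d−m)m/(m+1)} + 1 ]. -/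
/-!
The law of a polynomial `f(X)` has fractional smoothness: for `|H'| ≤ 1` and `|H| ≤ ε ≤ 1`, the
expectation `𝔼 H'(f(X))` is of order `ε ^ (1 / m) * (1 + |log ε|) ^ (d - m)`. Averaging a test
function over intervals of length `ε` therefore changes its expectation by no more than this, and
it produces a function that is `2 / ε`-Lipschitz. Hence `d_TV` is at most of order
`ε ^ (1 / m) * (1 + |log ε|) ^ (d - m) + d_KR / ε`, and it remains to optimise `ε`.

For a polynomial `p` of one variable, write `1 = p'² / (p'² + t²) + t² / (p'² + t²)`. In the first
term `H'(p) p' = (H ∘ p)'` is integrated by parts. The derivative of `p' / (p'² + t²)` is bounded by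
`|p''| / (p'² + t²)`, which is `1 / t` times the imaginary part of the logarithmic derivative of
`p' - it`, hence dominated by a sum of Cauchy kernels with total mass of order `1 / t`. The second
term is a small ball probability of `p'`, estimated through the distances to its complex roots.

For several variables, integrate first over a variable occurring in a large top monomial. If it
occurs there to the power `k`, the one-dimensional bound is of order `min(1, ε / |A|) ^ (1 / m)`,
where `A` is the coefficient of its `k`-th power, which is again a polynomial with a large top
coefficient but of degree `d - k`. By induction `|A|` is rarely small, and integrating the
distribution function of `|A|` gives the bound. Once the degree of `A` is at least `m`, the exponent
`1 / m` is critical in this integral, which accounts for one logarithm at each further step.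
-/

open MeasureTheory ProbabilityTheory

/-- Total variation distance between (the distributions of) two real random variables. -/
noncomputable def dTV (μ ν : Measure ℝ) : ℝ :=
  sSup {r : ℝ | ∃ φ : ℝ → ℝ, ContDiff ℝ (⊤ : ℕ∞) φ ∧ HasCompactSupport φ ∧
    (∀ x, |φ x| ≤ 1) ∧ r = (∫ s, φ s ∂μ) - ∫ s, φ s ∂ν}

/-- Kantorovich–Rubinstein (Fortet–Mourier) distance between (the distributions of) two real
random variables. -/
noncomputable def dKR (μ ν : Measure ℝ) : ℝ :=
  sSup {r : ℝ | ∃ φ : ℝ → ℝ, ContDiff ℝ (⊤ : ℕ∞) φ ∧ HasCompactSupport φ ∧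
    (∀ x, |φ x| ≤ 1) ∧ (∀ x, |deriv φ x| ≤ 1) ∧ r = (∫ s, φ s ∂μ) - ∫ s, φ s ∂ν}

namespace GaussianPolynomial

/-! ### Distances and the modulus of smoothness of a law -/

/-- The fractional smoothness modulus of a law `μ` on the line: the largest expectation of `H'`
over `C¹` functions with `|H'| ≤ 1` and `|H| ≤ ε`. A bound of order `ε ^ α` expresses that `μ` has
smoothness `α` in the Besov–Nikolskii sense. -/
noncomputable def smoothnessModulus (μ : Measure ℝ) (ε : ℝ) : ℝ :=
  sSup {r : ℝ | ∃ H : ℝ → ℝ, ContDiff ℝ 1 H ∧ (∀ x, |H x| ≤ ε) ∧ (∀ x, |deriv H x| ≤ 1) ∧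
    r = ∫ s, deriv H s ∂μ}

/-- A smooth substitute `t² / (y² + t²)` for the indicator of `|y| ≤ t`. -/
noncomputable def softIndicator (t y : ℝ) : ℝ := t ^ 2 / (y ^ 2 + t ^ 2)

section SoftIndicator

variable {t y : ℝ}

lemma softIndicator_nonneg : 0 ≤ softIndicator t y := by unfold softIndicator; positivity

lemma softIndicator_le_one : softIndicator t y ≤ 1 :=
  div_le_one_of_le₀ (le_add_of_nonneg_left (sq_nonneg y)) (by positivity)

lemma half_le_softIndicator (ht : 0 < t) (hy : |y| ≤ t) : 1 / 2 ≤ softIndicator t y := by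
  rw [softIndicator, div_le_div_iff₀ two_pos (by positivity)]
  linarith [(sq_le_sq₀ (abs_nonneg y) ht.le).2 hy, sq_abs y]

lemma softIndicator_le_of_abs_le {z : ℝ} (ht : 0 < t) (h : |y| ≤ |z|) :
    softIndicator t z ≤ softIndicator t y := by
  have := sq_le_sq.2 h
  unfold softIndicator
  gcongr

lemma softIndicator_mul_mul {c : ℝ} (hc : c ≠ 0) :
    softIndicator (c * t) (c * y) = softIndicator t y := by
  rw [softIndicator, mul_pow, mul_pow, ← mul_add, mul_div_mul_left _ _ (pow_ne_zero 2 hc)]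
  rfl

lemma continuous_softIndicator (ht : 0 < t) : Continuous (softIndicator t) :=
  continuous_const.div (by fun_prop) fun y => by positivity

lemma integrable_softIndicator_comp {Ω : Type*} {_ : MeasurableSpace Ω} {P : Measure Ω}
    [IsFiniteMeasure P] {Y : Ω → ℝ} (hY : Measurable Y) (ht : 0 < t) :
    Integrable (fun ω => softIndicator t (Y ω)) P := by
  refine .of_bound ((continuous_softIndicator ht).measurable.comp hY).aestronglyMeasurable 1
    (ae_of_all _ fun ω => ?_)
  rw [Real.norm_of_nonneg softIndicator_nonneg]
  exact softIndicator_le_one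

end SoftIndicator

section SmoothnessModulus

variable {μ : Measure ℝ} {ε : ℝ}

lemma abs_integral_le_one {Ω : Type*} {_ : MeasurableSpace Ω} {P : Measure Ω}
    [IsProbabilityMeasure P] {φ : Ω → ℝ} (hφ : ∀ ω, |φ ω| ≤ 1) : |∫ ω, φ ω ∂P| ≤ 1 := by
  simpa using norm_integral_le_of_norm_le_const (μ := P) (f := φ) (C := 1) (ae_of_all _ hφ)

lemma smoothnessModulus_le {B : ℝ} (hB : 0 ≤ B)
    (h : ∀ H : ℝ → ℝ, ContDiff ℝ 1 H → (∀ x, |H x| ≤ ε) → (∀ x, |deriv H x| ≤ 1) →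
      ∫ s, deriv H s ∂μ ≤ B) :
    smoothnessModulus μ ε ≤ B := by
  refine Real.sSup_le ?_ hB
  rintro _ ⟨H, hH, hHε, hH', rfl⟩
  exact h H hH hHε hH'

variable [IsProbabilityMeasure μ]

lemma smoothnessModulus_le_one : smoothnessModulus μ ε ≤ 1 :=
  smoothnessModulus_le zero_le_one fun _ _ _ hH' => (abs_le.1 (abs_integral_le_one hH')).2

lemma abs_integral_deriv_le {H : ℝ → ℝ} (hH : ContDiff ℝ 1 H) (hHε : ∀ x, |H x| ≤ ε)
    (hH' : ∀ x, |deriv H x| ≤ 1) : |∫ s, deriv H s ∂μ| ≤ smoothnessModulus μ ε := by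
  have key : ∀ {G : ℝ → ℝ}, ContDiff ℝ 1 G → (∀ x, |G x| ≤ ε) → (∀ x, |deriv G x| ≤ 1) →
      ∫ s, deriv G s ∂μ ≤ smoothnessModulus μ ε := fun {G} hG hGε hG' => by
    refine le_csSup ⟨1, ?_⟩ ⟨G, hG, hGε, hG', rfl⟩
    rintro _ ⟨K, -, -, hK', rfl⟩
    exact (abs_le.1 (abs_integral_le_one hK')).2
  have hneg := key (G := -H) hH.neg (by simpa using hHε) (by simpa [deriv.neg] using hH')
  simp only [deriv.neg, integral_neg] at hneg
  exact abs_le.2 ⟨by linarith, key hH hHε hH'⟩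

lemma smoothnessModulus_nonneg (hε : 0 ≤ ε) : 0 ≤ smoothnessModulus μ ε := by
  simpa using abs_integral_deriv_le (μ := μ) (H := 0) contDiff_const (by simpa using hε) (by simp)

lemma integral_softIndicator_le {t : ℝ} (ht : 0 < t) :
    ∫ s, softIndicator t s ∂μ ≤ 2 * smoothnessModulus μ t := by
  set H : ℝ → ℝ := fun s => t / 2 * Real.arctan (s / t)
  have hder : deriv H = fun s => softIndicator t s / 2 := funext fun s => by
    refine (((Real.hasDerivAt_arctan _).comp s ((hasDerivAt_id s).div_const t)).const_mul
      (t / 2)).deriv.trans ?_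
    rw [softIndicator, id]
    field_simp
    ring
  have hbound : ∀ s, |H s| ≤ t := fun s => by
    have harctan : |Real.arctan (s / t)| ≤ 2 := by
      have := Real.neg_pi_div_two_lt_arctan (s / t)
      have := Real.arctan_lt_pi_div_two (s / t)
      exact abs_le.2 ⟨by linarith [Real.pi_lt_four], by linarith [Real.pi_lt_four]⟩
    rw [abs_mul, abs_of_pos (half_pos ht)]
    nlinarith
  have := (abs_le.1 (abs_integral_deriv_le (μ := μ) (H := H)
    (contDiff_const.mul (Real.contDiff_arctan.comp (contDiff_id.div_const t))) hbound fun s => by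
    rw [hder, abs_of_nonneg (div_nonneg softIndicator_nonneg zero_le_two)]
    linarith [softIndicator_le_one (t := t) (y := s)])).2
  rw [hder, integral_div] at this
  linarith

lemma measureReal_abs_le_le {t : ℝ} (ht : 0 < t) :
    μ.real {s | |s| ≤ t} ≤ 4 * smoothnessModulus μ t := by
  have hmarkov := mul_meas_ge_le_integral_of_nonneg (μ := μ)
    (ae_of_all _ fun s => softIndicator_nonneg (t := t) (y := s))
    (integrable_softIndicator_comp measurable_id ht) (1 / 2)
  have hmono : μ.real {s | |s| ≤ t} ≤ μ.real {s | 1 / 2 ≤ softIndicator t s} :=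
    measureReal_mono fun s hs => half_le_softIndicator ht hs
  have := integral_softIndicator_le (μ := μ) ht
  linarith

end SmoothnessModulus

section SteklovAverage

/-- The Steklov average of `φ`: its mean over the interval of length `ε` to the right of a point. -/
noncomputable def steklovAverage (ε : ℝ) (φ : ℝ → ℝ) (x : ℝ) : ℝ :=
  (∫ s in x..x + ε, φ s) / ε

variable {ε : ℝ} {φ : ℝ → ℝ}

lemma hasDerivAt_steklovAverage (hφ : Continuous φ) (x : ℝ) :
    HasDerivAt (steklovAverage ε φ) ((φ (x + ε) - φ x) / ε) x := by
  have hprim : ∀ y, HasDerivAt (fun x => ∫ s in (0 : ℝ)..x, φ s) (φ y) y := fun y =>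
    (hφ.integral_hasStrictDerivAt 0 y).hasDerivAt
  have hsub : steklovAverage ε φ =
      fun x => ((∫ s in (0 : ℝ)..x + ε, φ s) - ∫ s in (0 : ℝ)..x, φ s) / ε := funext fun y => by
    rw [steklovAverage, intervalIntegral.integral_interval_sub_left (hφ.intervalIntegrable _ _)
      (hφ.intervalIntegrable _ _)]
  rw [hsub]
  exact (((hprim (x + ε)).comp_add_const x ε).sub (hprim x)).div_const ε

lemma contDiff_steklovAverage (hφ : ContDiff ℝ (⊤ : ℕ∞) φ) :
    ContDiff ℝ (⊤ : ℕ∞) (steklovAverage ε φ) := by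
  have hder := hasDerivAt_steklovAverage (ε := ε) hφ.continuous
  refine contDiff_infty_iff_deriv.2 ⟨fun x => (hder x).differentiableAt, ?_⟩
  rw [funext fun x => (hder x).deriv]
  exact ((hφ.comp (contDiff_id.add contDiff_const)).sub hφ).div_const ε

lemma abs_steklovAverage_le {c : ℝ} (hε : 0 < ε) (hφ : ∀ x, |φ x| ≤ c) (x : ℝ) :
    |steklovAverage ε φ x| ≤ c := by
  have := intervalIntegral.norm_integral_le_of_norm_le_const (a := x) (b := x + ε) (f := φ)
    fun s _ => hφ s
  rw [add_sub_cancel_left, abs_of_pos hε] at this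
  rwa [steklovAverage, abs_div, abs_of_pos hε, div_le_iff₀ hε]

lemma abs_deriv_steklovAverage_le {c : ℝ} (hε : 0 < ε) (hc : Continuous φ) (hφ : ∀ x, |φ x| ≤ c)
    (x : ℝ) : |deriv (steklovAverage ε φ) x| ≤ 2 * c / ε := by
  rw [(hasDerivAt_steklovAverage hc x).deriv, abs_div, abs_of_pos hε]
  gcongr
  linarith [abs_sub (φ (x + ε)) (φ x), hφ (x + ε), hφ x]

lemma hasCompactSupport_steklovAverage (hε : 0 ≤ ε) (hφ : HasCompactSupport φ) :
    HasCompactSupport (steklovAverage ε φ) := by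
  obtain ⟨R, hR⟩ := hφ.isCompact.isBounded.subset_closedBall 0
  have hzero : ∀ s ∉ Set.Icc (-R) R, φ s = 0 := fun s hs => by
    by_contra hne
    have := hR (subset_tsupport φ hne)
    rw [Metric.mem_closedBall, dist_zero_right, Real.norm_eq_abs, abs_le] at this
    exact hs this
  refine HasCompactSupport.intro (isCompact_Icc (a := -R - ε) (b := R)) fun x hx => ?_
  rw [steklovAverage, intervalIntegral.integral_zero_ae, zero_div]
  refine ae_of_all _ fun s hs => hzero s fun hsR => hx ?_
  rw [Set.uIoc_of_le (by linarith)] at hs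
  exact ⟨by linarith [hs.2, hsR.1], by linarith [hs.1, hsR.2]⟩

lemma abs_sub_steklovAverage_le (hε : 0 < ε) (hφ : LipschitzWith 1 φ) (x : ℝ) :
    |φ x - steklovAverage ε φ x| ≤ ε := by
  have havg : φ x - steklovAverage ε φ x = (∫ s in x..x + ε, (φ x - φ s)) / ε := by
    rw [intervalIntegral.integral_sub (by simp) (hφ.continuous.intervalIntegrable _ _),
      steklovAverage]
    simp only [intervalIntegral.integral_const, add_sub_cancel_left, smul_eq_mul]
    field_simp
  have := intervalIntegral.norm_integral_le_of_norm_le_const (a := x) (b := x + ε) (C := ε)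
    (f := fun s => φ x - φ s) fun s hs => by
      rw [Set.uIoc_of_le (by linarith)] at hs
      have := hφ.dist_le_mul x s
      rw [NNReal.coe_one, one_mul, Real.dist_eq, Real.dist_eq, abs_sub_comm x s,
        abs_of_nonneg (a := s - x) (by linarith [hs.1])] at this
      rw [Real.norm_eq_abs]
      linarith [hs.2]
  rw [add_sub_cancel_left, abs_of_pos hε] at this
  rwa [havg, abs_div, abs_of_pos hε, div_le_iff₀ hε]

-- With `Φ' = φ`, the function `Φ - steklovAverage ε Φ` has derivative `φ - steklovAverage ε φ`.
lemma exists_contDiff_deriv_eq_sub_steklovAverage (hε : 0 < ε) (hc : Continuous φ)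
    (hφ : ∀ x, |φ x| ≤ 1) :
    ∃ H : ℝ → ℝ, ContDiff ℝ 1 H ∧ (∀ x, |H x| ≤ ε) ∧
      deriv H = fun x => φ x - steklovAverage ε φ x := by
  set Φ : ℝ → ℝ := fun x => ∫ s in (0 : ℝ)..x, φ s
  have hΦ : ∀ x, HasDerivAt Φ (φ x) x := fun x => (hc.integral_hasStrictDerivAt 0 x).hasDerivAt
  have hΦlip : LipschitzWith 1 Φ :=
    lipschitzWith_of_nnnorm_deriv_le (fun x => (hΦ x).differentiableAt) fun x => by
      rw [(hΦ x).deriv]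
      exact hφ x
  have hder : ∀ x, HasDerivAt (fun x => Φ x - steklovAverage ε Φ x)
      (φ x - steklovAverage ε φ x) x := fun x => by
    have := (hΦ x).sub (hasDerivAt_steklovAverage (ε := ε) hΦlip.continuous x)
    rwa [intervalIntegral.integral_interval_sub_left (hc.intervalIntegrable _ _)
      (hc.intervalIntegrable _ _)] at this
  have hderiv := funext fun x => (hder x).deriv
  refine ⟨_, contDiff_one_iff_deriv.2 ⟨fun x => (hder x).differentiableAt, ?_⟩,
    abs_sub_steklovAverage_le hε hΦlip, hderiv⟩
  rw [hderiv]
  exact hc.sub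
    (continuous_iff_continuousAt.2 fun x => (hasDerivAt_steklovAverage hc x).continuousAt)

end SteklovAverage

section Distances

variable {μ ν : Measure ℝ} [IsProbabilityMeasure μ] [IsProbabilityMeasure ν] {φ : ℝ → ℝ} {ε : ℝ}

lemma abs_integral_sub_steklovAverage_le (hε : 0 < ε) (hc : Continuous φ) (hφ : ∀ x, |φ x| ≤ 1) :
    |∫ s, (φ s - steklovAverage ε φ s) ∂μ| ≤ 2 * smoothnessModulus μ ε := by
  obtain ⟨H, hH, hHε, hH'⟩ := exists_contDiff_deriv_eq_sub_steklovAverage hε hc hφ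
  have hhalf : deriv (fun x => H x / 2) = fun x => (φ x - steklovAverage ε φ x) / 2 :=
    funext fun x => by rw [deriv_div_const, hH']
  have := abs_integral_deriv_le (μ := μ) (ε := ε) (H := fun x => H x / 2) (hH.div_const 2)
    (fun x => by rw [abs_div, abs_two]; linarith [hHε x])
    (fun x => by
      rw [hhalf, abs_div, abs_two]
      linarith [abs_sub (φ x) (steklovAverage ε φ x), hφ x, abs_steklovAverage_le hε hφ x])
  rw [hhalf, integral_div, abs_div, abs_two] at this
  linarith

lemma integral_sub_integral_le_two (hφ : ∀ x, |φ x| ≤ 1) :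
    (∫ s, φ s ∂μ) - ∫ s, φ s ∂ν ≤ 2 := by
  linarith [(abs_le.1 (abs_integral_le_one (P := μ) hφ)).2,
    (abs_le.1 (abs_integral_le_one (P := ν) hφ)).1]

lemma dTV_le_two : dTV μ ν ≤ 2 := by
  refine Real.sSup_le ?_ zero_le_two
  rintro _ ⟨φ, -, -, hφ, rfl⟩
  exact integral_sub_integral_le_two hφ

lemma integral_sub_integral_le_mul_dKR (hφ : ContDiff ℝ (⊤ : ℕ∞) φ) (hs : HasCompactSupport φ)
    (hb : ∀ x, |φ x| ≤ 1) {M : ℝ} (hM : 1 ≤ M) (hd : ∀ x, |deriv φ x| ≤ M) :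
    (∫ s, φ s ∂μ) - ∫ s, φ s ∂ν ≤ M * dKR μ ν := by
  have hM0 : 0 < M := one_pos.trans_le hM
  have hle : (∫ s, φ s / M ∂μ) - ∫ s, φ s / M ∂ν ≤ dKR μ ν := by
    refine le_csSup ⟨2, ?_⟩ ⟨fun x => φ x / M, hφ.div_const M, ?_, fun x => ?_, fun x => ?_, rfl⟩
    · rintro _ ⟨χ, -, -, hχ, -, rfl⟩
      exact integral_sub_integral_le_two hχ
    · exact hs.comp_left (g := (· / M)) (zero_div M)
    · rw [abs_div, abs_of_pos hM0]
      exact div_le_one_of_le₀ ((hb x).trans hM) hM0.le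
    · rw [deriv_div_const, abs_div, abs_of_pos hM0]
      exact div_le_one_of_le₀ (hd x) hM0.le
  rwa [integral_div, integral_div, ← sub_div, div_le_iff₀' hM0] at hle

lemma dKR_nonneg : 0 ≤ dKR μ ν := by
  simpa using integral_sub_integral_le_mul_dKR (μ := μ) (ν := ν) (φ := 0) contDiff_const
    HasCompactSupport.zero (by simp) le_rfl (by simp)

lemma dTV_nonpos_of_dKR_eq_zero (h : dKR μ ν = 0) : dTV μ ν ≤ 0 := by
  refine Real.sSup_le ?_ le_rfl
  rintro _ ⟨φ, hφ, hs, hb, rfl⟩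
  obtain ⟨M, hM⟩ := (hφ.continuous_deriv (by simp)).bounded_above_of_compact_support hs.deriv
  simpa [h] using integral_sub_integral_le_mul_dKR (μ := μ) (ν := ν) hφ hs hb (le_max_right M 1)
    fun x => (hM x).trans (le_max_left M 1)

lemma dTV_le_smoothnessModulus_add (hε : 0 < ε) (hε1 : ε ≤ 1) :
    dTV μ ν ≤
      2 * smoothnessModulus μ ε + 2 * smoothnessModulus ν ε + 2 / ε * dKR μ ν := by
  have hμ := smoothnessModulus_nonneg (μ := μ) hε.le
  have hν := smoothnessModulus_nonneg (μ := ν) hε.le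
  have hδ := dKR_nonneg (μ := μ) (ν := ν)
  refine Real.sSup_le ?_ (by positivity)
  rintro _ ⟨φ, hφ, hs, hb, rfl⟩
  have hψ := contDiff_steklovAverage (ε := ε) hφ
  have hψb := abs_steklovAverage_le hε hb
  have hKR := integral_sub_integral_le_mul_dKR (μ := μ) (ν := ν) hψ
    (hasCompactSupport_steklovAverage hε.le hs) hψb (M := 2 / ε)
    (by rw [le_div_iff₀ hε]; linarith)
    (by simpa using abs_deriv_steklovAverage_le hε hφ.continuous hb)
  have hsplit : ∀ (ρ : Measure ℝ) [IsProbabilityMeasure ρ],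
      |(∫ s, φ s ∂ρ) - ∫ s, steklovAverage ε φ s ∂ρ| ≤ 2 * smoothnessModulus ρ ε :=
    fun ρ _ => by
      rw [← integral_sub (.of_bound hφ.continuous.aestronglyMeasurable 1 (ae_of_all _ hb))
        (.of_bound hψ.continuous.aestronglyMeasurable 1 (ae_of_all _ hψb))]
      exact abs_integral_sub_steklovAverage_le hε hφ.continuous hb
  linarith [(abs_le.1 (hsplit μ)).2, (abs_le.1 (hsplit ν)).1]

end Distances

/-! ### From smoothness of the laws to a comparison of the distances -/

section ComparisonOfDistances

variable {α κ δ : ℝ}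

-- The scale is chosen so that `ε ^ α (1 - log δ) ^ κ` and `δ / ε` are equal.
lemma exists_balanced_scale (hα : 0 < α) (hκ : 0 ≤ κ) (hδ : 0 < δ) (hδ1 : δ ≤ 1) :
    ∃ ε : ℝ, 0 < ε ∧ ε ≤ 1 ∧
      δ / ε = δ ^ (α / (1 + α)) * (1 - Real.log δ) ^ (κ / (1 + α)) ∧
      ε ^ α * (1 - Real.log ε) ^ κ ≤ (1 + κ) ^ κ * (δ / ε) := by
  set L := 1 - Real.log δ
  have hL1 : 1 ≤ L := by linarith [Real.log_nonpos hδ.le hδ1]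
  have hL0 : 0 < L := by linarith
  set β := 1 / (1 + α) with hβ
  have hβ0 : 0 < β := by positivity
  have hβ1 : β ≤ 1 := (div_le_one (by positivity)).2 (by linarith)
  have hαβ : α * β = 1 - β := by rw [hβ]; field_simp; ring
  set ε := δ ^ β * L ^ (-(κ * β)) with hε
  have hε0 : 0 < ε := by positivity
  have hε1 : ε ≤ 1 := mul_le_one₀ (Real.rpow_le_one hδ.le hδ1 hβ0.le) (by positivity)
    (Real.rpow_le_one_of_one_le_of_nonpos hL1 (by linarith [mul_nonneg hκ hβ0.le]))
  have hratio : δ / ε = δ ^ (1 - β) * L ^ (κ * β) := by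
    rw [hε, Real.rpow_neg hL0.le, Real.rpow_sub hδ, Real.rpow_one]
    field_simp
  have hpow : ε ^ α * L ^ κ = δ / ε := by
    rw [hratio, hε, Real.mul_rpow (by positivity) (by positivity), ← Real.rpow_mul hδ.le,
      ← Real.rpow_mul hL0.le, mul_assoc, ← Real.rpow_add hL0, mul_comm β, hαβ]
    congr 2
    linear_combination -κ * hαβ
  have hlog : 1 - Real.log ε ≤ (1 + κ) * L := by
    have hexpand : Real.log ε = β * Real.log δ - κ * (β * Real.log L) := by
      rw [hε, Real.log_mul (by positivity) (by positivity), Real.log_rpow hδ, Real.log_rpow hL0]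
      ring
    have hδlog : Real.log δ ≤ β * Real.log δ := by nlinarith [Real.log_nonpos hδ.le hδ1]
    have hLlog : β * Real.log L ≤ L := by
      nlinarith [Real.log_nonneg hL1, Real.log_le_sub_one_of_pos hL0]
    nlinarith [mul_le_mul_of_nonneg_left hLlog hκ]
  refine ⟨ε, hε0, hε1, ?_, ?_⟩
  · rw [hratio, ← hαβ, hβ, mul_one_div, mul_one_div]
  · calc ε ^ α * (1 - Real.log ε) ^ κ ≤ ε ^ α * ((1 + κ) * L) ^ κ := by
          have : 0 ≤ 1 - Real.log ε := by linarith [Real.log_nonpos hε0.le hε1]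
          gcongr
      _ = (1 + κ) ^ κ * (δ / ε) := by
          rw [Real.mul_rpow (by positivity) hL0.le, ← hpow]
          ring

lemma one_add_rpow_le {x θ : ℝ} (hx : 0 ≤ x) (hθ : 0 ≤ θ) :
    (1 + x) ^ θ ≤ 2 ^ θ * (x ^ θ + 1) := by
  calc (1 + x) ^ θ ≤ (2 * max x 1) ^ θ := by
        gcongr
        linarith [le_max_left x 1, le_max_right x 1]
    _ = 2 ^ θ * max x 1 ^ θ := Real.mul_rpow zero_le_two (by positivity)
    _ ≤ 2 ^ θ * (x ^ θ + 1) := by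
        gcongr
        rcases max_cases x 1 with h | h <;> rw [h.1]
        · linarith
        · rw [Real.one_rpow]
          linarith [Real.rpow_nonneg hx θ]

/-- The constant with which smoothness `K ε ^ α (1 - log ε) ^ κ` of two laws enters the comparison
of their distances. -/
noncomputable def comparisonConstant (K α κ : ℝ) : ℝ :=
  (4 * K * (1 + κ) ^ κ + 2) * 2 ^ (κ / (1 + α))

lemma two_le_comparisonConstant {K : ℝ} (hK : 0 ≤ K) (hα : 0 ≤ α) (hκ : 0 ≤ κ) :
    2 ≤ comparisonConstant K α κ := by
  have hpow : (1 : ℝ) ≤ 2 ^ (κ / (1 + α)) := Real.one_le_rpow one_le_two (by positivity)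
  have hK' : 0 ≤ 4 * K * (1 + κ) ^ κ := by positivity
  unfold comparisonConstant
  nlinarith

lemma dTV_le_dKR_of_smoothnessModulus_le {μ ν : Measure ℝ} [IsProbabilityMeasure μ]
    [IsProbabilityMeasure ν] {K : ℝ} (hα : 0 < α) (hκ : 0 ≤ κ)
    (hμ : ∀ ε, 0 < ε → ε ≤ 1 → smoothnessModulus μ ε ≤ K * ε ^ α * (1 - Real.log ε) ^ κ)
    (hν : ∀ ε, 0 < ε → ε ≤ 1 → smoothnessModulus ν ε ≤ K * ε ^ α * (1 - Real.log ε) ^ κ) :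
    dTV μ ν ≤ comparisonConstant K α κ * dKR μ ν ^ (α / (1 + α)) *
      (|Real.log (dKR μ ν)| ^ (κ / (1 + α)) + 1) := by
  have hK : 0 ≤ K := by
    simpa using (smoothnessModulus_nonneg zero_le_one).trans (hμ 1 one_pos le_rfl)
  have hC := two_le_comparisonConstant hK hα.le hκ
  set δ := dKR μ ν with hδdef
  rcases (dKR_nonneg (μ := μ) (ν := ν)).eq_or_lt with hδ | hδ
  · refine (dTV_nonpos_of_dKR_eq_zero hδ.symm).trans ?_
    rw [← hδdef] at hδ
    rw [← hδ]
    positivity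
  rcases le_or_gt 1 δ with hδ1 | hδ1
  · have hone : 1 ≤ δ ^ (α / (1 + α)) := Real.one_le_rpow hδ1 (by positivity)
    calc dTV μ ν ≤ 2 * 1 * (0 + 1) := by simpa using dTV_le_two
      _ ≤ _ := by gcongr; positivity
  obtain ⟨ε, hε, hε1, hratio, hbalance⟩ := exists_balanced_scale hα hκ hδ hδ1.le
  have habs : 1 - Real.log δ = 1 + |Real.log δ| := by
    rw [abs_of_nonpos (Real.log_nonpos hδ.le hδ1.le), sub_eq_add_neg]
  calc dTV μ ν ≤ 4 * K * (ε ^ α * (1 - Real.log ε) ^ κ) + 2 * (δ / ε) := by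
        have hdTV := dTV_le_smoothnessModulus_add (μ := μ) (ν := ν) hε hε1
        rw [← hδdef, div_mul_eq_mul_div, mul_div_assoc] at hdTV
        linarith [hμ ε hε hε1, hν ε hε hε1]
    _ ≤ (4 * K * (1 + κ) ^ κ + 2) * (δ / ε) := by
        linarith [mul_le_mul_of_nonneg_left hbalance (mul_nonneg zero_le_four hK)]
    _ ≤ (4 * K * (1 + κ) ^ κ + 2) * (δ ^ (α / (1 + α)) *
          (2 ^ (κ / (1 + α)) * (|Real.log δ| ^ (κ / (1 + α)) + 1))) := by
        rw [hratio, habs]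
        gcongr
        exact one_add_rpow_le (abs_nonneg _) (by positivity)
    _ = _ := by rw [comparisonConstant]; ring

end ComparisonOfDistances

/-! ### Gaussian integrals of Cauchy kernels -/

section MultisetSum

variable {ι Ω : Type*} {_ : MeasurableSpace Ω} {P : Measure Ω} {k : ι → Ω → ℝ}

lemma integrable_multiset_sum (hk : ∀ i, Integrable (k i) P) (s : Multiset ι) :
    Integrable (fun ω => (s.map fun i => k i ω).sum) P := by
  induction s using Multiset.induction_on with
  | empty => simp
  | cons i s ih =>
    simp only [Multiset.map_cons, Multiset.sum_cons]
    exact (hk i).add ih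

lemma integral_multiset_sum_le {c : ℝ} (hk : ∀ i, Integrable (k i) P)
    (hc : ∀ i, ∫ ω, k i ω ∂P ≤ c) (s : Multiset ι) :
    ∫ ω, (s.map fun i => k i ω).sum ∂P ≤ s.card * c := by
  induction s using Multiset.induction_on with
  | empty => simp
  | cons i s ih =>
    simp only [Multiset.map_cons, Multiset.sum_cons, Multiset.card_cons, Nat.cast_succ]
    rw [integral_add (hk i) (integrable_multiset_sum hk s)]
    linarith [hc i]

end MultisetSum

lemma cauchyPDFReal_nonneg (u : ℝ) (b : NNReal) (x : ℝ) : 0 ≤ cauchyPDFReal u b x := by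
  rw [cauchyPDFReal_def]
  positivity

lemma integral_cauchyPDFReal_le_one (u : ℝ) (b : NNReal) : ∫ x, cauchyPDFReal u b x ≤ 1 := by
  rcases eq_or_ne b 0 with rfl | hb
  · simp
  · exact (integral_cauchyPDFReal_eq_one u hb).le

lemma gaussianPDFReal_mul_one_add_abs_le (x : ℝ) : gaussianPDFReal 0 1 x * (1 + |x|) ≤ 1 := by
  have hnorm : (√(2 * Real.pi))⁻¹ ≤ 2⁻¹ := by
    gcongr
    exact Real.le_sqrt_of_sq_le (by linarith [Real.pi_gt_three])
  have hexp : Real.exp (-x ^ 2 / 2) * (1 + |x|) ≤ 2 := by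
    rw [neg_div, Real.exp_neg, inv_mul_le_iff₀ (Real.exp_pos _)]
    nlinarith [Real.add_one_le_exp (x ^ 2 / 2), sq_abs x, sq_nonneg (|x| - 1)]
  calc gaussianPDFReal 0 1 x * (1 + |x|)
      = (√(2 * Real.pi))⁻¹ * (Real.exp (-x ^ 2 / 2) * (1 + |x|)) := by
        simp only [gaussianPDFReal_def, sub_zero, NNReal.coe_one, mul_one, mul_assoc]
    _ ≤ 2⁻¹ * 2 := by gcongr
    _ = 1 := by norm_num

lemma gaussianReal_le_volume : gaussianReal 0 1 ≤ (volume : Measure ℝ) := by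
  rw [gaussianReal_of_var_ne_zero 0 one_ne_zero]
  refine (withDensity_mono (ae_of_all _ fun x => ?_)).trans_eq withDensity_one
  rw [gaussianPDF, Pi.one_apply, ENNReal.ofReal_le_one]
  nlinarith [gaussianPDFReal_mul_one_add_abs_le x, gaussianPDFReal_nonneg 0 1 x, abs_nonneg x]

section LogarithmicDerivative

lemma eval_map_ofReal (q : Polynomial ℝ) (x : ℝ) :
    (q.map Complex.ofRealHom).eval (x : ℂ) = ((q.eval x : ℝ) : ℂ) :=
  Polynomial.eval_map_apply (p := q) Complex.ofRealHom x

lemma abs_im_inv_sub_eq (x : ℝ) (z : ℂ) :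
    |(1 / ((x : ℂ) - z)).im| = Real.pi * cauchyPDFReal z.re ‖z.im‖₊ x := by
  rw [one_div, Complex.inv_im, abs_div, abs_of_nonneg (Complex.normSq_nonneg _),
    Complex.normSq_apply, cauchyPDFReal_def]
  simp only [Complex.sub_re, Complex.sub_im, Complex.ofReal_re, Complex.ofReal_im, zero_sub,
    neg_neg, coe_nnnorm, Real.norm_eq_abs, sq_abs]
  field_simp

lemma abs_im_logDeriv_le {Q : Polynomial ℂ} {x : ℝ} (hx : Q.eval (x : ℂ) ≠ 0) :
    |(Q.derivative.eval (x : ℂ) / Q.eval (x : ℂ)).im| ≤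
      Real.pi * (Q.roots.map fun z => cauchyPDFReal z.re ‖z.im‖₊ x).sum := by
  rw [(IsAlgClosed.splits Q).eval_derivative_div_eval_of_ne_zero hx, ← Multiset.sum_map_mul_left]
  induction Q.roots using Multiset.induction_on with
  | empty => simp
  | cons z s ih =>
    simp only [Multiset.map_cons, Multiset.sum_cons, Complex.add_im]
    exact (abs_add_le _ _).trans (add_le_add (abs_im_inv_sub_eq x z).le ih)

-- `q'(x) / (q(x)² + t²)` is `1 / t` times the imaginary part of the logarithmic derivative of
-- `q - it`.
lemma abs_derivative_div_le (q : Polynomial ℝ) {t : ℝ} (ht : 0 < t) (x : ℝ) :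
    |q.derivative.eval x| / (q.eval x ^ 2 + t ^ 2) ≤ Real.pi / t *
      ((q.map Complex.ofRealHom - Polynomial.C (t * Complex.I)).roots.map fun z =>
        cauchyPDFReal z.re ‖z.im‖₊ x).sum := by
  set Q := q.map Complex.ofRealHom - Polynomial.C (t * Complex.I) with hQ
  have heval : Q.eval (x : ℂ) = q.eval x - t * Complex.I := by simp [hQ, eval_map_ofReal]
  have hderiv : Q.derivative.eval (x : ℂ) = q.derivative.eval x := by
    simp [hQ, Polynomial.derivative_map, eval_map_ofReal]
  have hne : Q.eval (x : ℂ) ≠ 0 := fun h => by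
    have := congrArg Complex.im (heval.symm.trans h)
    simp [ht.ne'] at this
  have him : (Q.derivative.eval (x : ℂ) / Q.eval (x : ℂ)).im =
      t * (q.derivative.eval x / (q.eval x ^ 2 + t ^ 2)) := by
    rw [hderiv, heval, Complex.div_im]
    simp only [Complex.ofReal_im, Complex.sub_re, Complex.ofReal_re, Complex.mul_re, Complex.I_re,
      mul_zero, Complex.I_im, mul_one, sub_self, sub_zero, zero_mul, Complex.normSq_apply,
      Complex.sub_im, Complex.mul_im, add_zero, zero_sub, mul_neg, neg_mul, neg_neg, zero_div]
    ring
  have hle := abs_im_logDeriv_le hne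
  rw [him, abs_mul, abs_div, abs_of_pos ht,
    abs_of_pos (a := q.eval x ^ 2 + t ^ 2) (by positivity)] at hle
  rwa [div_mul_eq_mul_div, le_div_iff₀' ht]

lemma integrable_abs_derivative_div (q : Polynomial ℝ) {t : ℝ} (ht : 0 < t) :
    Integrable (fun x => |q.derivative.eval x| / (q.eval x ^ 2 + t ^ 2)) := by
  have hkernel := fun z : ℂ => integrable_cauchyPDFReal z.re (γ := ‖z.im‖₊)
  refine ((integrable_multiset_sum hkernel
    (q.map Complex.ofRealHom - Polynomial.C (t * Complex.I)).roots).const_mul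
    (Real.pi / t)).mono' (Continuous.aestronglyMeasurable ?_) (ae_of_all _ fun x => ?_)
  · exact .div (by fun_prop) (by fun_prop) fun x => by positivity
  · rw [Real.norm_of_nonneg (by positivity)]
    exact abs_derivative_div_le q ht x

lemma integral_abs_derivative_div_le (q : Polynomial ℝ) {t : ℝ} (ht : 0 < t) :
    ∫ x, |q.derivative.eval x| / (q.eval x ^ 2 + t ^ 2) ≤ Real.pi * q.natDegree / t := by
  set S := (q.map Complex.ofRealHom - Polynomial.C (t * Complex.I)).roots
  have hcard : (S.card : ℝ) ≤ q.natDegree := by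
    refine Nat.cast_le.2 ((Polynomial.card_roots' _).trans ?_)
    rw [Polynomial.natDegree_sub_C]
    exact Polynomial.natDegree_map_le
  have hkernel := fun z : ℂ => integrable_cauchyPDFReal z.re (γ := ‖z.im‖₊)
  calc ∫ x, |q.derivative.eval x| / (q.eval x ^ 2 + t ^ 2)
      ≤ ∫ x, Real.pi / t * (S.map fun z => cauchyPDFReal z.re ‖z.im‖₊ x).sum :=
        integral_mono (integrable_abs_derivative_div q ht)
          ((integrable_multiset_sum hkernel S).const_mul _) (abs_derivative_div_le q ht)
    _ ≤ Real.pi / t * (S.card * 1) := by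
        rw [integral_const_mul]
        gcongr
        exact integral_multiset_sum_le hkernel (fun z => integral_cauchyPDFReal_le_one _ _) S
    _ ≤ Real.pi / t * (q.natDegree * 1) := by gcongr
    _ = Real.pi * q.natDegree / t := by ring

end LogarithmicDerivative

/-! ### Small values of a polynomial of one variable -/

section SmallValues

lemma one_sub_softIndicator {t y : ℝ} (ht : 0 < t) :
    1 - softIndicator t y = y ^ 2 / (y ^ 2 + t ^ 2) := by
  rw [softIndicator]
  field_simp
  ring

lemma softIndicator_mul_le {s t y z : ℝ} (hs : 0 < s) (ht : 0 < t) :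
    softIndicator (s * t) (y * z) ≤ softIndicator s y + softIndicator t z := by
  have hcompl : (1 - softIndicator s y) * (1 - softIndicator t z) ≤
      1 - softIndicator (s * t) (y * z) := by
    rw [one_sub_softIndicator hs, one_sub_softIndicator ht, one_sub_softIndicator (mul_pos hs ht),
      div_mul_div_comm, mul_pow, mul_pow]
    refine div_le_div_of_nonneg_left (by positivity) (by positivity) ?_
    nlinarith [mul_nonneg (sq_nonneg y) (sq_nonneg t), mul_nonneg (sq_nonneg s) (sq_nonneg z)]
  nlinarith [mul_nonneg (softIndicator_nonneg (t := s) (y := y))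
    (softIndicator_nonneg (t := t) (y := z))]

lemma softIndicator_le_div_abs {t y : ℝ} (ht : 0 < t) (hy : y ≠ 0) :
    softIndicator t y ≤ t / (2 * |y|) := by
  have := abs_pos.2 hy
  rw [softIndicator, div_le_div_iff₀ (by positivity) (by positivity), ← sq_abs y]
  nlinarith [mul_nonneg ht.le (sq_nonneg (|y| - t))]

/-- The distance from a real number to a complex number `z`, relative to the size of `z`. -/
noncomputable def relativeDist (z : ℂ) (x : ℝ) : ℝ := ‖(x : ℂ) - z‖ / (1 + ‖z‖)

lemma continuous_relativeDist (z : ℂ) : Continuous (relativeDist z) := by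
  unfold relativeDist
  fun_prop

-- The Gaussian density is at most of order `1 / (1 + ‖z‖)` near `z`, so that the scale
-- `s (1 + ‖z‖)` still carries mass of order `s`.
lemma gaussianPDFReal_mul_softIndicator_le (z : ℂ) (x : ℝ) {s : ℝ} (hs : 0 < s) :
    gaussianPDFReal 0 1 x * softIndicator s (relativeDist z x) ≤
      2 * s * gaussianPDFReal 0 1 x +
        2 * Real.pi * s * cauchyPDFReal z.re (s * (1 + ‖z‖)).toNNReal x := by
  set R := 1 + ‖z‖
  have hR0 : 0 < R := by positivity
  have hpdf := gaussianPDFReal_nonneg 0 1 x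
  have hcauchy := cauchyPDFReal_nonneg z.re (s * R).toNNReal x
  rcases le_or_gt (R / 4) ‖(x : ℂ) - z‖ with hfar | hnear
  · have hdist : 1 / 4 ≤ relativeDist z x := by
      rw [relativeDist, le_div_iff₀ hR0]
      linarith
    have hle : softIndicator s (relativeDist z x) ≤ 2 * s := by
      refine (softIndicator_le_div_abs hs (by positivity)).trans ?_
      rw [abs_of_pos (by positivity), div_le_iff₀ (by positivity)]
      nlinarith
    have : 0 ≤ 2 * Real.pi * s * cauchyPDFReal z.re (s * R).toNNReal x := by positivity
    nlinarith
  · have hpdfR : gaussianPDFReal 0 1 x * R ≤ 2 := by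
      have hz : ‖z‖ ≤ ‖(x : ℂ)‖ + ‖(x : ℂ) - z‖ := by
        simpa using norm_sub_le (x : ℂ) ((x : ℂ) - z)
      rw [Complex.norm_real, Real.norm_eq_abs] at hz
      nlinarith [gaussianPDFReal_mul_one_add_abs_le x]
    have hre : softIndicator s (relativeDist z x) ≤ softIndicator s ((x - z.re) / R) := by
      refine softIndicator_le_of_abs_le hs ?_
      rw [relativeDist, abs_div, abs_div, abs_norm]
      gcongr
      simpa using Complex.abs_re_le_norm ((x : ℂ) - z)
    have hcauchy_eq : softIndicator s ((x - z.re) / R) =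
        R * (Real.pi * s * cauchyPDFReal z.re (s * R).toNNReal x) := by
      rw [← softIndicator_mul_mul hR0.ne', mul_div_cancel₀ _ hR0.ne', cauchyPDFReal_def,
        softIndicator, Real.coe_toNNReal _ (by positivity)]
      field_simp
    calc gaussianPDFReal 0 1 x * softIndicator s (relativeDist z x)
        ≤ gaussianPDFReal 0 1 x * softIndicator s ((x - z.re) / R) := by gcongr
      _ = gaussianPDFReal 0 1 x * R *
            (Real.pi * s * cauchyPDFReal z.re (s * R).toNNReal x) := by
        rw [hcauchy_eq]
        ring
      _ ≤ 2 * (Real.pi * s * cauchyPDFReal z.re (s * R).toNNReal x) := by gcongr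
      _ ≤ _ := by
        have : 0 ≤ 2 * s * gaussianPDFReal 0 1 x := by positivity
        linarith

lemma integral_softIndicator_relativeDist_le (z : ℂ) {s : ℝ} (hs : 0 < s) :
    ∫ x, softIndicator s (relativeDist z x) ∂gaussianReal 0 1 ≤ 10 * s := by
  have hpdf := (integrable_gaussianPDFReal 0 1).const_mul (2 * s)
  have hcauchy := (integrable_cauchyPDFReal z.re
    (γ := (s * (1 + ‖z‖)).toNNReal)).const_mul (2 * Real.pi * s)
  rw [integral_gaussianReal_eq_integral_smul one_ne_zero]
  calc ∫ x, gaussianPDFReal 0 1 x • softIndicator s (relativeDist z x)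
      ≤ ∫ x, (2 * s * gaussianPDFReal 0 1 x +
          2 * Real.pi * s * cauchyPDFReal z.re (s * (1 + ‖z‖)).toNNReal x) :=
        integral_mono_of_nonneg
          (ae_of_all _ fun x => mul_nonneg (gaussianPDFReal_nonneg 0 1 x) softIndicator_nonneg)
          (hpdf.add hcauchy) (ae_of_all _ fun x => gaussianPDFReal_mul_softIndicator_le z x hs)
    _ ≤ 2 * s * 1 + 2 * Real.pi * s * 1 := by
        rw [integral_add hpdf hcauchy, integral_const_mul, integral_const_mul,
          integral_gaussianPDFReal_eq_one 0 one_ne_zero]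
        gcongr
        exact integral_cauchyPDFReal_le_one _ _
    _ ≤ 10 * s := by nlinarith [Real.pi_lt_four]

lemma norm_coeff_prod_X_sub_C_le (S : Multiset ℂ) (k : ℕ) :
    ‖(S.map fun z => Polynomial.X - Polynomial.C z).prod.coeff k‖ ≤
      (S.map fun z => 1 + ‖z‖).prod := by
  induction S using Multiset.induction_on generalizing k with
  | empty =>
    simp only [Multiset.map_zero, Multiset.prod_zero, Polynomial.coeff_one]
    split_ifs <;> simp
  | cons z S ih =>
    simp only [Multiset.map_cons, Multiset.prod_cons, sub_mul, Polynomial.coeff_sub,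
      Polynomial.coeff_C_mul, add_mul, one_mul]
    have hX : ‖(Polynomial.X * (S.map fun z => Polynomial.X - Polynomial.C z).prod).coeff k‖ ≤
        (S.map fun z => 1 + ‖z‖).prod := by
      cases k with
      | zero => simpa using (norm_nonneg _).trans (ih 0)
      | succ k => rw [Polynomial.coeff_X_mul]; exact ih k
    refine (norm_sub_le _ _).trans (add_le_add hX ?_)
    rw [norm_mul]
    gcongr
    exact ih k

lemma abs_coeff_mul_abs_prod_relativeDist_le (q : Polynomial ℝ) (k : ℕ) (x : ℝ) :
    |q.coeff k| * |((q.map Complex.ofRealHom).roots.map fun z => relativeDist z x).prod| ≤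
      |q.eval x| := by
  set Q := q.map Complex.ofRealHom with hQ
  have hsplit := IsAlgClosed.splits Q
  have hcoeff : |q.coeff k| ≤ ‖Q.leadingCoeff‖ * (Q.roots.map fun z => 1 + ‖z‖).prod := by
    have hnorm : |q.coeff k| = ‖Q.coeff k‖ := by simp [hQ]
    rw [hnorm]
    conv_lhs => rw [hsplit.eq_prod_roots]
    rw [Polynomial.coeff_C_mul, norm_mul]
    gcongr
    exact norm_coeff_prod_X_sub_C_le _ k
  have heval : |q.eval x| = ‖Q.leadingCoeff‖ * (Q.roots.map fun z => ‖(x : ℂ) - z‖).prod := by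
    have hnorm : |q.eval x| = ‖Q.eval (x : ℂ)‖ := by
      rw [hQ, eval_map_ofReal, Complex.norm_real, Real.norm_eq_abs]
    rw [hnorm, hsplit.eval_eq_prod_roots, norm_mul]
    congr 1
    simpa [Multiset.map_map, Function.comp_def] using
      map_multiset_prod (normHom : ℂ →*₀ ℝ) (Q.roots.map fun z => (x : ℂ) - z)
  have hpos : 0 < (Q.roots.map fun z => 1 + ‖z‖).prod :=
    Multiset.prod_pos fun _ h => by
      obtain ⟨z, -, rfl⟩ := Multiset.mem_map.1 h
      positivity
  have hnonneg : 0 ≤ (Q.roots.map fun z => relativeDist z x).prod :=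
    Multiset.prod_nonneg fun _ h => by
      obtain ⟨z, -, rfl⟩ := Multiset.mem_map.1 h
      unfold relativeDist
      positivity
  rw [abs_of_nonneg hnonneg]
  calc |q.coeff k| * (Q.roots.map fun z => relativeDist z x).prod
      ≤ ‖Q.leadingCoeff‖ * (Q.roots.map fun z => 1 + ‖z‖).prod *
          (Q.roots.map fun z => relativeDist z x).prod := by gcongr
    _ = |q.eval x| := by
      simp only [relativeDist]
      rw [Multiset.prod_map_div, mul_assoc, mul_div_cancel₀ _ hpos.ne', heval]

lemma softIndicator_pow_prod_le {ι : Type*} (b : ι → ℝ) {s : ℝ} (hs : 0 < s) (hs1 : s ≤ 1)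
    {S : Multiset ι} {D : ℕ} (hD : 1 ≤ D) (hS : S.card ≤ D) :
    softIndicator (s ^ D) (S.map b).prod ≤ s + (S.map fun z => softIndicator s (b z)).sum := by
  induction S using Multiset.induction_on generalizing D with
  | empty =>
    have hpow : s ^ D ≤ s := by simpa using pow_le_pow_of_le_one hs.le hs1 hD
    have := softIndicator_le_div_abs (pow_pos hs D) one_ne_zero
    simp only [Multiset.map_zero, Multiset.prod_zero, Multiset.sum_zero, abs_one] at this ⊢
    linarith
  | cons z S ih =>
    obtain ⟨D, rfl⟩ := Nat.exists_eq_add_of_le' hD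
    rw [Multiset.card_cons, Nat.add_le_add_iff_right] at hS
    simp only [Multiset.map_cons, Multiset.prod_cons, Multiset.sum_cons]
    rcases Nat.eq_zero_or_pos D with rfl | hD
    · obtain rfl := Multiset.card_eq_zero.1 (Nat.le_zero.1 hS)
      simp [hs.le]
    · rw [pow_succ']
      linarith [ih hD hS, softIndicator_mul_le (y := b z) (z := (S.map b).prod) hs (pow_pos hs D)]

lemma integral_softIndicator_eval_le (q : Polynomial ℝ) {M s : ℝ} {D k : ℕ} (hM : 0 < M)
    (hMk : M ≤ |q.coeff k|) (hD : 1 ≤ D) (hq : q.natDegree ≤ D) (hs : 0 < s) (hs1 : s ≤ 1) :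
    ∫ x, softIndicator (M * s ^ D) (q.eval x) ∂gaussianReal 0 1 ≤ (1 + 10 * D) * s := by
  set S := (q.map Complex.ofRealHom).roots
  have hcard : S.card ≤ D :=
    (Polynomial.card_roots' _).trans (Polynomial.natDegree_map_le.trans hq)
  have hpointwise : ∀ x : ℝ, softIndicator (M * s ^ D) (q.eval x) ≤
      s + (S.map fun z => softIndicator s (relativeDist z x)).sum := fun x => by
    calc softIndicator (M * s ^ D) (q.eval x)
        ≤ softIndicator (M * s ^ D) (M * (S.map fun z => relativeDist z x).prod) := by
          refine softIndicator_le_of_abs_le (by positivity) ?_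
          rw [abs_mul, abs_of_pos hM]
          exact (mul_le_mul_of_nonneg_right hMk (abs_nonneg _)).trans
            (abs_coeff_mul_abs_prod_relativeDist_le q k x)
      _ = softIndicator (s ^ D) (S.map fun z => relativeDist z x).prod :=
          softIndicator_mul_mul hM.ne'
      _ ≤ _ := softIndicator_pow_prod_le _ hs hs1 hD hcard
  have hkernel := fun z => integrable_softIndicator_comp (P := gaussianReal 0 1)
    (continuous_relativeDist z).measurable hs
  have hsum := integrable_multiset_sum hkernel S
  calc ∫ x, softIndicator (M * s ^ D) (q.eval x) ∂gaussianReal 0 1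
      ≤ ∫ x, (s + (S.map fun z => softIndicator s (relativeDist z x)).sum) ∂gaussianReal 0 1 :=
        integral_mono (integrable_softIndicator_comp q.continuous.measurable (by positivity))
          ((integrable_const s).add hsum) hpointwise
    _ ≤ s + S.card * (10 * s) := by
        rw [integral_add (integrable_const s) hsum, integral_const, probReal_univ, one_smul]
        gcongr
        exact integral_multiset_sum_le hkernel
          (fun z => integral_softIndicator_relativeDist_le z hs) S
    _ ≤ s + D * (10 * s) := by gcongr
    _ = (1 + 10 * D) * s := by ring

end SmallValues

/-! ### Smoothness of polynomials of one Gaussian variable -/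

section IntegrationByParts

lemma hasDerivAt_gaussianPDFReal (x : ℝ) :
    HasDerivAt (gaussianPDFReal 0 1) (-x * gaussianPDFReal 0 1 x) x := by
  simp only [gaussianPDFReal_def, sub_zero, NNReal.coe_one, mul_one]
  refine ((((hasDerivAt_pow 2 x).neg).div_const 2).exp.const_mul
    (√(2 * Real.pi))⁻¹).congr_deriv ?_
  simp only [Pi.neg_apply]
  ring

lemma integrable_gaussianReal_iff {F : ℝ → ℝ} :
    Integrable F (gaussianReal 0 1) ↔ Integrable (fun x => gaussianPDFReal 0 1 x * F x) := by
  rw [gaussianReal_of_var_ne_zero 0 one_ne_zero,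
    integrable_withDensity_iff_integrable_smul' (measurable_gaussianPDF 0 1)
      (ae_of_all _ fun x => gaussianPDF_lt_top)]
  simp only [toReal_gaussianPDF, smul_eq_mul]

lemma integrable_id_gaussianReal : Integrable (fun x : ℝ => x) (gaussianReal 0 1) :=
  memLp_one_iff_integrable.1 (memLp_id_gaussianReal 1)

lemma integral_deriv_gaussianReal {u u' : ℝ → ℝ} (hu : ∀ x, HasDerivAt u (u' x) x)
    (hui : Integrable u (gaussianReal 0 1)) (hu'i : Integrable u' (gaussianReal 0 1))
    (hxu : Integrable (fun x => x * u x) (gaussianReal 0 1)) :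
    ∫ x, u' x ∂gaussianReal 0 1 = ∫ x, x * u x ∂gaussianReal 0 1 := by
  simp only [integral_gaussianReal_eq_integral_smul one_ne_zero, smul_eq_mul]
  rw [integrable_gaussianReal_iff] at hui hu'i hxu
  rw [integral_mul_deriv_eq_deriv_mul_of_integrable (fun x _ => hasDerivAt_gaussianPDFReal x)
    (fun x _ => hu x) hu'i (hxu.neg.congr (ae_of_all _ fun x => ?_)) hui, ← integral_neg]
  · exact integral_congr_ae (ae_of_all _ fun x => by ring)
  · simp only [Pi.neg_apply, Pi.mul_apply]
    ring

lemma integral_abs_gaussianReal_le_one : ∫ x, |x| ∂gaussianReal 0 1 ≤ 1 := by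
  have hsq : Integrable (fun x : ℝ => x ^ 2) (gaussianReal 0 1) :=
    (memLp_id_gaussianReal 2).integrable_sq
  have hvar : ∫ x, x ^ 2 ∂gaussianReal 0 1 = 1 := by
    have := variance_fun_id_gaussianReal (μ := 0) (v := 1)
    rw [variance_eq_integral (by fun_prop)] at this
    simpa [integral_id_gaussianReal] using this
  calc ∫ x, |x| ∂gaussianReal 0 1 ≤ ∫ x, (1 + x ^ 2) / 2 ∂gaussianReal 0 1 :=
        integral_mono integrable_id_gaussianReal.abs (((integrable_const 1).add hsq).div_const 2)
          fun x => by nlinarith [sq_abs x, sq_nonneg (|x| - 1)]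
    _ = 1 := by
        rw [integral_div, integral_add (integrable_const 1) hsq, hvar]
        norm_num

lemma abs_integral_deriv_gaussianReal_le {u u' : ℝ → ℝ} {B : ℝ} (hB : 0 ≤ B)
    (hu : ∀ x, HasDerivAt u (u' x) x) (huB : ∀ x, |u x| ≤ B)
    (hu'i : Integrable u' (gaussianReal 0 1)) :
    |∫ x, u' x ∂gaussianReal 0 1| ≤ B := by
  have hcont : Continuous u := continuous_iff_continuousAt.2 fun x => (hu x).continuousAt
  rw [integral_deriv_gaussianReal hu
    (.of_bound hcont.aestronglyMeasurable B (ae_of_all _ huB)) hu'i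
    (integrable_id_gaussianReal.mul_bdd hcont.aestronglyMeasurable (ae_of_all _ huB))]
  calc |∫ x, x * u x ∂gaussianReal 0 1| ≤ ∫ x, B * |x| ∂gaussianReal 0 1 :=
        norm_integral_le_of_norm_le (integrable_id_gaussianReal.abs.const_mul B)
          (ae_of_all _ fun x => by
            rw [Real.norm_eq_abs, abs_mul, mul_comm]
            exact mul_le_mul_of_nonneg_right (huB x) (abs_nonneg x))
    _ ≤ B * 1 := by
        rw [integral_const_mul]
        gcongr
        exact integral_abs_gaussianReal_le_one
    _ = B := mul_one B

end IntegrationByParts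

section LargeDerivative

/-- The smooth substitute `y / (y² + t²)` for `1 / y`. -/
noncomputable def softInv (t y : ℝ) : ℝ := y / (y ^ 2 + t ^ 2)

variable {t : ℝ}

lemma mul_softInv (ht : 0 < t) (y : ℝ) : y * softInv t y = 1 - softIndicator t y := by
  rw [one_sub_softIndicator ht, softInv, ← mul_div_assoc, sq y]

lemma abs_softInv_le (ht : 0 < t) (y : ℝ) : |softInv t y| ≤ 1 / t := by
  have : 0 < y ^ 2 + t ^ 2 := by positivity
  rw [softInv, abs_div, abs_of_pos this, div_le_div_iff₀ this ht]
  nlinarith [sq_nonneg (|y| - t), sq_abs y, abs_nonneg y]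

lemma hasDerivAt_softInv (ht : 0 < t) (y : ℝ) :
    HasDerivAt (softInv t) ((t ^ 2 - y ^ 2) / (y ^ 2 + t ^ 2) ^ 2) y := by
  refine ((hasDerivAt_id y).div ((hasDerivAt_pow 2 y).add_const (t ^ 2))
    (by positivity)).congr_deriv ?_
  simp only [id_eq]
  push_cast
  ring

lemma abs_deriv_softInv_le (ht : 0 < t) (y : ℝ) :
    |deriv (softInv t) y| ≤ 1 / (y ^ 2 + t ^ 2) := by
  have hpos : 0 < y ^ 2 + t ^ 2 := by positivity
  have hnum : |t ^ 2 - y ^ 2| ≤ y ^ 2 + t ^ 2 :=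
    abs_le.2 ⟨by linarith [sq_nonneg t], by linarith [sq_nonneg y]⟩
  rw [(hasDerivAt_softInv ht y).deriv, abs_div, abs_of_pos (pow_pos hpos 2),
    div_le_div_iff₀ (by positivity) hpos]
  nlinarith

lemma continuous_deriv_softInv (ht : 0 < t) : Continuous (deriv (softInv t)) := by
  rw [funext fun y => (hasDerivAt_softInv ht y).deriv]
  exact .div (by fun_prop) (by fun_prop) fun y => by positivity

lemma abs_deriv_softInv_comp_le (q : Polynomial ℝ) (ht : 0 < t) (x : ℝ) :
    |deriv (softInv t) (q.eval x) * q.derivative.eval x| ≤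
      |q.derivative.eval x| / (q.eval x ^ 2 + t ^ 2) := by
  rw [abs_mul, ← one_div_mul_eq_div]
  gcongr
  exact abs_deriv_softInv_le ht _

lemma integrable_deriv_softInv_comp (q : Polynomial ℝ) (ht : 0 < t) :
    Integrable (fun x => deriv (softInv t) (q.eval x) * q.derivative.eval x)
      (gaussianReal 0 1) :=
  ((integrable_abs_derivative_div q ht).mono_measure gaussianReal_le_volume).mono'
    (((continuous_deriv_softInv ht).comp q.continuous).mul
      q.derivative.continuous).aestronglyMeasurable
    (ae_of_all _ (abs_deriv_softInv_comp_le q ht))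

lemma integral_abs_deriv_softInv_comp_le (q : Polynomial ℝ) (ht : 0 < t) :
    ∫ x, |deriv (softInv t) (q.eval x) * q.derivative.eval x| ∂gaussianReal 0 1 ≤
      Real.pi * q.natDegree / t := by
  have hvolume := integrable_abs_derivative_div q ht
  calc ∫ x, |deriv (softInv t) (q.eval x) * q.derivative.eval x| ∂gaussianReal 0 1
      ≤ ∫ x, |q.derivative.eval x| / (q.eval x ^ 2 + t ^ 2) ∂gaussianReal 0 1 :=
        integral_mono (integrable_deriv_softInv_comp q ht).abs
          (hvolume.mono_measure gaussianReal_le_volume) (abs_deriv_softInv_comp_le q ht)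
    _ ≤ ∫ x, |q.derivative.eval x| / (q.eval x ^ 2 + t ^ 2) :=
        integral_mono_measure gaussianReal_le_volume (ae_of_all _ fun x => by positivity) hvolume
    _ ≤ Real.pi * q.natDegree / t := integral_abs_derivative_div_le q ht

variable {H : ℝ → ℝ} {ε : ℝ}

lemma integrable_deriv_comp_eval {P : Measure ℝ} [IsFiniteMeasure P] (p : Polynomial ℝ)
    (hH : ContDiff ℝ 1 H) (hH' : ∀ x, |deriv H x| ≤ 1) :
    Integrable (fun x => deriv H (p.eval x)) P :=
  .of_bound (hH.continuous_deriv_one.comp p.continuous).aestronglyMeasurable 1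
    (ae_of_all _ fun _ => hH' _)

lemma integrable_deriv_comp_mul {P : Measure ℝ} [IsFiniteMeasure P] (p q : Polynomial ℝ)
    (ht : 0 < t) (hH : ContDiff ℝ 1 H) (hH' : ∀ x, |deriv H x| ≤ 1) :
    Integrable (fun x => deriv H (p.eval x) * (1 - softIndicator t (q.eval x))) P :=
  ((integrable_const 1).sub (integrable_softIndicator_comp q.continuous.measurable ht)).bdd_mul
    (hH.continuous_deriv_one.comp p.continuous).aestronglyMeasurable (ae_of_all _ fun _ => hH' _)

lemma hasDerivAt_comp_mul_softInv (p : Polynomial ℝ) (ht : 0 < t) (hH : Differentiable ℝ H)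
    (x : ℝ) :
    HasDerivAt (fun x => H (p.eval x) * softInv t (p.derivative.eval x))
      (deriv H (p.eval x) * (1 - softIndicator t (p.derivative.eval x)) +
        H (p.eval x) * (deriv (softInv t) (p.derivative.eval x) *
          p.derivative.derivative.eval x)) x := by
  have hHp := ((hH _).hasDerivAt (x := p.eval x)).comp x (p.hasDerivAt x)
  have hinv := (hasDerivAt_softInv ht (p.derivative.eval x)).differentiableAt.hasDerivAt.comp x
    (p.derivative.hasDerivAt x)
  refine (hHp.mul hinv).congr_deriv ?_
  simp only [← mul_softInv ht, Function.comp_apply]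
  ring

-- Integrate by parts against the vector field `p' / (p'² + t²)`: along it `H ∘ p` has derivative
-- `H' ∘ p` wherever `|p'|` is large.
lemma abs_integral_deriv_comp_mul_le (p : Polynomial ℝ) (ht : 0 < t) (hH : ContDiff ℝ 1 H)
    (hHε : ∀ x, |H x| ≤ ε) (hH' : ∀ x, |deriv H x| ≤ 1) :
    |∫ x, deriv H (p.eval x) * (1 - softIndicator t (p.derivative.eval x)) ∂gaussianReal 0 1| ≤
      ε / t * (1 + Real.pi * p.derivative.natDegree) := by
  set q := p.derivative
  have hε : 0 ≤ ε := (abs_nonneg _).trans (hHε 0)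
  set g : ℝ → ℝ := fun x => deriv H (p.eval x) * (1 - softIndicator t (q.eval x))
  set w : ℝ → ℝ := fun x => deriv (softInv t) (q.eval x) * q.derivative.eval x
  have hwi : Integrable w (gaussianReal 0 1) := integrable_deriv_softInv_comp q ht
  have hgi : Integrable g (gaussianReal 0 1) := integrable_deriv_comp_mul p q ht hH hH'
  have hHwi : Integrable (fun x => H (p.eval x) * w x) (gaussianReal 0 1) :=
    hwi.bdd_mul (hH.continuous.comp p.continuous).aestronglyMeasurable (ae_of_all _ fun x => hHε _)
  have hu : ∀ x, |H (p.eval x) * softInv t (q.eval x)| ≤ ε / t := fun x => by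
    rw [abs_mul, ← mul_one_div]
    exact mul_le_mul (hHε _) (abs_softInv_le ht _) (abs_nonneg _) hε
  have hparts := abs_integral_deriv_gaussianReal_le (by positivity)
    (hasDerivAt_comp_mul_softInv p ht (hH.differentiable one_ne_zero)) hu (hgi.add hHwi)
  rw [integral_add hgi hHwi] at hparts
  have herror : |∫ x, H (p.eval x) * w x ∂gaussianReal 0 1| ≤ ε * (Real.pi * q.natDegree / t) :=
    calc |∫ x, H (p.eval x) * w x ∂gaussianReal 0 1| ≤ ∫ x, ε * |w x| ∂gaussianReal 0 1 :=
          norm_integral_le_of_norm_le (f := fun x => H (p.eval x) * w x)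
            (hwi.abs.const_mul ε) (ae_of_all _ fun x =>
            (abs_mul _ (w x)).trans_le (mul_le_mul_of_nonneg_right (hHε _) (abs_nonneg _)))
      _ ≤ ε * (Real.pi * q.natDegree / t) := by
          rw [integral_const_mul]
          gcongr
          exact integral_abs_deriv_softInv_comp_le q ht
  rw [abs_le] at hparts herror ⊢
  have hsum : ε / t * (1 + Real.pi * q.natDegree) = ε / t + ε * (Real.pi * q.natDegree / t) := by
    ring
  constructor <;> linarith

end LargeDerivative

section OneVariable

variable {H : ℝ → ℝ} {ε M : ℝ} {m k : ℕ} {p : Polynomial ℝ}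

lemma le_abs_coeff_derivative (hk : 1 ≤ k) (hM : M ≤ |p.coeff k|) :
    M ≤ |p.derivative.coeff (k - 1)| := by
  rw [Polynomial.coeff_derivative, Nat.sub_add_cancel hk, abs_mul]
  refine hM.trans (le_mul_of_one_le_right (abs_nonneg _) ?_)
  rw [abs_of_nonneg (by positivity)]
  linarith [Nat.cast_nonneg (α := ℝ) (k - 1)]

lemma integral_deriv_comp_eval_le_of_natDegree_le_one (hp : p.natDegree ≤ 1) (hM : 0 < M)
    (hMp : M ≤ |p.coeff 1|) (hH : ContDiff ℝ 1 H) (hHε : ∀ x, |H x| ≤ ε)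
    (hH' : ∀ x, |deriv H x| ≤ 1) :
    ∫ x, deriv H (p.eval x) ∂gaussianReal 0 1 ≤ ε / M := by
  have hε : 0 ≤ ε := (abs_nonneg _).trans (hHε 0)
  have hc : p.coeff 1 ≠ 0 := abs_pos.1 (hM.trans_le hMp)
  have hderiv : ∀ x, HasDerivAt (fun x => H (p.eval x) / p.coeff 1) (deriv H (p.eval x)) x :=
    fun x => by
      have hp' : p.derivative = Polynomial.C (p.coeff 1) := by
        rw [Polynomial.eq_X_add_C_of_natDegree_le_one hp]
        simp
      refine ((((hH.differentiable one_ne_zero _).hasDerivAt (x := p.eval x)).comp x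
        (p.hasDerivAt x)).div_const (p.coeff 1)).congr_deriv ?_
      rw [hp', Polynomial.eval_C, mul_div_cancel_right₀ _ hc]
  refine (le_abs_self _).trans (abs_integral_deriv_gaussianReal_le (by positivity) hderiv
    (fun x => ?_) (integrable_deriv_comp_eval p hH hH'))
  rw [abs_div]
  gcongr
  exact hHε _

lemma integral_deriv_comp_eval_le_of_two_le (hm : 2 ≤ m) (hp : p.natDegree ≤ m) (hk : 1 ≤ k)
    (hM : 0 < M) (hMp : M ≤ |p.coeff k|) {s : ℝ} (hs : 0 < s) (hs1 : s ≤ 1)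
    (hH : ContDiff ℝ 1 H) (hHs : ∀ x, |H x| ≤ M * s ^ m) (hH' : ∀ x, |deriv H x| ≤ 1) :
    ∫ x, deriv H (p.eval x) ∂gaussianReal 0 1 ≤ 14 * m * s := by
  obtain ⟨D, rfl⟩ := Nat.exists_eq_add_of_le' (one_le_two.trans hm)
  set q := p.derivative with hq
  set t := M * s ^ D with ht_def
  have ht : 0 < t := by positivity
  have hdeg : q.natDegree ≤ D := (Polynomial.natDegree_derivative_le p).trans (by omega)
  have hscale : M * s ^ (D + 1) / t = s := by
    rw [ht_def, pow_succ]
    field_simp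
  have hsmall : ∫ x, softIndicator t (q.eval x) ∂gaussianReal 0 1 ≤ (1 + 10 * D) * s :=
    integral_softIndicator_eval_le q hM (le_abs_coeff_derivative hk hMp) (by omega) hdeg hs hs1
  have hlarge := (le_abs_self _).trans (abs_integral_deriv_comp_mul_le p ht hH hHs hH')
  rw [hscale, ← hq] at hlarge
  have hqi := integrable_softIndicator_comp (P := gaussianReal 0 1) q.continuous.measurable ht
  have hHi := integrable_deriv_comp_eval (P := gaussianReal 0 1) p hH hH'
  have hHqi := integrable_deriv_comp_mul (P := gaussianReal 0 1) p q ht hH hH'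
  calc ∫ x, deriv H (p.eval x) ∂gaussianReal 0 1
      ≤ ∫ x, (deriv H (p.eval x) * (1 - softIndicator t (q.eval x)) +
          softIndicator t (q.eval x)) ∂gaussianReal 0 1 :=
        integral_mono hHi (hHqi.add hqi) fun x => by
          nlinarith [(abs_le.1 (hH' (p.eval x))).2,
            softIndicator_nonneg (t := t) (y := q.eval x)]
    _ ≤ s * (1 + Real.pi * q.natDegree) + (1 + 10 * D) * s := by
        rw [integral_add hHqi hqi]
        exact add_le_add hlarge hsmall
    _ ≤ s * (1 + 4 * D) + (1 + 10 * D) * s := by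
        gcongr
        exact Real.pi_lt_four.le
    _ ≤ 14 * (D + 1 : ℕ) * s := by
        push_cast
        nlinarith

lemma integral_deriv_comp_eval_le (hm : 1 ≤ m) (hp : p.natDegree ≤ m) (hk : 1 ≤ k) (hε : 0 < ε)
    (hεp : ε ≤ |p.coeff k|) (hH : ContDiff ℝ 1 H) (hHε : ∀ x, |H x| ≤ ε)
    (hH' : ∀ x, |deriv H x| ≤ 1) :
    ∫ x, deriv H (p.eval x) ∂gaussianReal 0 1 ≤ 14 * m * (ε / |p.coeff k|) ^ (1 / m : ℝ) := by
  set M := |p.coeff k| with hM_def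
  have hM : 0 < M := hε.trans_le hεp
  rcases hm.eq_or_lt with rfl | hm
  · obtain rfl : k = 1 :=
      le_antisymm ((Polynomial.le_natDegree_of_ne_zero (abs_pos.1 hM)).trans hp) hk
    refine (integral_deriv_comp_eval_le_of_natDegree_le_one hp hM le_rfl hH hHε hH').trans ?_
    rw [Nat.cast_one, div_one, Real.rpow_one]
    linarith [div_pos hε hM]
  · have hs : 0 < ε / M := div_pos hε hM
    refine integral_deriv_comp_eval_le_of_two_le hm hp hk hM le_rfl (by positivity)
      (Real.rpow_le_one hs.le ((div_le_one hM).2 hεp) (by positivity)) hH (fun x => ?_) hH'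
    rw [one_div, Real.rpow_inv_natCast_pow hs.le (by omega), mul_div_cancel₀ _ hM.ne']
    exact hHε x

lemma smoothnessModulus_map_eval_le (hm : 1 ≤ m) (hp : p.natDegree ≤ m) (hk : 1 ≤ k) (hε : 0 < ε) :
    smoothnessModulus ((gaussianReal 0 1).map fun x => p.eval x) ε ≤
      14 * m * (ε / max ε |p.coeff k|) ^ (1 / m : ℝ) := by
  have hmeas : Measurable fun x => p.eval x := p.continuous.measurable
  rcases le_total |p.coeff k| ε with hsmall | hlarge
  · have := Measure.isProbabilityMeasure_map (μ := gaussianReal 0 1) hmeas.aemeasurable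
    rw [max_eq_left hsmall, div_self hε.ne', Real.one_rpow]
    have : (1 : ℝ) ≤ m := Nat.one_le_cast.2 hm
    exact smoothnessModulus_le_one.trans (by linarith)
  · rw [max_eq_right hlarge]
    refine smoothnessModulus_le (by positivity) fun H hH hHε hH' => ?_
    rw [integral_map hmeas.aemeasurable hH.continuous_deriv_one.aestronglyMeasurable]
    exact integral_deriv_comp_eval_le hm hp hk hε hlarge hH hHε hH'

end OneVariable

/-! ### Integrals of truncated powers -/

section LayerCake

variable {Ω : Type*} [MeasurableSpace Ω] {P : Measure Ω} {A : Ω → ℝ}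
  {ε α β K : ℝ}

lemma div_max_rpow_le_one (hε : 0 < ε) (hα : 0 ≤ α) (y : ℝ) : (ε / max ε |y|) ^ α ≤ 1 :=
  Real.rpow_le_one (by positivity) (div_le_one_of_le₀ (le_max_left _ _) (by positivity)) hα

lemma integrable_div_max_rpow [IsFiniteMeasure P] (hA : Measurable A) (hε : 0 < ε) (hα : 0 ≤ α) :
    Integrable (fun ω => (ε / max ε |A ω|) ^ α) P := by
  have hmeas : Measurable fun ω => (ε / max ε |A ω|) ^ α :=
    (measurable_const.div (measurable_const.max hA.abs)).pow_const α
  refine .of_bound hmeas.aestronglyMeasurable 1 (ae_of_all _ fun ω => ?_)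
  rw [Real.norm_of_nonneg (by positivity)]
  exact div_max_rpow_le_one hε hα _

lemma abs_le_of_le_div_max_rpow {u y : ℝ} (hε : 0 < ε) (hα : 0 < α) (hu : 0 < u)
    (h : u ≤ (ε / max ε |y|) ^ α) : |y| ≤ ε * u ^ (-α⁻¹) := by
  have hmax : 0 < max ε |y| := hε.trans_le (le_max_left _ _)
  have hroot : u ^ α⁻¹ ≤ ε / max ε |y| :=
    (Real.rpow_inv_le_iff_of_pos hu.le (by positivity) hα).2 h
  rw [Real.rpow_neg hu.le, ← div_eq_mul_inv, le_div_iff₀ (by positivity)]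
  calc |y| * u ^ α⁻¹ ≤ max ε |y| * (ε / max ε |y|) := by gcongr; exact le_max_right _ _
    _ = ε := mul_div_cancel₀ _ hmax.ne'

lemma measureReal_le_div_max_rpow_le [IsFiniteMeasure P] (hε : 0 < ε) (hα : 0 < α)
    (h : ∀ t, ε ≤ t → t ≤ 1 → P.real {ω | |A ω| ≤ t} ≤ K * t ^ β) {u : ℝ} (hu : ε ^ α ≤ u)
    (hu1 : u ≤ 1) :
    P.real {ω | u ≤ (ε / max ε |A ω|) ^ α} ≤ K * ε ^ β * u ^ (-(β / α)) := by
  have hu0 : 0 < u := (Real.rpow_pos_of_pos hε α).trans_le hu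
  have hεt : ε ≤ ε * u ^ (-α⁻¹) :=
    le_mul_of_one_le_right hε.le
      (Real.one_le_rpow_of_pos_of_le_one_of_nonpos hu0 hu1 (by simp [hα.le]))
  have ht1 : ε * u ^ (-α⁻¹) ≤ 1 := by
    rw [Real.rpow_neg hu0.le, ← div_eq_mul_inv, div_le_one (by positivity)]
    exact (Real.le_rpow_inv_iff_of_pos hε.le hu0.le hα).2 hu
  calc P.real {ω | u ≤ (ε / max ε |A ω|) ^ α} ≤ P.real {ω | |A ω| ≤ ε * u ^ (-α⁻¹)} :=
        measureReal_mono fun ω hω => abs_le_of_le_div_max_rpow hε hα hu0 hω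
    _ ≤ K * (ε * u ^ (-α⁻¹)) ^ β := h _ hεt ht1
    _ = K * ε ^ β * u ^ (-(β / α)) := by
        rw [Real.mul_rpow hε.le (by positivity), ← Real.rpow_mul hu0.le]
        ring_nf

variable [IsProbabilityMeasure P]

lemma integral_div_max_rpow_le (hA : Measurable A) (hε : 0 < ε) (hε1 : ε ≤ 1) (hα : 0 < α)
    (h : ∀ t, ε ≤ t → t ≤ 1 → P.real {ω | |A ω| ≤ t} ≤ K * t ^ β) :
    ∫ ω, (ε / max ε |A ω|) ^ α ∂P ≤ ε ^ α + K * ε ^ β * ∫ u in ε ^ α..1, u ^ (-(β / α)) := by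
  set F : ℝ → ℝ := fun u => P.real {ω | u ≤ (ε / max ε |A ω|) ^ α}
  have hanti : Antitone F := fun u v huv => measureReal_mono fun ω hω => huv.trans hω
  have hεα : 0 < ε ^ α := Real.rpow_pos_of_pos hε α
  have hεα1 : ε ^ α ≤ 1 := Real.rpow_le_one hε.le hε1 hα.le
  have hlayer : ∫ ω, (ε / max ε |A ω|) ^ α ∂P = ∫ u in 0..1, F u := by
    rw [intervalIntegral.integral_of_le zero_le_one]
    exact (integrable_div_max_rpow hA hε hα.le).integral_eq_integral_Ioc_meas_le
      (ae_of_all _ fun ω => by dsimp only [Pi.zero_apply]; positivity)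
      (ae_of_all _ fun ω => div_max_rpow_le_one hε hα.le _)
  have hsmall : ∫ u in 0..ε ^ α, F u ≤ ε ^ α := by
    have := intervalIntegral.integral_mono_on (μ := volume) hεα.le hanti.intervalIntegrable
      (intervalIntegrable_const (c := (1 : ℝ))) fun u _ => measureReal_le_one
    simpa using this
  have hlarge : ∫ u in ε ^ α..1, F u ≤ K * ε ^ β * ∫ u in ε ^ α..1, u ^ (-(β / α)) := by
    rw [← intervalIntegral.integral_const_mul]
    have hzero : (0 : ℝ) ∉ Set.uIcc (ε ^ α) 1 := by
      rw [Set.uIcc_of_le hεα1]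
      exact fun h0 => hεα.not_ge h0.1
    exact intervalIntegral.integral_mono_on hεα1 hanti.intervalIntegrable
      ((intervalIntegral.intervalIntegrable_rpow (.inr hzero)).const_mul _)
      fun u hu => measureReal_le_div_max_rpow_le hε hα h hu.1 hu.2
  rw [hlayer, ← intervalIntegral.integral_add_adjacent_intervals
    (hanti.intervalIntegrable (b := ε ^ α)) hanti.intervalIntegrable]
  exact add_le_add hsmall hlarge

lemma integral_div_max_rpow_le_mul_log (hA : Measurable A) (hε : 0 < ε) (hε1 : ε ≤ 1)
    (hα : 0 < α) (h : ∀ t, ε ≤ t → t ≤ 1 → P.real {ω | |A ω| ≤ t} ≤ K * t ^ α) :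
    ∫ ω, (ε / max ε |A ω|) ^ α ∂P ≤ ε ^ α * (1 - K * α * Real.log ε) := by
  refine (integral_div_max_rpow_le hA hε hε1 hα h).trans_eq ?_
  simp only [div_self hα.ne', Real.rpow_neg_one]
  rw [integral_inv_of_pos (by positivity) one_pos, one_div, Real.log_inv, Real.log_rpow hε]
  ring

lemma integral_div_max_rpow_le_of_lt (hA : Measurable A) (hε : 0 < ε) (hε1 : ε ≤ 1)
    (hα : 0 < α) (hαβ : α < β) (hK : 0 ≤ K)
    (h : ∀ t, ε ≤ t → t ≤ 1 → P.real {ω | |A ω| ≤ t} ≤ K * t ^ β) :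
    ∫ ω, (ε / max ε |A ω|) ^ α ∂P ≤ ε ^ α * (1 + K * (α / (β - α))) := by
  have hratio : 1 < β / α := (one_lt_div hα).2 hαβ
  have hpower : ∫ u in ε ^ α..1, u ^ (-(β / α)) ≤ ε ^ (α - β) * (α / (β - α)) := by
    have hzero : (0 : ℝ) ∉ Set.uIcc (ε ^ α) 1 := by
      rw [Set.uIcc_of_le (Real.rpow_le_one hε.le hε1 hα.le)]
      exact fun h0 => (Real.rpow_pos_of_pos hε α).not_ge h0.1
    rw [integral_rpow (.inr ⟨by linarith, hzero⟩), ← Real.rpow_mul hε.le,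
      show α * (-(β / α) + 1) = α - β by field_simp; ring, Real.one_rpow,
      show -(β / α) + 1 = -((β - α) / α) by field_simp; ring, div_neg, ← neg_div, neg_sub,
      div_div_eq_mul_div, mul_div_assoc]
    have : 0 < β - α := by linarith
    gcongr
    linarith
  calc ∫ ω, (ε / max ε |A ω|) ^ α ∂P
      ≤ ε ^ α + K * ε ^ β * (ε ^ (α - β) * (α / (β - α))) :=
        (integral_div_max_rpow_le hA hε hε1 hα h).trans (by gcongr)
    _ = ε ^ α * (1 + K * (α / (β - α))) := by
        rw [show K * ε ^ β * (ε ^ (α - β) * (α / (β - α)))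
          = ε ^ β * ε ^ (α - β) * (K * (α / (β - α))) by ring, ← Real.rpow_add hε,
          add_sub_cancel]
        ring

end LayerCake

/-! ### Polynomials of several variables -/

section SeveralVariables

open MvPolynomial (eval rename finSuccEquiv)

instance isProbabilityMeasure_stdGaussian (n : ℕ) :
    IsProbabilityMeasure (_root_.stdGaussian n) := by
  unfold _root_.stdGaussian
  infer_instance

/-- The law of `f(X)` for `X` standard Gaussian. -/
noncomputable abbrev gaussianLaw {n : ℕ} (f : MvPolynomial (Fin n) ℝ) : Measure ℝ :=
  (_root_.stdGaussian n).map fun x => eval x f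

lemma measurable_eval {n : ℕ} (f : MvPolynomial (Fin n) ℝ) :
    Measurable fun x : Fin n → ℝ => eval x f :=
  f.continuous_eval.measurable

instance isProbabilityMeasure_gaussianLaw {n : ℕ} (f : MvPolynomial (Fin n) ℝ) :
    IsProbabilityMeasure (gaussianLaw f) :=
  Measure.isProbabilityMeasure_map (measurable_eval f).aemeasurable

lemma gaussianLaw_rename {n : ℕ} (σ : Equiv.Perm (Fin n)) (f : MvPolynomial (Fin n) ℝ) :
    gaussianLaw (rename σ f) = gaussianLaw f := by
  have hperm : MeasurePreserving (fun x : Fin n → ℝ => x ∘ σ) (_root_.stdGaussian n)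
      (_root_.stdGaussian n) :=
    (measurePreserving_piCongrLeft (fun _ : Fin n => gaussianReal 0 1) σ).symm
  simp only [gaussianLaw, MvPolynomial.eval_rename]
  conv_rhs => rw [← hperm.map_eq]
  exact (Measure.map_map (measurable_eval f) hperm.measurable).symm

lemma integral_stdGaussian_succ_le {n : ℕ} {F : (Fin (n + 1) → ℝ) → ℝ} {G : (Fin n → ℝ) → ℝ}
    (hF : Integrable F (_root_.stdGaussian (n + 1))) (hG : Integrable G (_root_.stdGaussian n))
    (h : ∀ y, ∫ x, F (Fin.cons x y) ∂gaussianReal 0 1 ≤ G y) :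
    ∫ x, F x ∂_root_.stdGaussian (n + 1) ≤ ∫ y, G y ∂_root_.stdGaussian n := by
  have hcons := (measurePreserving_piFinSuccAbove (fun _ : Fin (n + 1) => gaussianReal 0 1) 0).symm
  have hF' := (hcons.integrable_comp_emb (MeasurableEquiv.measurableEmbedding _)).2 hF
  rw [_root_.stdGaussian, ← hcons.integral_comp']
  refine (integral_prod_symm _ hF').trans_le (integral_mono hF'.integral_prod_right hG fun y => ?_)
  simpa [MeasurableEquiv.piFinSuccAbove, Fin.insertNthEquiv] using h y

lemma smoothnessModulus_gaussianLaw_le {n N k : ℕ} {ε : ℝ} (f : MvPolynomial (Fin (n + 1)) ℝ)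
    (hN : 1 ≤ N) (hf : f.degreeOf 0 ≤ N) (hk : 1 ≤ k) (hε : 0 < ε) :
    smoothnessModulus (gaussianLaw f) ε ≤ 14 * N * ∫ y, (ε / max ε
      |eval y ((finSuccEquiv ℝ n f).coeff k)|) ^ (1 / N : ℝ) ∂_root_.stdGaussian n := by
  refine smoothnessModulus_le (by positivity) fun H hH hHε hH' => ?_
  have hcont : Continuous fun x => deriv H (eval x f) :=
    hH.continuous_deriv_one.comp f.continuous_eval
  have hint : Integrable (fun x => deriv H (eval x f)) (_root_.stdGaussian (n + 1)) :=
    .of_bound hcont.aestronglyMeasurable 1 (ae_of_all _ fun x => hH' _)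
  have hslice (y : Fin n → ℝ) : ∫ x, deriv H (eval (Fin.cons x y : Fin (n + 1) → ℝ) f)
      ∂gaussianReal 0 1 ≤
        14 * N * (ε / max ε |eval y ((finSuccEquiv ℝ n f).coeff k)|) ^ (1 / N : ℝ) := by
    set p := (finSuccEquiv ℝ n f).map (eval y)
    have hp : p.natDegree ≤ N :=
      Polynomial.natDegree_map_le.trans ((MvPolynomial.natDegree_finSuccEquiv f).trans_le hf)
    have hmodulus := smoothnessModulus_map_eval_le hN hp hk hε
    have := Measure.isProbabilityMeasure_map (μ := gaussianReal 0 1)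
      (Polynomial.continuous p).measurable.aemeasurable
    have hlaw := abs_integral_deriv_le (μ := (gaussianReal 0 1).map fun x => p.eval x) hH hHε hH'
    rw [integral_map (Polynomial.continuous p).measurable.aemeasurable
      hH.continuous_deriv_one.aestronglyMeasurable] at hlaw
    rw [Polynomial.coeff_map] at hmodulus
    simp only [MvPolynomial.eval_eq_eval_mv_eval']
    exact (le_abs_self _).trans (hlaw.trans hmodulus)
  rw [gaussianLaw, integral_map (measurable_eval f).aemeasurable
    hH.continuous_deriv_one.aestronglyMeasurable, ← integral_const_mul]
  have hright := (integrable_div_max_rpow (P := _root_.stdGaussian n) (α := 1 / N)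
    (measurable_eval ((finSuccEquiv ℝ n f).coeff k)) hε (by positivity)).const_mul (14 * N : ℝ)
  exact integral_stdGaussian_succ_le hint hright hslice

/-- Polynomials with degree at most `m` in each variable and total degree `e`, having a coefficient
of size at least `a` at some monomial of degree `e`. If `0 < a`, the total degree is exactly `e`. -/
structure HasLargeTopCoeff {n : ℕ} (m e : ℕ) (a : ℝ) (f : MvPolynomial (Fin n) ℝ) : Prop where
  degreeOf_le : ∀ i, f.degreeOf i ≤ m
  totalDegree_le : f.totalDegree ≤ e
  exists_coeff : ∃ j : Fin n →₀ ℕ, j.degree = e ∧ a ≤ |f.coeff j|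

lemma HasLargeTopCoeff.rename {n m e : ℕ} {a : ℝ} {f : MvPolynomial (Fin n) ℝ}
    (hf : HasLargeTopCoeff m e a f) (σ : Equiv.Perm (Fin n)) :
    HasLargeTopCoeff m e a (rename σ f) where
  degreeOf_le i := by
    rw [← σ.apply_symm_apply i, MvPolynomial.degreeOf_rename_of_injective σ.injective]
    exact hf.degreeOf_le _
  totalDegree_le := (MvPolynomial.totalDegree_renameEquiv σ f).trans_le hf.totalDegree_le
  exists_coeff := by
    obtain ⟨j, hj, hja⟩ := hf.exists_coeff
    exact ⟨j.mapDomain σ, (Finsupp.degree_mapDomain σ j).trans hj,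
      by rwa [MvPolynomial.coeff_rename_mapDomain σ σ.injective]⟩

lemma totalDegree_coeff_finSuccEquiv_le {n : ℕ} (f : MvPolynomial (Fin (n + 1)) ℝ) (k : ℕ) :
    ((finSuccEquiv ℝ n f).coeff k).totalDegree ≤ f.totalDegree - k := by
  by_cases hk : (finSuccEquiv ℝ n f).coeff k = 0
  · simp [hk]
  · exact Nat.le_sub_of_add_le (MvPolynomial.totalDegree_coeff_finSuccEquiv_add_le f k hk)

lemma HasLargeTopCoeff.exists_perm_coeff {n m e : ℕ} {a : ℝ} {f : MvPolynomial (Fin (n + 1)) ℝ}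
    (hf : HasLargeTopCoeff m e a f) (he : e ≠ 0) :
    ∃ (σ : Equiv.Perm (Fin (n + 1))) (k : ℕ), 1 ≤ k ∧ k ≤ e ∧
      HasLargeTopCoeff m (e - k) a ((finSuccEquiv ℝ n (MvPolynomial.rename σ f)).coeff k) := by
  obtain ⟨j, hj, hja⟩ := hf.exists_coeff
  obtain ⟨i, hi⟩ : ∃ i, j i ≠ 0 := by
    by_contra! hzero
    exact he (hj ▸ (Finsupp.degree_eq_zero_iff j).2 (Finsupp.ext hzero))
  set σ := Equiv.swap 0 i
  have hle : j i ≤ e := hj ▸ Finsupp.le_degree i j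
  refine ⟨σ, j i, Nat.one_le_iff_ne_zero.2 hi, hle, ⟨fun l => ?_, ?_, ?_⟩⟩
  · exact (MvPolynomial.degreeOf_coeff_finSuccEquiv _ _ _).trans ((hf.rename σ).degreeOf_le _)
  · exact (totalDegree_coeff_finSuccEquiv_le _ _).trans
      (Nat.sub_le_sub_right (hf.rename σ).totalDegree_le _)
  · have hhead : j.mapDomain σ 0 = j i := by
      rw [← Equiv.swap_apply_right 0 i, Finsupp.mapDomain_apply σ.injective]
    refine ⟨(j.mapDomain σ).tail, ?_, ?_⟩
    · have hdegree := (Finsupp.degree_mapDomain σ j).trans hj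
      rw [Finsupp.degree_eq_sum, Fin.sum_univ_succ, hhead] at hdegree
      simp only [Finsupp.degree_eq_sum, Finsupp.tail_apply]
      omega
    · have hcons := hhead ▸ Finsupp.cons_tail (j.mapDomain σ)
      rwa [MvPolynomial.finSuccEquiv_coeff_coeff, hcons,
        MvPolynomial.coeff_rename_mapDomain σ σ.injective]

/-- The small-scale regularity, with constant `C`, of the laws of all polynomials of total degree
`e` with degree at most `m` in each variable and a top coefficient of size at least `a`. -/
def RegularityBound (m e : ℕ) (a C : ℝ) : Prop :=
  ∀ ⦃n : ℕ⦄ ⦃f : MvPolynomial (Fin n) ℝ⦄, HasLargeTopCoeff m e a f → ∀ ⦃ε : ℝ⦄, 0 < ε → ε ≤ 1 →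
    smoothnessModulus (gaussianLaw f) ε ≤
      C * ε ^ (1 / (min m e : ℕ) : ℝ) * (1 - Real.log ε) ^ (e - m)

variable {n m e k : ℕ} {a C ε : ℝ}

lemma one_le_one_sub_log (hε : 0 < ε) (hε1 : ε ≤ 1) : 1 ≤ 1 - Real.log ε := by
  linarith [Real.log_nonpos hε.le hε1]

lemma RegularityBound.measureReal_abs_eval_le (hC : RegularityBound m e a C) (hC0 : 0 ≤ C)
    {A : MvPolynomial (Fin n) ℝ} (hA : HasLargeTopCoeff m e a A) (hε : 0 < ε) {t : ℝ}
    (ht : ε ≤ t) (ht1 : t ≤ 1) :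
    (_root_.stdGaussian n).real {y | |eval y A| ≤ t} ≤
      4 * C * (1 - Real.log ε) ^ (e - m) * t ^ (1 / (min m e : ℕ) : ℝ) := by
  have ht0 : 0 < t := hε.trans_le ht
  have hlog : 1 - Real.log t ≤ 1 - Real.log ε := by gcongr
  have hlog0 : 0 ≤ 1 - Real.log t := zero_le_one.trans (one_le_one_sub_log ht0 ht1)
  have hball := measureReal_abs_le_le (μ := gaussianLaw A) ht0
  rw [gaussianLaw, map_measureReal_apply (measurable_eval A)
    (isClosed_le continuous_abs continuous_const).measurableSet] at hball
  calc (_root_.stdGaussian n).real {y | |eval y A| ≤ t}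
      ≤ 4 * (C * t ^ (1 / (min m e : ℕ) : ℝ) * (1 - Real.log t) ^ (e - m)) :=
        hball.trans (mul_le_mul_of_nonneg_left (hC hA ht0 ht1) (by norm_num))
    _ ≤ 4 * (C * t ^ (1 / (min m e : ℕ) : ℝ) * (1 - Real.log ε) ^ (e - m)) := by gcongr
    _ = _ := by ring

lemma HasLargeTopCoeff.le_abs_eval {A : MvPolynomial (Fin n) ℝ} (hA : HasLargeTopCoeff m 0 a A)
    (y : Fin n → ℝ) : a ≤ |eval y A| := by
  obtain ⟨j, hj, hja⟩ := hA.exists_coeff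
  rw [MvPolynomial.totalDegree_eq_zero_iff_eq_C.1 (Nat.le_zero.1 hA.totalDegree_le),
    MvPolynomial.eval_C]
  rwa [(Finsupp.degree_eq_zero_iff j).1 hj] at hja

lemma integral_div_max_eval_le_of_const (ha : 0 < a) {A : MvPolynomial (Fin n) ℝ}
    (hA : HasLargeTopCoeff m 0 a A) (hε : 0 < ε) {α : ℝ} (hα : 0 ≤ α) (hα1 : α ≤ 1) :
    ∫ y, (ε / max ε |eval y A|) ^ α ∂_root_.stdGaussian n ≤ (1 + 1 / a) * ε ^ α := by
  have hpoint (y : Fin n → ℝ) : (ε / max ε |eval y A|) ^ α ≤ (1 + 1 / a) * ε ^ α := by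
    have hpow : (1 / a) ^ α ≤ 1 + 1 / a := by
      calc (1 / a) ^ α ≤ (1 + 1 / a) ^ α := by gcongr; linarith
        _ ≤ 1 + 1 / a := Real.rpow_le_self_of_one_le (by simp [ha.le]) hα1
    calc (ε / max ε |eval y A|) ^ α ≤ (1 / a * ε) ^ α := by
          rw [one_div_mul_eq_div]
          gcongr
          exact (hA.le_abs_eval y).trans (le_max_right _ _)
      _ = (1 / a) ^ α * ε ^ α := Real.mul_rpow (by positivity) hε.le
      _ ≤ (1 + 1 / a) * ε ^ α := by gcongr
  refine (integral_mono (integrable_div_max_rpow (measurable_eval A) hε hα)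
    (integrable_const _) hpoint).trans_eq ?_
  simp

lemma RegularityBound.integral_div_max_eval_le_of_lt (hC : RegularityBound m e a C) (hC0 : 0 ≤ C)
    {A : MvPolynomial (Fin n) ℝ} (hA : HasLargeTopCoeff m e a A) (he : 1 ≤ e) {N : ℕ}
    (heN : e < N) (hNm : N ≤ m) (hε : 0 < ε) (hε1 : ε ≤ 1) :
    ∫ y, (ε / max ε |eval y A|) ^ (1 / N : ℝ) ∂_root_.stdGaussian n ≤
      (1 + 4 * m * C) * ε ^ (1 / N : ℝ) := by
  have hN : (0 : ℝ) < N := by exact_mod_cast he.trans heN.le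
  have he0 : (0 : ℝ) < e := by exact_mod_cast he
  have hgap : (e : ℝ) + 1 ≤ N := by exact_mod_cast heN
  have hsmall (t : ℝ) (ht : ε ≤ t) (ht1 : t ≤ 1) :
      (_root_.stdGaussian n).real {y | |eval y A| ≤ t} ≤ 4 * C * t ^ (1 / e : ℝ) := by
    simpa [show min m e = e by omega, show e - m = 0 by omega] using
      hC.measureReal_abs_eval_le hC0 hA hε ht ht1
  have hratio : (1 / N : ℝ) / (1 / e - 1 / N) ≤ m := by
    calc (1 / N : ℝ) / (1 / e - 1 / N) = e / (N - e) := by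
          have : (N - e : ℝ) ≠ 0 := by linarith
          field_simp
      _ ≤ e / 1 := by gcongr; linarith
      _ ≤ m := by rw [div_one]; exact_mod_cast heN.le.trans hNm
  calc ∫ y, (ε / max ε |eval y A|) ^ (1 / N : ℝ) ∂_root_.stdGaussian n
      ≤ ε ^ (1 / N : ℝ) * (1 + 4 * C * ((1 / N : ℝ) / (1 / e - 1 / N))) :=
        integral_div_max_rpow_le_of_lt (measurable_eval A) hε hε1 (by positivity)
          (one_div_lt_one_div_of_lt he0 (by linarith)) (by positivity) hsmall
    _ ≤ ε ^ (1 / N : ℝ) * (1 + 4 * C * m) := by gcongr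
    _ = (1 + 4 * m * C) * ε ^ (1 / N : ℝ) := by ring

lemma RegularityBound.integral_div_max_eval_le_of_le (hC : RegularityBound m e a C) (hC0 : 0 ≤ C)
    {A : MvPolynomial (Fin n) ℝ} (hA : HasLargeTopCoeff m e a A) (hm : 1 ≤ m) (hme : m ≤ e)
    (hε : 0 < ε) (hε1 : ε ≤ 1) :
    ∫ y, (ε / max ε |eval y A|) ^ (1 / m : ℝ) ∂_root_.stdGaussian n ≤
      (1 + 4 * C) * ε ^ (1 / m : ℝ) * (1 - Real.log ε) ^ (e - m + 1) := by
  have hm' : (1 : ℝ) ≤ m := by exact_mod_cast hm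
  have hlog := one_le_one_sub_log hε hε1
  have hsmall (t : ℝ) (ht : ε ≤ t) (ht1 : t ≤ 1) := hC.measureReal_abs_eval_le hC0 hA hε ht ht1
  rw [min_eq_left hme] at hsmall
  have hterm : -(1 / m * Real.log ε) ≤ 1 - Real.log ε := by
    have : 1 / m * -Real.log ε ≤ 1 * -Real.log ε := by
      gcongr
      · linarith
      · exact (div_le_one (by linarith)).2 hm'
    linarith
  set L := 1 - Real.log ε
  calc ∫ y, (ε / max ε |eval y A|) ^ (1 / m : ℝ) ∂_root_.stdGaussian n
      ≤ ε ^ (1 / m : ℝ) * (1 - 4 * C * L ^ (e - m) * (1 / m) * Real.log ε) :=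
        integral_div_max_rpow_le_mul_log (measurable_eval A) hε hε1 (by positivity) hsmall
    _ = ε ^ (1 / m : ℝ) * (1 + 4 * C * L ^ (e - m) * -(1 / m * Real.log ε)) := by ring
    _ ≤ ε ^ (1 / m : ℝ) * (L ^ (e - m + 1) + 4 * C * L ^ (e - m) * L) := by
        gcongr
        exact one_le_pow₀ hlog
    _ = (1 + 4 * C) * ε ^ (1 / m : ℝ) * L ^ (e - m + 1) := by ring

lemma integral_div_max_eval_le (hm : 1 ≤ m) (ha : 0 < a) (hC0 : 0 ≤ C)
    (hC : ∀ e', 1 ≤ e' → e' < e → RegularityBound m e' a C) (hk : 1 ≤ k) (hke : k ≤ e)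
    {A : MvPolynomial (Fin n) ℝ} (hA : HasLargeTopCoeff m (e - k) a A) (hε : 0 < ε)
    (hε1 : ε ≤ 1) :
    ∫ y, (ε / max ε |eval y A|) ^ (1 / (min m e : ℕ) : ℝ) ∂_root_.stdGaussian n ≤
      (1 + 1 / a + 4 * m * C) * ε ^ (1 / (min m e : ℕ) : ℝ) * (1 - Real.log ε) ^ (e - m) := by
  have hlog := one_le_one_sub_log hε hε1
  have hCmC : 4 * C ≤ 4 * m * C := by
    have : (1 : ℝ) ≤ m := by exact_mod_cast hm
    nlinarith
  have ha' : 0 < 1 / a := by positivity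
  have hweaken (B : ℝ) (i : ℕ) (hB : B ≤ 1 + 1 / a + 4 * m * C) (hi : i ≤ e - m) :
      B * ε ^ (1 / (min m e : ℕ) : ℝ) * (1 - Real.log ε) ^ i ≤
        (1 + 1 / a + 4 * m * C) * ε ^ (1 / (min m e : ℕ) : ℝ) * (1 - Real.log ε) ^ (e - m) := by
    gcongr
  rcases Nat.eq_zero_or_pos (e - k) with hzero | hpos
  · rw [hzero] at hA
    have hmin : (1 : ℝ) ≤ (min m e : ℕ) := by exact_mod_cast le_min hm (hk.trans hke)
    refine (integral_div_max_eval_le_of_const ha hA hε (by positivity)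
      ((div_le_one (by linarith)).2 hmin)).trans ?_
    simpa only [pow_zero, mul_one] using hweaken _ 0 (by linarith) (Nat.zero_le _)
  have hIH := hC (e - k) hpos (by omega)
  rcases lt_or_ge (e - k) m with hlt | hge
  · refine (hIH.integral_div_max_eval_le_of_lt hC0 hA hpos (lt_min hlt (by omega))
      (min_le_left _ _) hε hε1).trans ?_
    simpa only [pow_zero, mul_one] using hweaken _ 0 (by linarith) (Nat.zero_le _)
  · rw [min_eq_left (by omega : m ≤ e)] at hweaken ⊢
    exact (hIH.integral_div_max_eval_le_of_le hC0 hA hm hge hε hε1).trans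
      (hweaken _ _ (by linarith) (by omega))

lemma regularityBound_of_lt (hm : 1 ≤ m) (ha : 0 < a) (he : 1 ≤ e) (hC0 : 0 ≤ C)
    (hC : ∀ e', 1 ≤ e' → e' < e → RegularityBound m e' a C) :
    RegularityBound m e a (14 * m * (1 + 1 / a + 4 * m * C)) := by
  intro n f hf ε hε hε1
  obtain _ | n := n
  · obtain ⟨j, hj, -⟩ := hf.exists_coeff
    rw [Subsingleton.elim j 0, map_zero] at hj
    omega
  obtain ⟨σ, k, hk, hke, hA⟩ := hf.exists_perm_coeff (by omega)
  have hdegree : (rename σ f).degreeOf 0 ≤ min m e :=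
    le_min ((hf.rename σ).degreeOf_le 0)
      ((MvPolynomial.degreeOf_le_totalDegree _ _).trans (hf.rename σ).totalDegree_le)
  rw [← gaussianLaw_rename σ]
  refine (smoothnessModulus_gaussianLaw_le _ (le_min hm he) hdegree hk hε).trans ?_
  calc 14 * (min m e : ℕ) * ∫ y, _ ∂_root_.stdGaussian n
      ≤ 14 * m * ((1 + 1 / a + 4 * m * C) * ε ^ (1 / (min m e : ℕ) : ℝ)
          * (1 - Real.log ε) ^ (e - m)) := by
        gcongr
        · exact min_le_left _ _
        · exact integral_div_max_eval_le hm ha hC0 hC hk hke hA hε hε1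
    _ = _ := by ring

lemma exists_regularityBound (hm : 1 ≤ m) (ha : 0 < a) (d : ℕ) :
    ∃ C, 0 ≤ C ∧ ∀ e, 1 ≤ e → e ≤ d → RegularityBound m e a C := by
  induction d with
  | zero => exact ⟨0, le_rfl, fun e he hed => by omega⟩
  | succ d ih =>
    obtain ⟨C, hC0, hC⟩ := ih
    exact ⟨_, by positivity, fun e he hed => regularityBound_of_lt hm ha he hC0
      fun e' he' hlt => hC e' he' (by omega)⟩

/-- The factor `2` avoids showing that the supremum defining `topCoeff` is attained. -/
lemma hasLargeTopCoeff_of_le_topCoeff {f : MvPolynomial (Fin n) ℝ} (ha : 0 < a)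
    (hf : ∀ i, f.degreeOf i ≤ m) (hfa : a ≤ topCoeff f) :
    HasLargeTopCoeff m f.totalDegree (a / 2) f where
  degreeOf_le := hf
  totalDegree_le := le_rfl
  exists_coeff := by
    by_contra! hsmall
    have : topCoeff f ≤ a / 2 := by
      refine Real.sSup_le ?_ (by positivity)
      rintro c ⟨j, hj, rfl⟩
      exact (hsmall j hj).le
    linarith

lemma exists_smoothnessModulus_gaussianLaw_le (hm : 1 ≤ m) (ha : 0 < a) (d : ℕ) :
    ∃ C, 0 ≤ C ∧ ∀ (n : ℕ) (f : MvPolynomial (Fin n) ℝ), f.totalDegree ≠ 0 →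
      (∀ i, f.degreeOf i ≤ m) → f.totalDegree ≤ d → a ≤ topCoeff f → ∀ ε, 0 < ε → ε ≤ 1 →
        smoothnessModulus (gaussianLaw f) ε ≤
          C * ε ^ (1 / m : ℝ) * (1 - Real.log ε) ^ ((d - m : ℕ) : ℝ) := by
  obtain ⟨C, hC0, hC⟩ := exists_regularityBound hm (half_pos ha) d
  refine ⟨C, hC0, fun n f hf0 hfm hfd hfa ε hε hε1 => ?_⟩
  have he := Nat.one_le_iff_ne_zero.2 hf0
  refine (hC _ he hfd (hasLargeTopCoeff_of_le_topCoeff ha hfm hfa) hε hε1).trans ?_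
  rw [Real.rpow_natCast]
  have hmin : (0 : ℝ) < (min m f.totalDegree : ℕ) := by exact_mod_cast le_min hm he
  have hexp : (1 / m : ℝ) ≤ 1 / (min m f.totalDegree : ℕ) :=
    one_div_le_one_div_of_le hmin (by exact_mod_cast min_le_left _ _)
  have hlog := one_le_one_sub_log hε hε1
  gcongr ?_ * ?_
  · exact mul_le_mul_of_nonneg_left (Real.rpow_le_rpow_of_exponent_ge hε hε1 hexp) hC0
  · exact pow_le_pow_right₀ hlog (by omega)

end SeveralVariables

end GaussianPolynomial

/-- Corollary: for `m ≤ d` and `a > 0` there is a constant `C(m,d,a) > 0` such that for all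
non-constant polynomials `f, g` on `ℝⁿ` of total degree at most `d`, with every variable
entering to a power at most `m`, and with `a[f] ≥ a`, `a[g] ≥ a`, one has, with `X` standard
Gaussian in `ℝⁿ`:
`d_TV(f(X), g(X)) ≤ C d_KR(f(X),g(X))^{1/(m+1)} (|ln d_KR(f(X),g(X))|^{(d-m)m/(m+1)} + 1)`. -/
theorem dTV_le_dKR_polynomials (m d : ℕ) (hm : 1 ≤ m) (hmd : m ≤ d) (a : ℝ) (ha : 0 < a) :
    ∃ C : ℝ, 0 < C ∧
      ∀ (n : ℕ) (f g : MvPolynomial (Fin n) ℝ),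
        f.totalDegree ≠ 0 → g.totalDegree ≠ 0 →
        (∀ i : Fin n, f.degreeOf i ≤ m) → (∀ i : Fin n, g.degreeOf i ≤ m) →
        f.totalDegree ≤ d → g.totalDegree ≤ d →
        a ≤ topCoeff f → a ≤ topCoeff g →
        dTV ((stdGaussian n).map (fun x => MvPolynomial.eval x f))
            ((stdGaussian n).map (fun x => MvPolynomial.eval x g)) ≤
          C * (dKR ((stdGaussian n).map (fun x => MvPolynomial.eval x f))
                  ((stdGaussian n).map (fun x => MvPolynomial.eval x g)))
                ^ ((1 : ℝ) / (m + 1)) *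
            ((|Real.log (dKR ((stdGaussian n).map (fun x => MvPolynomial.eval x f))
                  ((stdGaussian n).map (fun x => MvPolynomial.eval x g)))|)
                ^ (((d - m : ℕ) * m : ℝ) / (m + 1)) + 1) := by
  obtain ⟨K, hK, hregular⟩ :=
    GaussianPolynomial.exists_smoothnessModulus_gaussianLaw_le hm ha d
  have hα : (0 : ℝ) < 1 / m := by positivity
  have hκ : (0 : ℝ) ≤ (d - m : ℕ) := by positivity
  have hexp : (1 / m : ℝ) / (1 + 1 / m) = 1 / (m + 1) := by field_simp
  have hexp_log : ((d - m : ℕ) : ℝ) / (1 + 1 / m) = ((d - m : ℕ) * m : ℝ) / (m + 1) := by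
    field_simp
  have hC := GaussianPolynomial.two_le_comparisonConstant hK hα.le hκ
  refine ⟨_, two_pos.trans_le hC, fun n f g hf0 hg0 hfm hgm hfd hgd hfa hga => ?_⟩
  have hcompare := GaussianPolynomial.dTV_le_dKR_of_smoothnessModulus_le hα hκ
    (hregular n f hf0 hfm hfd hfa) (hregular n g hg0 hgm hgd hga)
  rwa [hexp, hexp_log] at hcompare
end

section
/- For every nonnegative function ϱ ∈ L¹(ℝ), the function ε ↦ σ(ϱ, ε) is nondecreasing and concave on (0, ∞). -/
open MeasureTheory

/-- The modulus `σ(ϱ, ε) = sup { ∫ φ' ϱ : φ ∈ C₀^∞(ℝ), ‖φ‖_∞ ≤ ε, ‖φ'‖_∞ ≤ 1 }`. -/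
noncomputable def sigmaMod (ρ : ℝ → ℝ) (ε : ℝ) : ℝ :=
  sSup {r : ℝ | ∃ φ : ℝ → ℝ, ContDiff ℝ (⊤ : ℕ∞) φ ∧ HasCompactSupport φ ∧
    (∀ x, |φ x| ≤ ε) ∧ (∀ x, |deriv φ x| ≤ 1) ∧ r = ∫ s : ℝ, deriv φ s * ρ s}

/-! The pairs `(ε, φ)` with `φ` admissible for `ε` form a convex set on which `φ ↦ ∫ φ' ϱ` is
linear, so the pairs `(ε, ∫ φ' ϱ)` form a convex subset of the plane. The supremum of the vertical
slices of a convex set is a concave function, and it is monotone because the slices increase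
with `ε`. -/

section ConvexGraph

open scoped Pointwise

lemma concaveOn_sSup_of_convex_graph {E : Type*} [AddCommMonoid E] [SMul ℝ E] {s : Set E}
    {S : E → Set ℝ} (hs : Convex ℝ s) (hS : Convex ℝ {p : E × ℝ | p.2 ∈ S p.1})
    (hne : ∀ x ∈ s, (S x).Nonempty) (hbdd : ∀ x ∈ s, BddAbove (S x)) :
    ConcaveOn ℝ s fun x => sSup (S x) := by
  refine ⟨hs, fun x hx y hy a b ha hb hab => ?_⟩
  have h_slices : a • S x + b • S y ⊆ S (a • x + b • y) := by
    rintro _ ⟨_, ⟨u, hu, rfl⟩, _, ⟨v, hv, rfl⟩, rfl⟩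
    exact hS (x := (x, u)) hu (y := (y, v)) hv ha hb hab
  calc a • sSup (S x) + b • sSup (S y) = sSup (a • S x + b • S y) := by
        rw [csSup_add (hne x hx).smul_set ((hbdd x hx).smul_of_nonneg ha) (hne y hy).smul_set
          ((hbdd y hy).smul_of_nonneg hb), Real.sSup_smul_of_nonneg ha, Real.sSup_smul_of_nonneg hb]
    _ ≤ sSup (S (a • x + b • y)) :=
        csSup_le_csSup (hbdd _ (hs hx hy ha hb hab))
          ((hne x hx).smul_set.add (hne y hy).smul_set) h_slices

lemma norm_smul_add_smul_le {E : Type*} [SeminormedAddCommGroup E] [NormedSpace ℝ E] {u v : E}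
    {a b x y : ℝ} (ha : 0 ≤ a) (hb : 0 ≤ b) (hu : ‖u‖ ≤ x) (hv : ‖v‖ ≤ y) :
    ‖a • u + b • v‖ ≤ a * x + b * y := by
  refine norm_add_le_of_le ?_ ?_
  · rw [norm_smul_of_nonneg ha]
    gcongr
  · rw [norm_smul_of_nonneg hb]
    gcongr

end ConvexGraph

section DerivPairing

lemma deriv_smul_add_smul {𝕜 F : Type*} [NontriviallyNormedField 𝕜] [NormedAddCommGroup F]
    [NormedSpace 𝕜 F] {φ ψ : 𝕜 → F} (hφ : Differentiable 𝕜 φ) (hψ : Differentiable 𝕜 ψ)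
    (a b : 𝕜) : deriv (a • φ + b • ψ) = a • deriv φ + b • deriv ψ := by
  ext s
  rw [deriv_add ((hφ s).const_smul a) ((hψ s).const_smul b), deriv_const_smul a (hφ s),
    deriv_const_smul b (hψ s)]
  rfl

variable {μ : Measure ℝ} {ρ φ ψ : ℝ → ℝ}

lemma integrable_deriv_mul (hρ : LocallyIntegrable ρ μ) (hφ : ContDiff ℝ 1 φ)
    (hφc : HasCompactSupport φ) : Integrable (fun s => deriv φ s * ρ s) μ :=
  hρ.integrable_smul_left_of_hasCompactSupport hφ.continuous_deriv_one hφc.deriv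

lemma integral_deriv_smul_add_smul_mul (hρ : LocallyIntegrable ρ μ) (hφ : ContDiff ℝ 1 φ)
    (hφc : HasCompactSupport φ) (hψ : ContDiff ℝ 1 ψ) (hψc : HasCompactSupport ψ) (a b : ℝ) :
    ∫ s, deriv (a • φ + b • ψ) s * ρ s ∂μ =
      a * ∫ s, deriv φ s * ρ s ∂μ + b * ∫ s, deriv ψ s * ρ s ∂μ := by
  simp only [deriv_smul_add_smul hφ.differentiable_one hψ.differentiable_one, Pi.add_apply,
    Pi.smul_apply, smul_eq_mul, add_mul, mul_assoc]
  rw [integral_add ((integrable_deriv_mul hρ hφ hφc).const_mul a)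
    ((integrable_deriv_mul hρ hψ hψc).const_mul b), integral_const_mul, integral_const_mul]

end DerivPairing

/-- The test functions admissible in the supremum defining `sigmaMod ρ ε`. -/
structure IsSigmaTest (ε : ℝ) (φ : ℝ → ℝ) : Prop where
  contDiff : ContDiff ℝ (⊤ : ℕ∞) φ
  hasCompactSupport : HasCompactSupport φ
  abs_le : ∀ x, |φ x| ≤ ε
  abs_deriv_le : ∀ x, |deriv φ x| ≤ 1

namespace IsSigmaTest

variable {ε δ : ℝ} {φ ψ : ℝ → ℝ}

lemma zero (hε : 0 ≤ ε) : IsSigmaTest ε 0 where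
  contDiff := contDiff_const
  hasCompactSupport := HasCompactSupport.zero
  abs_le := by simpa using hε
  abs_deriv_le := by simp

lemma mono (hφ : IsSigmaTest ε φ) (hεδ : ε ≤ δ) : IsSigmaTest δ φ :=
  { hφ with abs_le := fun x => (hφ.abs_le x).trans hεδ }

lemma contDiff_one (hφ : IsSigmaTest ε φ) : ContDiff ℝ 1 φ :=
  hφ.contDiff.of_le (by simp)

lemma smul_add_smul (hφ : IsSigmaTest ε φ) (hψ : IsSigmaTest δ ψ) {a b : ℝ} (ha : 0 ≤ a)
    (hb : 0 ≤ b) (hab : a + b = 1) : IsSigmaTest (a * ε + b * δ) (a • φ + b • ψ) where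
  contDiff := (hφ.contDiff.const_smul a).add (hψ.contDiff.const_smul b)
  hasCompactSupport := hφ.hasCompactSupport.smul_left.add hψ.hasCompactSupport.smul_left
  abs_le x := norm_smul_add_smul_le (u := φ x) (v := ψ x) ha hb (hφ.abs_le x) (hψ.abs_le x)
  abs_deriv_le x := by
    rw [deriv_smul_add_smul hφ.contDiff_one.differentiable_one hψ.contDiff_one.differentiable_one]
    simpa [hab] using norm_smul_add_smul_le (u := deriv φ x) (v := deriv ψ x) ha hb
      (hφ.abs_deriv_le x) (hψ.abs_deriv_le x)

end IsSigmaTest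

/-- The set of values whose supremum is `sigmaMod ρ ε`. -/
def sigmaValues (ρ : ℝ → ℝ) (ε : ℝ) : Set ℝ :=
  (fun φ : ℝ → ℝ => ∫ s, deriv φ s * ρ s) '' {φ | IsSigmaTest ε φ}

section SigmaValues

variable {ρ : ℝ → ℝ}

lemma sigmaMod_eq_sSup_sigmaValues (ρ : ℝ → ℝ) : sigmaMod ρ = fun ε => sSup (sigmaValues ρ ε) := by
  ext ε
  refine congrArg sSup (Set.ext fun r => ⟨?_, ?_⟩)
  · rintro ⟨φ, hφ, hφc, hφε, hφ', rfl⟩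
    exact ⟨φ, ⟨hφ, hφc, hφε, hφ'⟩, rfl⟩
  · rintro ⟨φ, ⟨hφ, hφc, hφε, hφ'⟩, rfl⟩
    exact ⟨φ, hφ, hφc, hφε, hφ', rfl⟩

lemma sigmaValues_nonempty (ρ : ℝ → ℝ) {ε : ℝ} (hε : 0 ≤ ε) : (sigmaValues ρ ε).Nonempty :=
  ⟨_, 0, IsSigmaTest.zero hε, rfl⟩

lemma monotone_sigmaValues (ρ : ℝ → ℝ) : Monotone (sigmaValues ρ) := fun _ _ hεδ =>
  Set.image_mono fun _ hφ => hφ.mono hεδ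

lemma bddAbove_sigmaValues (hρ : Integrable ρ) (ε : ℝ) : BddAbove (sigmaValues ρ ε) := by
  refine ⟨∫ s, ‖ρ s‖, ?_⟩
  rintro _ ⟨φ, hφ, rfl⟩
  refine (Real.le_norm_self _).trans (norm_integral_le_of_norm_le hρ.norm (ae_of_all _ fun s => ?_))
  rw [norm_mul]
  exact mul_le_of_le_one_left (norm_nonneg _) (hφ.abs_deriv_le s)

lemma convex_graph_sigmaValues (hρ : LocallyIntegrable ρ) :
    Convex ℝ {p : ℝ × ℝ | p.2 ∈ sigmaValues ρ p.1} := by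
  rintro ⟨ε, _⟩ ⟨φ, hφ, rfl⟩ ⟨δ, _⟩ ⟨ψ, hψ, rfl⟩ a b ha hb hab
  exact ⟨a • φ + b • ψ, hφ.smul_add_smul hψ ha hb hab,
    integral_deriv_smul_add_smul_mul hρ hφ.contDiff_one hφ.hasCompactSupport hψ.contDiff_one
      hψ.hasCompactSupport a b⟩

end SigmaValues

theorem sigmaMod_monotone_concave_general {ρ : ℝ → ℝ} (hρ : LocallyIntegrable ρ)
    (hbdd : ∀ ε, BddAbove (sigmaValues ρ ε)) :
    MonotoneOn (sigmaMod ρ) (Set.Ici 0) ∧ ConcaveOn ℝ (Set.Ici 0) (sigmaMod ρ) := by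
  rw [sigmaMod_eq_sSup_sigmaValues]
  constructor
  · intro ε hε δ _ hεδ
    exact csSup_le_csSup (hbdd δ) (sigmaValues_nonempty ρ hε) (monotone_sigmaValues ρ hεδ)
  · exact concaveOn_sSup_of_convex_graph (convex_Ici 0) (convex_graph_sigmaValues hρ)
      (fun _ hε => sigmaValues_nonempty ρ hε) fun ε _ => hbdd ε

/-- Lemma: for every nonnegative `ϱ ∈ L¹(ℝ)`, the function `ε ↦ σ(ϱ, ε)` is nondecreasing and
concave on `(0, ∞)`. -/
theorem sigmaMod_monotone_concave (ρ : ℝ → ℝ) (hρ : Integrable ρ) (hρ0 : ∀ x, 0 ≤ ρ x) :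
    MonotoneOn (sigmaMod ρ) (Set.Ioi (0 : ℝ)) ∧
      ConcaveOn ℝ (Set.Ioi (0 : ℝ)) (sigmaMod ρ) :=
  (sigmaMod_monotone_concave_general hρ.locallyIntegrable (bddAbove_sigmaValues hρ)).imp
    (·.mono Set.Ioi_subset_Ici_self) (·.subset Set.Ioi_subset_Ici_self (convex_Ioi 0))
end
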